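/- arXiv:2111.13631 — 5 statements merged into one kernel-verified Lean document; each statement's English description precedes it below -/
import Mathlib

section
/- Let n ≥ 1 and let f : ℝ × ℝⁿ → ℝ be smooth (C^∞). Then the following are equivalent: (i) for every s ∈ ℝⁿ and every odd m ∈ ℕ, the m-th partial derivative of f in the first variable satisfies ∂_ρ^m f(0,s) = 0; (ii) there exists a smooth function u : ℝ × ℝⁿ → ℝ such that f(ρ,s) = u(ρ², s) for all ρ ≥ 0 and all s ∈ ℝⁿ. -/
/-!
A parametrized version of Whitney's theorem on even functions.

The implication from `u` to `f` is a parity argument: `f (·, s)` agrees on `[0, ∞)` with the smooth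
even function `ρ ↦ u (ρ², s)`, so their derivatives at `0`, which can be computed from the right,
agree, and the odd ones vanish.

For the converse, the set of values allowed for `u` at `(t, s)` is a single point for `t ≥ 0` and
all of `ℝ` for `t < 0`, hence convex, so a smooth partition of unity reduces the problem to
constructing `u` near a given point. Only points `(0, s₀)` matter: for `t > 0` the function
`f (√t, s)` is already smooth. Near `(0, s₀)`:

* The hypothesis makes the even reflection `f (|ρ|, s)` smooth (`contDiff_even_reflection`),
  because `f (-ρ, s) - f (ρ, s)` vanishes to infinite order on `ρ = 0` and may be cut off along that
  hyperplane. So `f` can be replaced by a compactly supported `F` that is even in `ρ`.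
* Fourier inversion and evenness give, with `ψ` the Fourier transform of `F`,
  `F (ρ, s) = ∫ ψ (ξ, η) cos (2π ξ ρ) exp (2π i η · s)`. Choose a smooth `H : ℝ → ℝ` with
  `H (x²) = cos x` and with every derivative bounded on all of `ℝ` (`kernelH`). Then
  `u (t, s) = Re ∫ ψ (ξ, η) H ((2π ξ)² t) exp (2π i η · s)` satisfies `F (ρ, s) = u (ρ², s)`, is
  defined for all `t`, and is smooth by differentiation under the integral sign, since `ψ` decays
  rapidly (`exists_of_hasCompactSupport`).
-/

open scoped ContDiff

/-! ### Functions flat on a hyperplane and the even reflection -/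

section Flat
variable {V : Type} [NormedAddCommGroup V] [NormedSpace ℝ V]

/-- The partial derivative of `h` in the first variable. -/
noncomputable def dRho {E : Type} [NormedAddCommGroup E] [NormedSpace ℝ E]
    (h : ℝ × V → E) : ℝ × V → E := fun x => fderiv ℝ h x (1, 0)

variable {E : Type} [NormedAddCommGroup E] [NormedSpace ℝ E]

lemma contDiff_dRho {h : ℝ × V → E} (hh : ContDiff ℝ ∞ h) : ContDiff ℝ ∞ (dRho h) :=
  ((contDiff_infty_iff_fderiv.1 hh).2).clm_apply contDiff_const

lemma contDiff_iterate_dRho {h : ℝ × V → E} (hh : ContDiff ℝ ∞ h) (m : ℕ) :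
    ContDiff ℝ ∞ (dRho^[m] h) := by
  induction m with
  | zero => exact hh
  | succ m ih => rw [Function.iterate_succ_apply']; exact contDiff_dRho ih

/-- The iterated derivative of a slice is a slice of the iterated partial derivative. -/
lemma iteratedDeriv_slice {h : ℝ × V → E} (hh : ContDiff ℝ ∞ h) (m : ℕ) (s : V) :
    iteratedDeriv m (fun ρ : ℝ => h (ρ, s)) = fun ρ => dRho^[m] h (ρ, s) := by
  induction m with
  | zero => simp
  | succ m ih =>
    rw [iteratedDeriv_succ, ih]
    funext ρ
    rw [Function.iterate_succ_apply']
    have h1 : HasFDerivAt (dRho^[m] h) (fderiv ℝ (dRho^[m] h) (ρ, s)) (ρ, s) :=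
      ((contDiff_iterate_dRho hh m).differentiable (by simp) _).hasFDerivAt
    have h2 : HasDerivAt (fun ρ : ℝ => (ρ, s)) ((1 : ℝ), (0 : V)) ρ :=
      (hasDerivAt_id ρ).prodMk (hasDerivAt_const ρ s)
    exact (h1.comp_hasDerivAt ρ h2).deriv

/-- Symmetry of the second derivative: `∂_ρ` commutes with the total derivative. -/
lemma fderiv_dRho {h : ℝ × V → E} (hh : ContDiff ℝ ∞ h) :
    fderiv ℝ (dRho h) = dRho (fderiv ℝ h) := by
  funext x
  refine ContinuousLinearMap.ext fun v => ?_
  have h1 : DifferentiableAt ℝ (fderiv ℝ h) x :=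
    (contDiff_infty_iff_fderiv.1 hh).2.differentiable (by simp) x
  have hs : IsSymmSndFDerivAt ℝ h x := hh.contDiffAt.isSymmSndFDerivAt (by
    simp only [minSmoothness_of_isRCLikeNormedField]; exact ENat.LEInfty.out)
  have h2 : HasFDerivAt (dRho h) _ x :=
    h1.hasFDerivAt.clm_apply (hasFDerivAt_const ((1 : ℝ), (0 : V)) x)
  rw [h2.fderiv]
  simp [dRho, hs.eq v (1, 0)]

lemma iterate_dRho_fderiv {h : ℝ × V → E} (hh : ContDiff ℝ ∞ h) (m : ℕ) :
    dRho^[m] (fderiv ℝ h) = fderiv ℝ (dRho^[m] h) := by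
  induction m with
  | zero => rfl
  | succ m ih =>
    rw [Function.iterate_succ_apply', ih, Function.iterate_succ_apply',
      fderiv_dRho (contDiff_iterate_dRho hh m)]

/-- `h` is smooth and vanishes to infinite order on the hyperplane `ρ = 0`. Only pure
`ρ`-derivatives appear; the mixed ones then vanish too, see `IsFlat.fderiv`. -/
def IsFlat (h : ℝ × V → E) : Prop :=
  ContDiff ℝ ∞ h ∧ ∀ (m : ℕ) (s : V), dRho^[m] h (0, s) = 0

lemma IsFlat.apply_zero {h : ℝ × V → E} (hh : IsFlat h) (s : V) : h (0, s) = 0 := hh.2 0 s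

/-- Flatness passes to the total derivative: `∂_ρ ^ m h` and `∂_ρ ^ (m + 1) h` vanish on the
hyperplane, so the total derivative of `∂_ρ ^ m h` vanishes in tangential and normal directions. -/
lemma IsFlat.fderiv {h : ℝ × V → E} (hh : IsFlat h) : IsFlat (fderiv ℝ h) := by
  refine ⟨(contDiff_infty_iff_fderiv.1 hh.1).2, fun m s => ?_⟩
  rw [iterate_dRho_fderiv hh.1]
  have h1 : HasFDerivAt (dRho^[m] h) (_root_.fderiv ℝ (dRho^[m] h) (0, s)) (0, s) :=
    ((contDiff_iterate_dRho hh.1 m).differentiable (by simp) _).hasFDerivAt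
  have h2 : HasFDerivAt (fun s : V => ((0 : ℝ), s)) (ContinuousLinearMap.inr ℝ ℝ V) s :=
    (ContinuousLinearMap.inr ℝ ℝ V).hasFDerivAt
  have h3 := h1.comp s h2
  have h4 : (dRho^[m] h) ∘ (fun s : V => ((0 : ℝ), s)) = fun _ => 0 := by
    funext s'; exact hh.2 m s'
  rw [h4] at h3
  have h5 := h3.unique (hasFDerivAt_const 0 s)
  refine ContinuousLinearMap.ext fun ⟨a, v⟩ => ?_
  have h6 : (_root_.fderiv ℝ (dRho^[m] h) (0, s)) (0, v) = 0 := by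
    simpa using congrArg (fun L => L v) h5
  have h7 : (_root_.fderiv ℝ (dRho^[m] h) (0, s)) (1, 0) = 0 := by
    have := hh.2 (m + 1) s
    rwa [Function.iterate_succ_apply'] at this
  have h8 : (a, v) = a • ((1 : ℝ), (0 : V)) + (0, v) := by simp
  rw [h8, map_add, map_smul, h6, h7]
  simp

/-- The restriction of `h` to the half-space `ρ < 0`, extended by zero. -/
noncomputable def cutLeft (h : ℝ × V → E) : ℝ × V → E := fun x => if x.1 < 0 then h x else 0

lemma IsFlat.hasFDerivAt_cutLeft {h : ℝ × V → E} (hh : IsFlat h) (x : ℝ × V) :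
    HasFDerivAt (cutLeft h) (cutLeft (_root_.fderiv ℝ h) x) x := by
  have hd : HasFDerivAt h (_root_.fderiv ℝ h x) x :=
    (hh.1.differentiable (by simp) x).hasFDerivAt
  rcases lt_trichotomy x.1 0 with hx | hx | hx
  · have : ∀ᶠ y in nhds x, y.1 < 0 := (isOpen_lt continuous_fst continuous_const).mem_nhds hx
    simp only [cutLeft, hx, if_true]
    exact hd.congr_of_eventuallyEq (this.mono fun y hy => by simp [cutLeft, hy])
  · -- On the hyperplane `h` and its derivative vanish, and `‖cutLeft h‖ ≤ ‖h‖`.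
    have h0 : ∀ (s : V), h (0, s) = 0 := hh.apply_zero
    obtain ⟨r, s⟩ := x
    obtain rfl : r = 0 := hx
    rw [hh.fderiv.apply_zero s] at hd
    simp only [cutLeft, lt_irrefl, if_false]
    rw [hasFDerivAt_iff_isLittleO] at hd ⊢
    refine Asymptotics.IsBigO.trans_isLittleO (Asymptotics.IsBigO.of_bound 1 ?_) hd
    filter_upwards with y
    simp only [h0, cutLeft, lt_irrefl, if_false]
    split_ifs <;> simp
  · have : ∀ᶠ y in nhds x, 0 < y.1 := (isOpen_lt continuous_const continuous_fst).mem_nhds hx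
    simp only [cutLeft, not_lt.2 hx.le, if_false]
    exact (hasFDerivAt_const 0 x).congr_of_eventuallyEq
      (this.mono fun y hy => by simp [cutLeft, not_lt.2 (le_of_lt hy)])

/-- The induction on the order of smoothness changes the codomain, since the derivative of
`cutLeft h` is `cutLeft` of the derivative of `h`. -/
lemma IsFlat.contDiff_cutLeft_nat (k : ℕ) : ∀ {E : Type} [NormedAddCommGroup E] [NormedSpace ℝ E]
    {h : ℝ × V → E}, IsFlat h → ContDiff ℝ k (cutLeft h) := by
  induction k with
  | zero =>
    intro E _ _ h hh
    exact contDiff_zero.2 (continuous_iff_continuousAt.2 fun x =>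
      (hh.hasFDerivAt_cutLeft x).continuousAt)
  | succ k ih =>
    intro E _ _ h hh
    push_cast
    exact contDiff_succ_iff_hasFDerivAt.2 ⟨_, ih hh.fderiv, hh.hasFDerivAt_cutLeft⟩

/-- `f (|ρ|, s)` is `f` plus the left half of the flat function `f (-ρ, s) - f (ρ, s)`. -/
lemma contDiff_even_reflection {f : ℝ × V → E} (hf : ContDiff ℝ ∞ f)
    (hodd : ∀ (s : V) (m : ℕ), Odd m → iteratedDeriv m (fun ρ : ℝ => f (ρ, s)) 0 = 0) :
    ContDiff ℝ ∞ (fun x : ℝ × V => f (|x.1|, x.2)) := by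
  have hneg : ContDiff ℝ ∞ (fun x : ℝ × V => f (-x.1, x.2)) :=
    hf.comp (contDiff_fst.neg.prodMk contDiff_snd)
  have hflat : IsFlat (fun x : ℝ × V => f (-x.1, x.2) - f x) := by
    refine ⟨hneg.sub hf, fun m s => ?_⟩
    have hs : ContDiff ℝ ∞ (fun ρ : ℝ => f (ρ, s)) := hf.comp (contDiff_id.prodMk contDiff_const)
    have hs' : ContDiff ℝ ∞ (fun ρ : ℝ => f (-ρ, s)) := hs.comp contDiff_neg
    have h1 := congrFun (iteratedDeriv_slice (hneg.sub hf) m s) 0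
    rw [← h1]
    have h2 : iteratedDeriv m (fun ρ : ℝ => f (-ρ, s) - f (ρ, s)) 0
        = iteratedDeriv m (fun ρ : ℝ => f (-ρ, s)) 0 - iteratedDeriv m (fun ρ : ℝ => f (ρ, s)) 0 :=
      iteratedDeriv_fun_sub (hs'.of_le (by exact_mod_cast le_top)).contDiffAt
        (hs.of_le (by exact_mod_cast le_top)).contDiffAt
    rw [h2, iteratedDeriv_comp_neg m (fun ρ : ℝ => f (ρ, s)), neg_zero]
    rcases Nat.even_or_odd m with hm | hm
    · simp [hm.neg_one_pow]
    · simp [hodd s m hm]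
  have h3 := hf.add (contDiff_infty.2 fun k => IsFlat.contDiff_cutLeft_nat k hflat)
  convert h3 using 2 with x
  rcases lt_or_ge x.1 0 with hx | hx
  · simp [cutLeft, hx, abs_of_neg hx]
  · simp [cutLeft, not_lt.2 hx, abs_of_nonneg hx]
end Flat

/-! ### A smooth extension of `cos √z` with bounded derivatives -/

section Kernel

/-- The entire function `∑ (-1)ᵏ zᵏ / (2k)!`, which is `cos √z` for `z ≥ 0`. -/
noncomputable def cosSqrt : ℝ → ℝ :=
  FormalMultilinearSeries.ofScalarsSum (E := ℝ) (fun k : ℕ => ((-1) ^ k / (2 * k).factorial : ℝ))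

lemma contDiff_cosSqrt : ContDiff ℝ ∞ cosSqrt := by
  have hr : (FormalMultilinearSeries.ofScalars ℝ
      (fun k : ℕ => ((-1) ^ k / (2 * k).factorial : ℝ))).radius = ⊤ := by
    apply FormalMultilinearSeries.ofScalars_radius_eq_top_of_tendsto
    · filter_upwards with k
      positivity
    · refine squeeze_zero (fun k => by positivity) (fun k => ?_)
        tendsto_one_div_add_atTop_nhds_zero_nat
      have h1 : ((2 * k.succ).factorial : ℝ) = (2 * k + 2) * (2 * k + 1) * (2 * k).factorial := by
        rw [Nat.mul_succ, Nat.factorial_succ, Nat.factorial_succ]; push_cast; ring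
      have h2 : (0 : ℝ) < (2 * k).factorial := by positivity
      simp only [norm_div, norm_pow, norm_neg, norm_one, one_pow, Real.norm_natCast]
      rw [h1]
      field_simp
      nlinarith [(Nat.cast_nonneg k : (0 : ℝ) ≤ k)]
  have h := FormalMultilinearSeries.hasFPowerSeriesOnBall (FormalMultilinearSeries.ofScalars ℝ
      (fun k : ℕ => ((-1) ^ k / (2 * k).factorial : ℝ))) (by rw [hr]; simp)
  have h' := h.analyticOnNhd
  rw [hr] at h'
  simp only [Metric.eball_top] at h'
  exact h'.contDiff

lemma cosSqrt_sq (x : ℝ) : cosSqrt (x ^ 2) = Real.cos x := by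
  rw [← (Real.hasSum_cos x).tsum_eq, cosSqrt, FormalMultilinearSeries.ofScalarsSum_eq_tsum]
  refine tsum_congr fun k => ?_
  rw [smul_eq_mul, ← pow_mul]; ring

/-- The function `z ↦ cos √z` on `[0, ∞)`, extended smoothly to `ℝ` so as to vanish for `z ≤ -1`. The
cutoff removes the exponential growth of `cosSqrt` at `-∞`. -/
noncomputable def kernelH : ℝ → ℝ := fun z => Real.smoothTransition (z + 1) * cosSqrt z

lemma contDiff_kernelH : ContDiff ℝ ∞ kernelH :=
  (Real.smoothTransition.contDiff.comp (contDiff_id.add contDiff_const)).mul contDiff_cosSqrt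

lemma kernelH_sq (x : ℝ) : kernelH (x ^ 2) = Real.cos x := by
  rw [kernelH, Real.smoothTransition.one_of_one_le (by nlinarith [sq_nonneg x]), one_mul,
    cosSqrt_sq]

lemma kernelH_eq_zero {z : ℝ} (hz : z ≤ -1) : kernelH z = 0 := by
  rw [kernelH, Real.smoothTransition.zero_of_nonpos (by linarith), zero_mul]

lemma differentiable_iteratedDeriv_kernelH (m : ℕ) :
    Differentiable ℝ (iteratedDeriv m kernelH) :=
  contDiff_kernelH.differentiable_iteratedDeriv m (by exact_mod_cast WithTop.coe_lt_top m)

lemma hasDerivAt_iteratedDeriv_kernelH (m : ℕ) (z : ℝ) :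
    HasDerivAt (iteratedDeriv m kernelH) (iteratedDeriv (m + 1) kernelH z) z := by
  rw [iteratedDeriv_succ]
  exact (differentiable_iteratedDeriv_kernelH m z).hasDerivAt

lemma kernelH_deriv_one (x : ℝ) : 2 * x * iteratedDeriv 1 kernelH (x ^ 2) = - Real.sin x := by
  have h := hasDerivAt_iteratedDeriv_kernelH 0 (x ^ 2)
  have h1 := HasDerivAt.comp (h := fun x : ℝ => x ^ 2) x h (hasDerivAt_pow 2 x)
  have h2 : iteratedDeriv 0 kernelH ∘ (fun x : ℝ => x ^ 2) = Real.cos := by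
    funext y; simp [kernelH_sq]
  rw [h2] at h1
  have := h1.unique (Real.hasDerivAt_cos x)
  simp only [zero_add] at this
  rw [← this]; push_cast; ring

/-- Differentiating `H (x²) = cos x` twice gives `4 z H'' + 2 H' + H = 0` for `z > 0`; this is the
`m`-th derivative of that equation. -/
lemma kernelH_ode (m : ℕ) : ∀ z : ℝ, 0 < z →
    4 * z * iteratedDeriv (m + 2) kernelH z + (4 * m + 2) * iteratedDeriv (m + 1) kernelH z
      + iteratedDeriv m kernelH z = 0 := by
  induction m with
  | zero =>
    intro z hz
    obtain ⟨x, hx, rfl⟩ : ∃ x : ℝ, 0 < x ∧ x ^ 2 = z :=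
      ⟨√z, Real.sqrt_pos.2 hz, Real.sq_sqrt hz.le⟩
    have h := hasDerivAt_iteratedDeriv_kernelH 1 (x ^ 2)
    have h1 := (((hasDerivAt_id x).const_mul 2)).mul (HasDerivAt.comp (h := fun x : ℝ => x ^ 2) x h (hasDerivAt_pow 2 x))
    have h2 : ((fun y => 2 * id y) * (iteratedDeriv 1 kernelH ∘ (fun x : ℝ => x ^ 2)))
        = fun x => - Real.sin x := by
      funext y; simpa using kernelH_deriv_one y
    rw [h2] at h1
    have := h1.unique (Real.hasDerivAt_sin x).neg
    simp only [iteratedDeriv_zero, kernelH_sq, Function.comp, id] at this ⊢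
    norm_num at this ⊢
    linarith
  | succ m ih =>
    intro z hz
    have h := ((((hasDerivAt_id z).const_mul 4).mul (hasDerivAt_iteratedDeriv_kernelH (m + 2) z)).add
      ((hasDerivAt_iteratedDeriv_kernelH (m + 1) z).const_mul (4 * m + 2 : ℝ))).add
      (hasDerivAt_iteratedDeriv_kernelH m z)
    have h2 := h.congr_of_eventuallyEq (f₁ := fun _ => (0 : ℝ)) (by
      filter_upwards [lt_mem_nhds hz] with y hy
      exact (ih y hy).symm)
    have := h2.unique (hasDerivAt_const z 0)
    simp only [id] at this
    push_cast
    linarith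

/-- The differential equation bounds the derivative of order `m + 2` on `[1, ∞)` by those of orders
`m` and `m + 1`. -/
lemma kernelH_bound_one (m : ℕ) : ∃ M : ℝ, ∀ z : ℝ, 1 ≤ z → |iteratedDeriv m kernelH z| ≤ M := by
  induction m using Nat.twoStepInduction with
  | zero =>
    refine ⟨1, fun z hz => ?_⟩
    have h := kernelH_sq (√z)
    rw [Real.sq_sqrt (by linarith)] at h
    rw [iteratedDeriv_zero, h]
    exact Real.abs_cos_le_one _
  | one =>
    refine ⟨1, fun z hz => ?_⟩
    have h := kernelH_deriv_one (√z)
    rw [Real.sq_sqrt (by linarith)] at h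
    have h1 : 1 ≤ √z := Real.one_le_sqrt.2 hz
    have h2 : |2 * √z * iteratedDeriv 1 kernelH z| ≤ 1 := by
      rw [h, abs_neg]; exact Real.abs_sin_le_one _
    rw [abs_mul, abs_of_pos (by linarith)] at h2
    nlinarith [abs_nonneg (iteratedDeriv 1 kernelH z)]
  | more m ih0 ih1 =>
    obtain ⟨M0, h0⟩ := ih0
    obtain ⟨M1, h1⟩ := ih1
    refine ⟨(4 * m + 2) * M1 + M0, fun z hz => ?_⟩
    have h := kernelH_ode m z (by linarith)
    have h2 : 4 * z * iteratedDeriv (m + 2) kernelH z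
        = -((4 * m + 2) * iteratedDeriv (m + 1) kernelH z + iteratedDeriv m kernelH z) := by linarith
    have h3 : |4 * z * iteratedDeriv (m + 2) kernelH z| ≤ (4 * m + 2) * M1 + M0 := by
      rw [h2, abs_neg]
      refine (abs_add_le _ _).trans (add_le_add ?_ (h0 z hz))
      rw [abs_mul, abs_of_pos (by positivity)]
      exact mul_le_mul_of_nonneg_left (h1 z hz) (by positivity)
    rw [abs_mul, abs_of_pos (by linarith)] at h3
    nlinarith [abs_nonneg (iteratedDeriv (m + 2) kernelH z)]

lemma kernelH_bound (m : ℕ) : ∃ M : ℝ, ∀ z : ℝ, |iteratedDeriv m kernelH z| ≤ M := by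
  obtain ⟨M1, h1⟩ := kernelH_bound_one m
  obtain ⟨M2, h2⟩ := (isCompact_Icc (a := (-1 : ℝ)) (b := 1)).exists_bound_of_continuousOn
    (differentiable_iteratedDeriv_kernelH m).continuous.continuousOn
  refine ⟨max M1 M2, fun z => ?_⟩
  rcases lt_or_ge z (-1) with hz | hz
  · have h3 : kernelH =ᶠ[nhds z] fun _ => 0 := by
      filter_upwards [gt_mem_nhds hz] with y hy using kernelH_eq_zero hy.le
    rw [h3.iteratedDeriv_eq]
    have : 0 ≤ M1 := (abs_nonneg _).trans (h1 1 le_rfl)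
    simp only [iteratedDeriv_fun_const_zero, abs_zero]
    exact this.trans (le_max_left _ _)
  · rcases le_total z 1 with hz' | hz'
    · exact (h2 z ⟨hz, hz'⟩).trans (le_max_right _ _)
    · exact (h1 z hz').trans (le_max_left _ _)
end Kernel

/-! ### Smoothness of parametric integrals and bounded derivatives -/

section Param
open MeasureTheory
variable {W X : Type} [NormedAddCommGroup W] [NormedSpace ℝ W] [SecondCountableTopology W]
  [MeasurableSpace W] [BorelSpace W] [NormedAddCommGroup X] [NormedSpace ℝ X]

/-- Differentiation under the integral sign to any order, when each derivative in the parameter is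
dominated by an integrable function uniformly in the parameter. -/
lemma contDiff_integral_nat (μ : Measure W) (k : ℕ) : ∀ {E : Type} [NormedAddCommGroup E]
    [NormedSpace ℝ E] {Φ : W → X → E},
    ContDiff ℝ ∞ (Function.uncurry Φ) →
    (∀ m : ℕ, ∃ b : W → ℝ, Integrable b μ ∧ ∀ w x, ‖iteratedFDeriv ℝ m (Φ w) x‖ ≤ b w) →
    ContDiff ℝ k (fun x => ∫ w, Φ w x ∂μ) := by
  have key : ∀ {E : Type} [NormedAddCommGroup E]
    [NormedSpace ℝ E] {Φ : W → X → E},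
    ContDiff ℝ ∞ (Function.uncurry Φ) →
    (∀ m : ℕ, ∃ b : W → ℝ, Integrable b μ ∧ ∀ w x, ‖iteratedFDeriv ℝ m (Φ w) x‖ ≤ b w) →
    ContDiff ℝ ∞ (Function.uncurry fun w x => fderiv ℝ (Φ w) x) ∧
    ∀ x, HasFDerivAt (fun x => ∫ w, Φ w x ∂μ) (∫ w, fderiv ℝ (Φ w) x ∂μ) x := by
    intro E _ _ Φ hΦ hb
    have hd : ContDiff ℝ ∞ (Function.uncurry fun w x => fderiv ℝ (Φ w) x) := by
      have h1 : ContDiff ℝ ∞ (Function.uncurry fun (p : W × X) (x : X) => Φ p.1 x) :=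
        hΦ.comp ((contDiff_fst.comp contDiff_fst).prodMk contDiff_snd)
      exact ContDiff.fderiv h1 contDiff_snd (by simp)
    refine ⟨hd, fun x => ?_⟩
    obtain ⟨b0, hb0, hb0'⟩ := hb 0
    obtain ⟨b1, hb1, hb1'⟩ := hb 1
    have hmeas : ∀ x, AEStronglyMeasurable (fun w => Φ w x) μ := fun x =>
      (hΦ.continuous.comp (continuous_id.prodMk continuous_const)).aestronglyMeasurable
    refine hasFDerivAt_integral_of_dominated_of_fderiv_le (F := fun x w => Φ w x)
      (F' := fun x w => fderiv ℝ (Φ w) x) (bound := b1) Filter.univ_mem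
      (Filter.Eventually.of_forall hmeas)
      (hb0.mono' (hmeas x) (Filter.Eventually.of_forall fun w => by simpa using hb0' w x))
      (hd.continuous.comp (continuous_id.prodMk continuous_const)).aestronglyMeasurable
      (Filter.Eventually.of_forall fun w x _ => ?_) hb1
      (Filter.Eventually.of_forall fun w x _ => ?_)
    · simpa using hb1' w x
    · have : ContDiff ℝ ∞ (Φ w) := hΦ.comp (contDiff_const.prodMk contDiff_id)
      exact (this.differentiable (by simp) x).hasFDerivAt
  induction k with
  | zero =>
    intro E _ _ Φ hΦ hb
    exact contDiff_zero.2 (continuous_iff_continuousAt.2 fun x =>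
      ((key hΦ hb).2 x).continuousAt)
  | succ k ih =>
    intro E _ _ Φ hΦ hb
    push_cast
    refine contDiff_succ_iff_hasFDerivAt.2 ⟨_, ih (key hΦ hb).1 fun m => ?_, (key hΦ hb).2⟩
    obtain ⟨b, hb1, hb2⟩ := hb (m + 1)
    exact ⟨b, hb1, fun w x => by rw [norm_iteratedFDeriv_fderiv]; exact hb2 w x⟩

/-- `f` is smooth and each of its iterated derivatives is bounded on the whole space. -/
def BddSmooth {X E : Type} [NormedAddCommGroup X] [NormedSpace ℝ X]
    [NormedAddCommGroup E] [NormedSpace ℝ E] (f : X → E) : Prop :=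
  ContDiff ℝ ∞ f ∧ ∀ m : ℕ, ∃ M : ℝ, ∀ x, ‖iteratedFDeriv ℝ m f x‖ ≤ M

lemma BddSmooth.comp_clm {X Y E : Type} [NormedAddCommGroup X] [NormedSpace ℝ X]
    [NormedAddCommGroup Y] [NormedSpace ℝ Y]
    [NormedAddCommGroup E] [NormedSpace ℝ E] {f : Y → E} (hf : BddSmooth f) (L : X →L[ℝ] Y) :
    BddSmooth (f ∘ L) := by
  refine ⟨hf.1.comp L.contDiff, fun m => ?_⟩
  obtain ⟨M, hM⟩ := hf.2 m
  refine ⟨M * ‖L‖ ^ m, fun x => ?_⟩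
  rw [L.iteratedFDeriv_comp_right hf.1 x (by exact_mod_cast le_top)]
  refine (ContinuousMultilinearMap.norm_compContinuousLinearMap_le _ _).trans ?_
  simp only [Finset.prod_const, Finset.card_univ, Fintype.card_fin]
  gcongr
  exact hM _

lemma BddSmooth.mul {X : Type} [NormedAddCommGroup X] [NormedSpace ℝ X]
    {f g : X → ℂ} (hf : BddSmooth f) (hg : BddSmooth g) :
    BddSmooth (fun x => f x * g x) := by
  refine ⟨hf.1.mul hg.1, fun m => ?_⟩
  choose M hM using hf.2
  choose N hN using hg.2
  have hM0 : ∀ i, 0 ≤ M i := fun i => (norm_nonneg _).trans (hM i 0)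
  refine ⟨∑ i ∈ Finset.range (m + 1), (m.choose i) * M i * N (m - i), fun x => ?_⟩
  refine (norm_iteratedFDeriv_mul_le hf.1 hg.1 x (by exact_mod_cast le_top)).trans ?_
  refine Finset.sum_le_sum fun i _ => ?_
  have := hM i x
  have := hN (m - i) x
  have := hM0 i
  gcongr

lemma BddSmooth.ofReal {f : ℝ → ℝ} (hf : ContDiff ℝ ∞ f)
    (hb : ∀ m : ℕ, ∃ M : ℝ, ∀ z, |iteratedDeriv m f z| ≤ M) :
    BddSmooth (fun x => (f x : ℂ)) := by
  refine ⟨Complex.ofRealCLM.contDiff.comp hf, fun m => ?_⟩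
  obtain ⟨M, hM⟩ := hb m
  refine ⟨‖Complex.ofRealCLM‖ * M, fun x => ?_⟩
  refine (Complex.ofRealCLM.norm_iteratedFDeriv_comp_left hf.contDiffAt
    (by exact_mod_cast le_top)).trans ?_
  rw [norm_iteratedFDeriv_eq_norm_iteratedDeriv]
  gcongr
  exact hM x

lemma iteratedDeriv_expI (m : ℕ) : iteratedDeriv m (fun b : ℝ => Complex.exp (b * Complex.I)) =
    fun b : ℝ => Complex.I ^ m * Complex.exp (b * Complex.I) := by
  induction m with
  | zero => simp
  | succ m ih =>
    rw [iteratedDeriv_succ, ih]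
    funext b
    have h := ((((hasDerivAt_id b).ofReal_comp).mul_const Complex.I).cexp).const_mul
      (Complex.I ^ m)
    refine h.deriv.trans ?_
    simp; ring

lemma bddSmooth_expI : BddSmooth (fun b : ℝ => Complex.exp (b * Complex.I)) := by
  refine ⟨(Complex.ofRealCLM.contDiff.mul contDiff_const).cexp, fun m => ⟨1, fun x => ?_⟩⟩
  rw [norm_iteratedFDeriv_eq_norm_iteratedDeriv, iteratedDeriv_expI]
  simp [Complex.norm_exp_ofReal_mul_I]

end Param


/-! ### Even functions with compact support -/

section Main
open MeasureTheory SchwartzMap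
open scoped FourierTransform

/-- The splitting of `ℝⁿ⁺¹` into its first coordinate and the others. Fourier inversion needs the
Euclidean inner product, which `ℝ × (Fin n → ℝ)` does not carry. -/
noncomputable def coordEquiv (n : ℕ) :
    EuclideanSpace ℝ (Fin (n + 1)) ≃L[ℝ] ℝ × (Fin n → ℝ) :=
  LinearEquiv.toContinuousLinearEquiv
    { toFun := fun w => (w 0, fun i => w i.succ)
      map_add' := fun _ _ => rfl
      map_smul' := fun _ _ => rfl
      invFun := fun x => WithLp.toLp 2 (Fin.cons x.1 x.2)
      left_inv := fun w => by
        ext i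
        refine Fin.cases ?_ (fun i => ?_) i <;> simp
      right_inv := fun x => by simp }

lemma inner_coordEquiv_symm (n : ℕ) (w : EuclideanSpace ℝ (Fin (n + 1))) (x : ℝ × (Fin n → ℝ)) :
    inner ℝ w ((coordEquiv n).symm x) = w 0 * x.1 + ∑ i, w i.succ * x.2 i := by
  have h0 : (coordEquiv n).symm x = WithLp.toLp 2 (Fin.cons x.1 x.2 : Fin (n + 1) → ℝ) := rfl
  rw [h0, PiLp.inner_apply, Fin.sum_univ_succ]
  simp [mul_comm]

/-- For a frequency `w = (ξ, η)`, the linear map `(t, s) ↦ ((2π ξ)² t, 2π η · s)`. -/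
noncomputable def phaseMap (n : ℕ) (w : EuclideanSpace ℝ (Fin (n + 1))) :
    ℝ × (Fin n → ℝ) →L[ℝ] ℝ × ℝ :=
  (((2 * Real.pi * w 0) ^ 2) • ContinuousLinearMap.fst ℝ ℝ (Fin n → ℝ)).prod
    ((∑ i, (2 * Real.pi * w i.succ) • ContinuousLinearMap.proj (R := ℝ) (φ := fun _ : Fin n => ℝ) i).comp
      (ContinuousLinearMap.snd ℝ ℝ (Fin n → ℝ)))

lemma phaseMap_apply (n : ℕ) (w : EuclideanSpace ℝ (Fin (n + 1))) (x : ℝ × (Fin n → ℝ)) :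
    phaseMap n w x = ((2 * Real.pi * w 0) ^ 2 * x.1, 2 * Real.pi * ∑ i, w i.succ * x.2 i) := by
  simp [phaseMap, Finset.mul_sum, mul_assoc]

lemma norm_phaseMap_le (n : ℕ) : ∃ C : ℝ, 0 ≤ C ∧ ∀ w, ‖phaseMap n w‖ ≤ C * (1 + ‖w‖ ^ 2) := by
  have hpi := Real.pi_pos
  refine ⟨(2 * Real.pi) ^ 2 + 2 * Real.pi * n, by positivity, fun w => ?_⟩
  refine ContinuousLinearMap.opNorm_le_bound _ (by positivity) fun x => ?_
  have hw : ∀ i, |w i| ≤ ‖w‖ := fun i => PiLp.norm_apply_le w i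
  have hx1 : |x.1| ≤ ‖x‖ := norm_fst_le x
  have hx2 : ∀ i, |x.2 i| ≤ ‖x‖ := fun i => (norm_le_pi_norm x.2 i).trans (norm_snd_le x)
  have hlin : ‖w‖ ≤ 1 + ‖w‖ ^ 2 := by nlinarith [sq_nonneg (‖w‖ - 1), norm_nonneg w]
  rw [phaseMap_apply, Prod.norm_def]
  refine max_le ?_ ?_
  · rw [Real.norm_eq_abs, abs_mul, abs_pow, abs_mul, abs_of_pos (by positivity : 0 < 2 * Real.pi)]
    calc (2 * Real.pi * |w 0|) ^ 2 * |x.1| ≤ (2 * Real.pi * ‖w‖) ^ 2 * ‖x‖ := by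
          gcongr; exact hw 0
      _ = (2 * Real.pi) ^ 2 * ‖w‖ ^ 2 * ‖x‖ := by ring
      _ ≤ ((2 * Real.pi) ^ 2 + 2 * Real.pi * n) * (1 + ‖w‖ ^ 2) * ‖x‖ := by
          gcongr
          · exact le_add_of_nonneg_right (by positivity)
          · linarith
  · rw [Real.norm_eq_abs, abs_mul, abs_of_pos (by positivity : 0 < 2 * Real.pi)]
    calc 2 * Real.pi * |∑ i, w i.succ * x.2 i| ≤ 2 * Real.pi * ∑ i : Fin n, ‖w‖ * ‖x‖ := by
          gcongr
          refine (Finset.abs_sum_le_sum_abs _ _).trans (Finset.sum_le_sum fun i _ => ?_)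
          rw [abs_mul]
          exact mul_le_mul (hw _) (hx2 i) (abs_nonneg _) (norm_nonneg _)
      _ = (2 * Real.pi * n) * ‖w‖ * ‖x‖ := by simp; ring
      _ ≤ ((2 * Real.pi) ^ 2 + 2 * Real.pi * n) * (1 + ‖w‖ ^ 2) * ‖x‖ := by
          gcongr
          exact le_add_of_nonneg_left (by positivity)

/-- The function `(a, b) ↦ H a · exp (i b)`. Its composition with `phaseMap n w` replaces the character
`exp (2π i (ξ ρ + η · s))` after averaging over `±ρ` and setting `t = ρ²`. -/
noncomputable def kernelB (p : ℝ × ℝ) : ℂ := (kernelH p.1 : ℂ) * Complex.exp (p.2 * Complex.I)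

lemma bddSmooth_kernelB : BddSmooth kernelB :=
  ((BddSmooth.ofReal contDiff_kernelH kernelH_bound).comp_clm (ContinuousLinearMap.fst ℝ ℝ ℝ)).mul
    (bddSmooth_expI.comp_clm (ContinuousLinearMap.snd ℝ ℝ ℝ))

lemma contDiff_phaseMap (n : ℕ) :
    ContDiff ℝ ∞ (fun p : EuclideanSpace ℝ (Fin (n + 1)) × (ℝ × (Fin n → ℝ)) =>
      phaseMap n p.1 p.2) := by
  simp only [phaseMap_apply]
  fun_prop

/-- The derivative of order `m` of `kernelB ∘ phaseMap n w` is `O(1 + ‖w‖ ^ (2 * m))`, which the rapid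
decay of `ψ` absorbs. -/
lemma contDiff_integral_kernelB (n : ℕ) (ψ : 𝓢(EuclideanSpace ℝ (Fin (n + 1)), ℂ)) :
    ContDiff ℝ ∞ (fun x => ∫ w, ψ w • kernelB (phaseMap n w x)) := by
  refine contDiff_infty.2 fun k => contDiff_integral_nat volume k ?_ fun m => ?_
  · have h1 : ContDiff ℝ ∞ (fun p : EuclideanSpace ℝ (Fin (n + 1)) × (ℝ × (Fin n → ℝ)) => ψ p.1) :=
      (ψ.smooth ⊤).comp contDiff_fst
    exact h1.smul (bddSmooth_kernelB.1.comp (contDiff_phaseMap n))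
  · obtain ⟨C, hC, hA⟩ := norm_phaseMap_le n
    obtain ⟨M, hM⟩ := bddSmooth_kernelB.2 m
    have hM0 : 0 ≤ M := (norm_nonneg _).trans (hM 0)
    refine ⟨fun w => (M * C ^ m * 2 ^ (m - 1)) * (‖w‖ ^ 0 * ‖ψ w‖ + ‖w‖ ^ (2 * m) * ‖ψ w‖),
      ((ψ.integrable_pow_mul volume 0).add (ψ.integrable_pow_mul volume (2 * m))).const_mul _,
      fun w x => ?_⟩
    have hB : ContDiff ℝ m (kernelB ∘ phaseMap n w) :=
      (bddSmooth_kernelB.1.comp (phaseMap n w).contDiff).of_le (by exact_mod_cast le_top)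
    have h1 : iteratedFDeriv ℝ m (fun x => ψ w • kernelB (phaseMap n w x)) x =
        ψ w • iteratedFDeriv ℝ m (kernelB ∘ phaseMap n w) x :=
      iteratedFDeriv_const_smul_apply (a := ψ w) (f := kernelB ∘ phaseMap n w) hB.contDiffAt
    rw [h1, norm_smul,
      (phaseMap n w).iteratedFDeriv_comp_right bddSmooth_kernelB.1 x (by exact_mod_cast le_top)]
    have h2 : ‖phaseMap n w‖ ^ m ≤ C ^ m * (2 ^ (m - 1) * (1 + ‖w‖ ^ (2 * m))) := by
      calc ‖phaseMap n w‖ ^ m ≤ (C * (1 + ‖w‖ ^ 2)) ^ m := by gcongr; exact hA w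
        _ = C ^ m * (1 + ‖w‖ ^ 2) ^ m := mul_pow _ _ _
        _ ≤ _ := by
          gcongr
          simpa [pow_mul] using add_pow_le zero_le_one (sq_nonneg ‖w‖) m
    have h3 := ContinuousMultilinearMap.norm_compContinuousLinearMap_le
      (iteratedFDeriv ℝ m kernelB (phaseMap n w x)) (fun _ : Fin m => phaseMap n w)
    simp only [Finset.prod_const, Finset.card_univ, Fintype.card_fin] at h3
    calc _ ≤ ‖ψ w‖ * (M * (C ^ m * (2 ^ (m - 1) * (1 + ‖w‖ ^ (2 * m))))) := by
          gcongr
          exact h3.trans (mul_le_mul (hM _) h2 (by positivity) hM0)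
      _ = _ := by ring

/-- Whitney's theorem for compactly supported functions, with `u` the real part of the Fourier
integral of `kernelB ∘ phaseMap n w`. -/
lemma exists_of_hasCompactSupport (n : ℕ) (F : ℝ × (Fin n → ℝ) → ℝ) (hF : ContDiff ℝ ∞ F)
    (hc : HasCompactSupport F) (heven : ∀ ρ s, F (-ρ, s) = F (ρ, s)) :
    ∃ u : ℝ × (Fin n → ℝ) → ℝ, ContDiff ℝ ∞ u ∧ ∀ ρ s, F (ρ, s) = u (ρ ^ 2, s) := by
  have hG : ContDiff ℝ ∞ (fun w => (F (coordEquiv n w) : ℂ)) :=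
    Complex.ofRealCLM.contDiff.comp (hF.comp (coordEquiv n).contDiff)
  have hGc : HasCompactSupport (fun w => (F (coordEquiv n w) : ℂ)) :=
    (hc.comp_isClosedEmbedding (coordEquiv n).toHomeomorph.isClosedEmbedding).comp_left
      (g := fun r : ℝ => (r : ℂ)) Complex.ofReal_zero
  let G : 𝓢(EuclideanSpace ℝ (Fin (n + 1)), ℂ) := hGc.toSchwartzMap hG
  have hGe : ∀ w, G w = (F (coordEquiv n w) : ℂ) := fun w => rfl
  let ψ : 𝓢(EuclideanSpace ℝ (Fin (n + 1)), ℂ) := 𝓕 G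
  have hinv : ∀ x, (F x : ℂ) = ∫ w : EuclideanSpace ℝ (Fin (n + 1)), Complex.exp
      (((2 * Real.pi * (w 0 * x.1 + ∑ i, w i.succ * x.2 i) : ℝ) : ℂ) * Complex.I) • ψ w := by
    intro x
    have h1 : 𝓕⁻ ψ = G := FourierTransform.fourierInv_fourier_eq G
    have h2 : (𝓕⁻ ψ) ((coordEquiv n).symm x) = (F x : ℂ) := by
      rw [h1, hGe, ContinuousLinearEquiv.apply_symm_apply]
    rw [← h2, SchwartzMap.fourierInv_coe, Real.fourierInv_eq']
    simp only [inner_coordEquiv_symm]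
  have h_int : ∀ x : ℝ × (Fin n → ℝ), Integrable (fun w : EuclideanSpace ℝ (Fin (n + 1)) => Complex.exp
      (((2 * Real.pi * (w 0 * x.1 + ∑ i, w i.succ * x.2 i) : ℝ) : ℂ) * Complex.I) • ψ w) := by
    intro x
    refine ψ.integrable.norm.mono' (Continuous.aestronglyMeasurable ?_)
      (Filter.Eventually.of_forall fun w => ?_)
    · have := ψ.continuous
      fun_prop
    · rw [norm_smul, Complex.norm_exp_ofReal_mul_I, one_mul]
  refine ⟨fun x => (∫ w, ψ w • kernelB (phaseMap n w x)).re,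
    Complex.reCLM.contDiff.comp (contDiff_integral_kernelB n ψ), fun ρ s => ?_⟩
  have key : (F (ρ, s) : ℂ) = ∫ w, ψ w • kernelB (phaseMap n w (ρ ^ 2, s)) := by
    -- The two characters at `ρ` and `-ρ` add up to a cosine, which is a value of `kernelH`.
    have h2 : (F (ρ, s) : ℂ) + (F (-ρ, s) : ℂ) =
        2 * ∫ w, ψ w • kernelB (phaseMap n w (ρ ^ 2, s)) := by
      rw [hinv, hinv, ← integral_add (h_int _) (h_int _), ← integral_const_mul]
      congr 1
      funext w
      simp only [phaseMap_apply, kernelB, smul_eq_mul]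
      rw [← mul_pow, kernelH_sq, Complex.ofReal_cos, Complex.cos]
      set q := ∑ i, w i.succ * s i
      have e1 : Complex.exp (((2 * Real.pi * (w 0 * ρ + q) : ℝ) : ℂ) * Complex.I) =
          Complex.exp (((2 * Real.pi * w 0 * ρ : ℝ) : ℂ) * Complex.I) *
          Complex.exp (((2 * Real.pi * q : ℝ) : ℂ) * Complex.I) := by
        rw [← Complex.exp_add]; congr 1; push_cast; ring
      have e2 : Complex.exp (((2 * Real.pi * (w 0 * (-ρ) + q) : ℝ) : ℂ) * Complex.I) =
          Complex.exp (-((2 * Real.pi * w 0 * ρ : ℝ) : ℂ) * Complex.I) *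
          Complex.exp (((2 * Real.pi * q : ℝ) : ℂ) * Complex.I) := by
        rw [← Complex.exp_add]; congr 1; push_cast; ring
      rw [e1, e2]
      ring
    rw [heven] at h2
    linear_combination h2 / 2
  exact (congrArg Complex.re key)

/-! ### The two implications -/

lemma odd_vanish (n : ℕ) (f u : ℝ × (Fin n → ℝ) → ℝ) (hf : ContDiff ℝ ∞ f) (hu : ContDiff ℝ ∞ u)
    (hfu : ∀ ρ : ℝ, 0 ≤ ρ → ∀ s : Fin n → ℝ, f (ρ, s) = u (ρ ^ 2, s))
    (s : Fin n → ℝ) (m : ℕ) (hm : Odd m) : iteratedDeriv m (fun ρ : ℝ => f (ρ, s)) 0 = 0 := by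
  have h1 : ContDiff ℝ m (fun ρ : ℝ => f (ρ, s)) :=
    (hf.comp (contDiff_id.prodMk contDiff_const)).of_le (by exact_mod_cast le_top)
  have h2 : ContDiff ℝ m (fun ρ : ℝ => u (ρ ^ 2, s)) :=
    (hu.comp ((contDiff_id.pow 2).prodMk contDiff_const)).of_le (by exact_mod_cast le_top)
  have h4 : Set.EqOn (fun ρ : ℝ => f (ρ, s)) (fun ρ : ℝ => u (ρ ^ 2, s)) (Set.Ici 0) :=
    fun ρ hρ => hfu ρ hρ s
  have h0 : (0 : ℝ) ∈ Set.Ici (0 : ℝ) := Set.self_mem_Ici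
  rw [← iteratedDerivWithin_eq_iteratedDeriv (uniqueDiffOn_Ici 0) h1.contDiffAt h0,
    iteratedDerivWithin_congr h4 h0,
    iteratedDerivWithin_eq_iteratedDeriv (uniqueDiffOn_Ici 0) h2.contDiffAt h0]
  -- `ρ ↦ u (ρ ^ 2, s)` is even.
  have h3 := iteratedDeriv_comp_neg m (fun ρ : ℝ => u (ρ ^ 2, s)) 0
  simp only [even_two.neg_pow, hm.neg_one_pow, neg_zero, neg_smul, one_smul] at h3
  linarith

/-- A smooth solution exists near every point `x`, including points with `x.1 < 0`, where there is no
condition to satisfy. -/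
lemma exists_local (n : ℕ) (f : ℝ × (Fin n → ℝ) → ℝ) (hf : ContDiff ℝ ∞ f)
    (hodd : ∀ (s : Fin n → ℝ) (m : ℕ), Odd m → iteratedDeriv m (fun ρ : ℝ => f (ρ, s)) 0 = 0)
    (x : ℝ × (Fin n → ℝ)) : ∃ U ∈ nhds x, ∃ g : ℝ × (Fin n → ℝ) → ℝ,
      ContDiffOn ℝ ∞ g U ∧ ∀ y ∈ U, 0 ≤ y.1 → g y = f (√y.1, y.2) := by
  rcases lt_trichotomy x.1 0 with hx | hx | hx
  · exact ⟨{y | y.1 < 0}, (isOpen_lt continuous_fst continuous_const).mem_nhds hx, fun _ => 0,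
      contDiffOn_const, fun y hy hy' => absurd hy' (not_le.2 hy)⟩
  · obtain ⟨r, s₀⟩ := x
    obtain rfl : r = 0 := hx
    let χ : ContDiffBump ((0 : ℝ), s₀) := ⟨1, 2, one_pos, one_lt_two⟩
    -- The product of the bump function with its reflection is a cutoff that is even in `ρ`.
    let F : ℝ × (Fin n → ℝ) → ℝ := fun x => χ x * (χ (-x.1, x.2) * f (|x.1|, x.2))
    have hF : ContDiff ℝ ∞ F :=
      χ.contDiff.mul ((χ.contDiff.comp (contDiff_fst.neg.prodMk contDiff_snd)).mul
        (contDiff_even_reflection hf hodd))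
    obtain ⟨u, hu, hFu⟩ := exists_of_hasCompactSupport n F hF χ.hasCompactSupport.mul_right
      (fun ρ s => by simp only [F, neg_neg, abs_neg]; ring)
    have hcont : Continuous fun y : ℝ × (Fin n → ℝ) => (√y.1, y.2) := by fun_prop
    have hcont' : Continuous fun y : ℝ × (Fin n → ℝ) => (-√y.1, y.2) := by fun_prop
    have e1 : ∀ᶠ y in nhds ((0 : ℝ), s₀), χ (√y.1, y.2) = 1 := by
      have := χ.eventuallyEq_one
      exact (hcont.tendsto' ((0 : ℝ), s₀) ((0 : ℝ), s₀) (by simp)).eventually this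
    have e2 : ∀ᶠ y in nhds ((0 : ℝ), s₀), χ (-√y.1, y.2) = 1 := by
      have := χ.eventuallyEq_one
      exact (hcont'.tendsto' ((0 : ℝ), s₀) ((0 : ℝ), s₀) (by simp)).eventually this
    refine ⟨_, e1.and e2, u, hu.contDiffOn, fun y hy hy0 => ?_⟩
    have h3 := hFu (√y.1) y.2
    rw [Real.sq_sqrt hy0] at h3
    rw [show y = (y.1, y.2) from rfl, ← h3]
    simp [F, hy.1, hy.2, abs_of_nonneg (Real.sqrt_nonneg _)]
  · refine ⟨{y | 0 < y.1}, (isOpen_lt continuous_const continuous_fst).mem_nhds hx,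
      fun y => f (√y.1, y.2), ?_, fun y _ _ => rfl⟩
    exact hf.comp_contDiffOn ((contDiff_fst.contDiffOn.sqrt fun y hy => ne_of_gt hy).prodMk
      contDiff_snd.contDiffOn)

end Main

/-- A smooth function `f : ℝ × ℝⁿ → ℝ` has all odd-order partial
derivatives in the first variable vanishing at `(0, s)` for every `s` if and only if
`f(ρ, s) = u(ρ², s)` for `ρ ≥ 0` for some smooth `u`. -/
theorem stmt_0 (n : ℕ) (hn : 1 ≤ n) (f : ℝ × (Fin n → ℝ) → ℝ)
    (hf : ContDiff ℝ (⊤ : ℕ∞) f) :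
    (∀ (s : Fin n → ℝ) (m : ℕ), Odd m →
        iteratedDeriv m (fun ρ : ℝ => f (ρ, s)) 0 = 0) ↔
      (∃ u : ℝ × (Fin n → ℝ) → ℝ, ContDiff ℝ (⊤ : ℕ∞) u ∧
        ∀ ρ : ℝ, 0 ≤ ρ → ∀ s : Fin n → ℝ, f (ρ, s) = u (ρ ^ 2, s)) := by
  constructor
  · intro hodd
    obtain ⟨g, hg⟩ := exists_contMDiffMap_forall_mem_convex_of_local (n := (⊤ : ℕ∞))
      (modelWithCornersSelf ℝ (ℝ × (Fin n → ℝ)))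
      (t := fun y : ℝ × (Fin n → ℝ) => {v : ℝ | 0 ≤ y.1 → v = f (√y.1, y.2)})
      (fun y => by
        intro a ha b hb α β _ _ hαβ hy
        rw [ha hy, hb hy, ← add_smul, hαβ, one_smul])
      (fun x => by
        obtain ⟨U, hU, g, hg, hgf⟩ := exists_local n f hf hodd x
        exact ⟨U, hU, g, hg.contMDiffOn, hgf⟩)
    refine ⟨g, g.contMDiff.contDiff, fun ρ hρ s => ?_⟩
    rw [hg (ρ ^ 2, s) (sq_nonneg ρ), Real.sqrt_sq hρ]
  · rintro ⟨u, hu, hfu⟩ s m hm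
    exact odd_vanish n f u hf hu hfu s m hm
end

section
/- Let n ≥ 1 and let f : ℝ × ℝⁿ → ℝ be smooth (C^∞) such that for every s ∈ ℝⁿ and every even m ∈ ℕ (including m = 0), ∂_ρ^m f(0,s) = 0. Then there exists a smooth function u : ℝ × ℝⁿ → ℝ such that f(ρ,s) = ρ · u(ρ², s) for all ρ ≥ 0 and all s ∈ ℝⁿ. -/
/-!
Write `T = ∂_ρ`. On `t > 0` the function `u` is forced to be `f (√t, s) / √t`, so the point is to
extend it smoothly across `t = 0`.

If `u = h` is a smooth function, the even `ρ`-derivatives of `ρ * h (ρ ^ 2, s)` vanish at `ρ = 0`,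
and the odd ones are nonzero universal multiples of the `t`-derivatives of `h` at `t = 0`. By Borel's
lemma with parameters (`borel`), `h` can be chosen so that these match the odd derivatives of `f`,
after `f` has been multiplied by a cutoff in `s`. As the even derivatives of `f` vanish too,
`G = f - ρ * h (ρ ^ 2, s)` is *flat*: all its `ρ`-derivatives vanish at `ρ = 0`.

For flat `G`, the function `W m G = t ^ (-m/2) * G (√t, s)`, extended by zero to `t ≤ 0`, is smooth
(`Flat.contDiff_W`). Indeed `G = O(ρ ^ N)` for all `N` makes it differentiable with derivative zero
on `t = 0`, and for `t > 0` its full derivative is `W (m + 2) G'` for another flat function `G'`; so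
the class of functions `W m G` is closed under differentiation. Then `u = h + W 1 G` solves the
problem for `s` near a given point.

The condition on `u` is convex at each point, so local solutions glue by a partition of unity.
-/

open scoped ContDiff Topology

namespace OddExt

/-! ### Derivatives in the first variable and flat functions -/

section Calculus

variable {E F F' : Type} [NormedAddCommGroup E] [NormedSpace ℝ E]
  [NormedAddCommGroup F] [NormedSpace ℝ F] [NormedAddCommGroup F'] [NormedSpace ℝ F']

/-- The partial derivative `∂_ρ` in the first variable, as an operator on functions on `ℝ × E`. -/
noncomputable def T (G : ℝ × E → F) : ℝ × E → F := fun p => fderiv ℝ G p (1, 0)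

/-- Smooth functions on `ℝ × E` all of whose `ρ`-derivatives vanish on the hypersurface `ρ = 0`. -/
def Flat (G : ℝ × E → F) : Prop :=
  ContDiff ℝ ∞ G ∧ ∀ (m : ℕ) (s : E), (T^[m] G) (0, s) = 0

lemma smooth_fderiv {G : ℝ × E → F} (hG : ContDiff ℝ ∞ G) : ContDiff ℝ ∞ (fderiv ℝ G) :=
  (contDiff_infty_iff_fderiv.1 hG).2

lemma smooth_differentiable {G : ℝ × E → F} (hG : ContDiff ℝ ∞ G) : Differentiable ℝ G :=
  (contDiff_infty_iff_fderiv.1 hG).1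

lemma smooth_T {G : ℝ × E → F} (hG : ContDiff ℝ ∞ G) : ContDiff ℝ ∞ (T G) :=
  (smooth_fderiv hG).clm_apply contDiff_const

lemma smooth_T_iter {G : ℝ × E → F} (hG : ContDiff ℝ ∞ G) (m : ℕ) :
    ContDiff ℝ ∞ (T^[m] G) := by
  induction m generalizing G with
  | zero => exact hG
  | succ m ih => exact ih (smooth_T hG)

lemma hasDerivAt_slice {G : ℝ × E → F} (hG : ContDiff ℝ ∞ G) (ρ : ℝ) (s : E) :
    HasDerivAt (fun r : ℝ => G (r, s)) (T G (ρ, s)) ρ := by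
  have h1 : HasDerivAt (fun r : ℝ => ((r, s) : ℝ × E)) (1, 0) ρ :=
    (hasDerivAt_id ρ).prodMk (hasDerivAt_const ρ s)
  exact (smooth_differentiable hG (ρ, s)).hasFDerivAt.comp_hasDerivAt ρ h1

lemma iteratedDeriv_slice {G : ℝ × E → F} (hG : ContDiff ℝ ∞ G) (m : ℕ) (s : E) :
    iteratedDeriv m (fun r : ℝ => G (r, s)) = fun r => (T^[m] G) (r, s) := by
  induction m generalizing G with
  | zero => simp
  | succ m ih =>
    rw [iteratedDeriv_succ', Function.iterate_succ_apply, ← ih (smooth_T hG)]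
    congr 1
    ext r
    exact (hasDerivAt_slice hG r s).deriv

lemma T_iter_clm (L : F →L[ℝ] F') {G : ℝ × E → F} (hG : ContDiff ℝ ∞ G) (m : ℕ) :
    T^[m] (fun p => L (G p)) = fun p => L ((T^[m] G) p) := by
  induction m generalizing G with
  | zero => rfl
  | succ m ih =>
    rw [Function.iterate_succ_apply, Function.iterate_succ_apply, ← ih (smooth_T hG)]
    congr 1
    ext p
    have h : HasFDerivAt (fun p => L (G p)) (L.comp (fderiv ℝ G p)) p :=
      L.hasFDerivAt.comp p (smooth_differentiable hG p).hasFDerivAt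
    simp [T, h.fderiv]

lemma T_iter_add {G H : ℝ × E → F} (hG : ContDiff ℝ ∞ G) (hH : ContDiff ℝ ∞ H) (m : ℕ) :
    T^[m] (fun p => G p + H p) = fun p => (T^[m] G) p + (T^[m] H) p := by
  induction m generalizing G H with
  | zero => rfl
  | succ m ih =>
    simp only [Function.iterate_succ_apply]
    rw [← ih (smooth_T hG) (smooth_T hH)]
    congr 1
    ext p
    simp [T, ((smooth_differentiable hG p).hasFDerivAt.fun_add
      (smooth_differentiable hH p).hasFDerivAt).fderiv]

lemma smooth_rho {G : ℝ × E → F} (hG : ContDiff ℝ ∞ G) :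
    ContDiff ℝ ∞ (fun p : ℝ × E => p.1 • G p) := contDiff_fst.smul hG

lemma T_rho {G : ℝ × E → F} (hG : ContDiff ℝ ∞ G) :
    T (fun p : ℝ × E => p.1 • G p) = fun p => G p + p.1 • T G p := by
  ext p
  have h : HasFDerivAt (fun p : ℝ × E => p.1 • G p) _ p :=
    hasFDerivAt_fst.smul (smooth_differentiable hG p).hasFDerivAt
  simp [T, h.fderiv, add_comm]

/-- Leibniz rule for the product of `ρ` and `G`. -/
lemma T_iter_rho {G : ℝ × E → F} (hG : ContDiff ℝ ∞ G) (m : ℕ) :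
    T^[m + 1] (fun p : ℝ × E => p.1 • G p) =
      fun p => ((m : ℝ) + 1) • (T^[m] G) p + p.1 • (T^[m + 1] G) p := by
  induction m with
  | zero => simp [T_rho hG]
  | succ m ih =>
    rw [Function.iterate_succ_apply', ih]
    have h1 : ContDiff ℝ ∞ (fun p => ((m : ℝ) + 1) • (T^[m] G) p) :=
      contDiff_const.smul (smooth_T_iter hG m)
    have h2 := smooth_T_iter hG (m + 1)
    have e1 := T_iter_add h1 (smooth_rho h2) 1
    have e2 := T_iter_clm (((m : ℝ) + 1) • ContinuousLinearMap.id ℝ F) (smooth_T_iter hG m) 1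
    simp only [Function.iterate_one, _root_.smul_apply,
      ContinuousLinearMap.id_apply] at e1 e2
    rw [e1, e2, T_rho h2]
    ext p
    simp only [← Function.iterate_succ_apply' T, Nat.cast_add, Nat.cast_one]
    module

lemma T_iter_fderiv {G : ℝ × E → F} (hG : ContDiff ℝ ∞ G) (m : ℕ) :
    T^[m] (fderiv ℝ G) = fderiv ℝ (T^[m] G) := by
  induction m generalizing G with
  | zero => rfl
  | succ m ih =>
    rw [Function.iterate_succ_apply, Function.iterate_succ_apply, ← ih (smooth_T hG)]
    congr 1
    refine funext fun p => ContinuousLinearMap.ext fun v => ?_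
    have hs : IsSymmSndFDerivAt ℝ G p :=
      hG.contDiffAt.isSymmSndFDerivAt (by
        rw [minSmoothness_of_isRCLikeNormedField]; exact WithTop.coe_le_coe.2 le_top)
    have h : HasFDerivAt (T G) _ p :=
      (smooth_differentiable (smooth_fderiv hG) p).hasFDerivAt.clm_apply
        (hasFDerivAt_const ((1 : ℝ), (0 : E)) p)
    rw [h.fderiv]
    simp [T, hs.eq v (1, 0)]

lemma Flat.clm {G : ℝ × E → F} (hG : Flat G) (L : F →L[ℝ] F') : Flat (fun p => L (G p)) :=
  ⟨L.contDiff.comp hG.1, fun m s => by simp [T_iter_clm L hG.1, hG.2]⟩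

lemma Flat.add {G H : ℝ × E → F} (hG : Flat G) (hH : Flat H) : Flat (fun p => G p + H p) :=
  ⟨hG.1.add hH.1, fun m s => by simp [T_iter_add hG.1 hH.1, hG.2, hH.2]⟩

lemma Flat.rho {G : ℝ × E → F} (hG : Flat G) : Flat (fun p : ℝ × E => p.1 • G p) := by
  refine ⟨smooth_rho hG.1, fun m s => ?_⟩
  cases m with
  | zero => simp
  | succ m => simp [T_iter_rho hG.1, hG.2]

lemma Flat.of_T {G : ℝ × E → F} (hG : Flat G) : Flat (T G) :=
  ⟨smooth_T hG.1, fun m s => hG.2 (m + 1) s⟩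

/-- Normal derivatives of `fderiv ℝ G` vanish by flatness itself, tangential ones because the
`ρ`-derivatives of `G` vanish identically along `ρ = 0`. -/
lemma Flat.of_fderiv {G : ℝ × E → F} (hG : Flat G) : Flat (fderiv ℝ G) := by
  refine ⟨smooth_fderiv hG.1, fun m s => ?_⟩
  rw [T_iter_fderiv hG.1]
  have hd := smooth_differentiable (smooth_T_iter hG.1 m) (0, s)
  ext v
  · have := hG.2 (m + 1) s
    rw [Function.iterate_succ_apply'] at this
    simpa [T] using this
  · have h1 : HasFDerivAt (fun s' : E => ((0 : ℝ), s')) (ContinuousLinearMap.inr ℝ ℝ E) s :=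
      (ContinuousLinearMap.inr ℝ ℝ E).hasFDerivAt
    have h2 := hd.hasFDerivAt.comp s h1
    have h3 : (T^[m] G) ∘ (fun s' : E => ((0 : ℝ), s')) = fun _ => 0 :=
      funext fun s' => hG.2 m s'
    rw [h3] at h2
    have := DFunLike.congr_fun (h2.unique (hasFDerivAt_const 0 s)) v
    simpa using this

/-- A flat function is `O(ρ ^ N)` locally uniformly in `s`, for every `N`: integrate the
bound for `∂_ρ G`. -/
lemma Flat.bound {G : ℝ × E → F} (hG : Flat G) (N : ℕ) (s₀ : E) :
    ∃ C δ : ℝ, 0 ≤ C ∧ 0 < δ ∧ ∀ ρ s, 0 ≤ ρ → ρ < δ → dist s s₀ < δ →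
      ‖G (ρ, s)‖ ≤ C * ρ ^ N := by
  induction N generalizing G with
  | zero =>
    have hc := hG.1.continuous.norm.continuousAt (x := ((0 : ℝ), s₀))
    have h0 : ‖G (0, s₀)‖ = 0 := by simpa using hG.2 0 s₀
    have := hc.eventually (gt_mem_nhds (show ‖G (0, s₀)‖ < 1 by rw [h0]; norm_num))
    obtain ⟨δ, hδ, h⟩ := Metric.eventually_nhds_iff.1 this
    refine ⟨1, δ, zero_le_one, hδ, fun ρ s h0 h1 h2 => ?_⟩
    simpa using (h (y := (ρ, s)) (by simp [Prod.dist_eq, abs_of_nonneg h0, h1, h2])).le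
  | succ N ih =>
    obtain ⟨C, δ, hC, hδ, h⟩ := ih hG.of_T
    refine ⟨C, δ, hC, hδ, fun ρ s h0 h1 h2 => ?_⟩
    have key := norm_image_sub_le_of_norm_deriv_le_segment' (f := fun r : ℝ => G (r, s))
      (f' := fun r => T G (r, s)) (a := 0) (b := ρ) (C := C * ρ ^ N)
      (fun x _ => (hasDerivAt_slice hG.1 x s).hasDerivWithinAt)
      (fun x hx => (h x s hx.1 (hx.2.trans h1) h2).trans
        (mul_le_mul_of_nonneg_left (pow_le_pow_left₀ hx.1 hx.2.le N) hC))
      ρ ⟨h0, le_rfl⟩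
    have hz : G (0, s) = 0 := hG.2 0 s
    simpa [hz, pow_succ, mul_assoc] using key

/-! ### The square-root substitution -/

/-- The function `(t, s) ↦ t ^ (-m/2) G(√t, s)` for `t > 0`, extended by zero to `t ≤ 0`. -/
noncomputable def W (m : ℕ) (G : ℝ × E → F) : ℝ × E → F := fun p =>
  if 0 < p.1 then ((√p.1)⁻¹ ^ m) • G (√p.1, p.2) else 0

/-- The function, valued in linear maps, with `fderiv ℝ (W m G) = W (m + 2) (W' m G)` for flat `G`:
`-(m/2) G dρ + (ρ/2) ∂_ρ G dρ + ρ ^ 2 d_s G`. -/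
noncomputable def W' (m : ℕ) (G : ℝ × E → F) : ℝ × E → (ℝ × E →L[ℝ] F) := fun p =>
  (-(m / 2 : ℝ)) • (ContinuousLinearMap.fst ℝ ℝ E).smulRight (G p) +
    (p.1 • ((1 / 2 : ℝ) • (fderiv ℝ G p).comp
        ((ContinuousLinearMap.inl ℝ ℝ E).comp (ContinuousLinearMap.fst ℝ ℝ E))) +
      p.1 • (p.1 • (fderiv ℝ G p).comp
        ((ContinuousLinearMap.inr ℝ ℝ E).comp (ContinuousLinearMap.snd ℝ ℝ E))))

lemma Flat.of_W' {G : ℝ × E → F} (hG : Flat G) (m : ℕ) : Flat (W' m G) := by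
  let L (A : ℝ × E →L[ℝ] ℝ × E) : (ℝ × E →L[ℝ] F) →L[ℝ] (ℝ × E →L[ℝ] F) :=
    (ContinuousLinearMap.compL ℝ (ℝ × E) (ℝ × E) F).flip A
  have h1 := hG.clm ((-(m / 2 : ℝ)) •
    ContinuousLinearMap.smulRightL ℝ (ℝ × E) F (ContinuousLinearMap.fst ℝ ℝ E))
  have h2 := (hG.of_fderiv.clm ((1 / 2 : ℝ) • L ((ContinuousLinearMap.inl ℝ ℝ E).comp
    (ContinuousLinearMap.fst ℝ ℝ E)))).rho
  have h3 := (hG.of_fderiv.clm (L ((ContinuousLinearMap.inr ℝ ℝ E).comp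
    (ContinuousLinearMap.snd ℝ ℝ E)))).rho.rho
  exact h1.add (h2.add h3)

lemma Flat.hasFDerivAt_W {G : ℝ × E → F} (hG : Flat G) (m : ℕ) (p : ℝ × E) :
    HasFDerivAt (W m G) (W (m + 2) (W' m G) p) p := by
  obtain ⟨t, s⟩ := p
  rcases lt_trichotomy t 0 with ht | rfl | ht
  · have h0 : W (m + 2) (W' m G) (t, s) = 0 := by simp [W, ht.le]
    rw [h0]
    refine (hasFDerivAt_const (0 : F) (t, s)).congr_of_eventuallyEq ?_
    filter_upwards [(continuous_fst.tendsto (t, s)).eventually (gt_mem_nhds ht)] with q hq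
    simp [W, hq.le]
  · have h0 : W (m + 2) (W' m G) (0, s) = 0 := by simp [W]
    rw [h0]
    -- With `G = O(ρ ^ (m + 4))` and `ρ = √t`, the function `W m G` is `O(t ^ 2)`.
    obtain ⟨C, δ, hC, hδ, h⟩ := hG.bound (m + 4) s
    refine Asymptotics.IsBigO.hasFDerivAt (n := 2) ?_ one_lt_two
    refine Asymptotics.IsBigO.of_bound C ?_
    have hδ2 : 0 < min δ (δ ^ 2) := by positivity
    filter_upwards [Metric.ball_mem_nhds ((0 : ℝ), s) hδ2] with q hq
    have hW0 : ‖(‖q - (0, s)‖ ^ 2)‖ = ‖q - (0, s)‖ ^ 2 := by simp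
    rw [hW0]
    by_cases hq0 : 0 < q.1
    · rw [Metric.mem_ball, Prod.dist_eq, max_lt_iff, lt_min_iff, lt_min_iff] at hq
      obtain ⟨⟨_, hq1⟩, hq2, _⟩ := hq
      simp only [Real.dist_eq, sub_zero, abs_of_pos hq0] at hq1
      have hr : 0 < √q.1 := Real.sqrt_pos.2 hq0
      have hsq : √q.1 ^ 2 = q.1 := Real.sq_sqrt hq0.le
      have hb := h (√q.1) q.2 hr.le ((Real.sqrt_lt' hδ).2 hq1) hq2
      have hn : q.1 ≤ ‖q - (0, s)‖ := by
        have := norm_fst_le (q - ((0 : ℝ), s))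
        simpa [abs_of_pos hq0] using this
      simp only [W, hq0, if_true, norm_smul, norm_pow, norm_inv, Real.norm_eq_abs, abs_of_pos hr]
      calc (√q.1)⁻¹ ^ m * ‖G (√q.1, q.2)‖
          ≤ (√q.1)⁻¹ ^ m * (C * √q.1 ^ (m + 4)) := by gcongr
        _ = C * (√q.1 ^ 2) ^ 2 := by rw [pow_add, inv_pow]; field_simp
        _ = C * q.1 ^ 2 := by rw [hsq]
        _ ≤ C * ‖q - (0, s)‖ ^ 2 := by gcongr
    · simp only [W, hq0, if_false, norm_zero]
      positivity
  · have hr : 0 < √t := Real.sqrt_pos.2 ht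
    have hev : W m G =ᶠ[𝓝 (t, s)] fun q => ((√q.1)⁻¹ ^ m) • G (√q.1, q.2) := by
      filter_upwards [(continuous_fst.tendsto (t, s)).eventually (lt_mem_nhds ht)] with q hq
      simp only [W, hq, if_true]
    refine HasFDerivAt.congr_of_eventuallyEq ?_ hev
    have hfst : HasFDerivAt (fun q : ℝ × E => q.1) (ContinuousLinearMap.fst ℝ ℝ E) (t, s) :=
      hasFDerivAt_fst
    have hsqrt : HasFDerivAt (fun q : ℝ × E => √q.1)
        ((1 / (2 * √t)) • ContinuousLinearMap.fst ℝ ℝ E) (t, s) :=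
      (Real.hasDerivAt_sqrt ht.ne').comp_hasFDerivAt (t, s) hfst
    have hpow : HasDerivAt (fun r : ℝ => r⁻¹ ^ m) (-(m : ℝ) * (√t)⁻¹ ^ (m + 1)) (√t) := by
      have := (hasDerivAt_inv hr.ne').fun_pow m
      refine this.congr_deriv ?_
      rcases m with _ | m
      · simp
      · rw [Nat.add_sub_cancel]
        simp only [inv_pow]
        push_cast
        field_simp
        ring
    have hc := hpow.comp_hasFDerivAt (t, s) hsqrt
    have hpair := hsqrt.prodMk (hasFDerivAt_snd (𝕜 := ℝ) (p := (t, s)))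
    have hGc := ((smooth_differentiable hG.1 (√t, s)).hasFDerivAt).comp (t, s) hpair
    refine (hc.smul hGc).congr_fderiv (ContinuousLinearMap.ext fun v => ?_)
    obtain ⟨a, b⟩ := v
    have hsplit (x : ℝ) (y : E) : fderiv ℝ G (√t, s) (x, y) =
        x • fderiv ℝ G (√t, s) (1, 0) + fderiv ℝ G (√t, s) (0, y) := by
      rw [← map_smul, ← map_add]; simp
    simp [W, W', ht]
    rw [hsplit _ b, hsplit a 0]
    have hz : fderiv ℝ G (√t, s) ((0 : ℝ), (0 : E)) = 0 := map_zero _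
    rw [hz]
    match_scalars <;> field_simp <;> ring

/-- Induction over all flat functions and all `m` at once; the codomain changes to a space of linear
maps at each step. -/
lemma Flat.contDiff_W_nat (k : ℕ) {F : Type} [NormedAddCommGroup F] [NormedSpace ℝ F]
    {G : ℝ × E → F} (hG : Flat G) (m : ℕ) : ContDiff ℝ k (W m G) := by
  induction k generalizing F m with
  | zero =>
    exact contDiff_zero.2
      (continuous_iff_continuousAt.2 fun p => (hG.hasFDerivAt_W m p).continuousAt)
  | succ k ih =>
    exact_mod_cast contDiff_succ_iff_hasFDerivAt.2 ⟨_, ih (hG.of_W' m) (m + 2), hG.hasFDerivAt_W m⟩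

/-- The square-root substitution takes flat functions to smooth functions, even after division by
a power of `√t`. -/
lemma Flat.contDiff_W {G : ℝ × E → F} (hG : Flat G) (m : ℕ) : ContDiff ℝ ∞ (W m G) :=
  contDiff_infty.2 fun k => hG.contDiff_W_nat k m

/-! ### Composition with `(ρ, s) ↦ (ρ ^ 2, s)` -/

lemma T_sq {h : ℝ × E → ℝ} (hh : ContDiff ℝ ∞ h) :
    T (fun p : ℝ × E => h (p.1 ^ 2, p.2)) =
      fun p => p.1 • ((2 : ℝ) • T h (p.1 ^ 2, p.2)) := by
  ext ⟨ρ, s⟩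
  have hs : ContDiff ℝ ∞ (fun p : ℝ × E => h (p.1 ^ 2, p.2)) := by fun_prop
  have h1 := hasDerivAt_slice hs ρ s
  have h2 := (hasDerivAt_slice hh (ρ ^ 2) s).comp ρ (hasDerivAt_pow 2 ρ)
  rw [h1.unique h2]
  simp
  ring

lemma T_iter_sq_succ {h : ℝ × E → ℝ} (hh : ContDiff ℝ ∞ h) (m : ℕ) (s : E) :
    (T^[m + 2] (fun p : ℝ × E => h (p.1 ^ 2, p.2))) (0, s) =
      2 * (m + 1) * (T^[m] (fun p : ℝ × E => T h (p.1 ^ 2, p.2))) (0, s) := by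
  have hT := smooth_T hh
  have h1 : ContDiff ℝ ∞ (fun p : ℝ × E => T h (p.1 ^ 2, p.2)) := by fun_prop
  have h2 : ContDiff ℝ ∞ (fun p : ℝ × E => (2 : ℝ) • T h (p.1 ^ 2, p.2)) := by fun_prop
  have e2 := T_iter_clm ((2 : ℝ) • ContinuousLinearMap.id ℝ ℝ) h1 m
  simp only [_root_.smul_apply, ContinuousLinearMap.id_apply] at e2
  rw [Function.iterate_succ_apply, T_sq hh, T_iter_rho h2, e2]
  simp
  ring

lemma T_iter_sq_odd {h : ℝ × E → ℝ} (hh : ContDiff ℝ ∞ h) (k : ℕ) (s : E) :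
    (T^[2 * k + 1] (fun p : ℝ × E => h (p.1 ^ 2, p.2))) (0, s) = 0 := by
  induction k generalizing h with
  | zero => simp [T_sq hh]
  | succ k ih =>
    rw [show 2 * (k + 1) + 1 = (2 * k + 1) + 2 by ring, T_iter_sq_succ hh, ih (smooth_T hh),
      mul_zero]

/-- The even `ρ`-derivatives of `h (ρ ^ 2, s)` at `ρ = 0` are universal nonzero multiples
(namely `(2 k)! / k!`) of the derivatives of `h`. -/
lemma T_iter_sq_even (k : ℕ) : ∃ c : ℝ, c ≠ 0 ∧ ∀ h : ℝ × E → ℝ, ContDiff ℝ ∞ h → ∀ s,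
    (T^[2 * k] (fun p : ℝ × E => h (p.1 ^ 2, p.2))) (0, s) = c * (T^[k] h) (0, s) := by
  induction k with
  | zero => exact ⟨1, one_ne_zero, fun h _ s => by simp⟩
  | succ k ih =>
    obtain ⟨c, hc, H⟩ := ih
    refine ⟨2 * ((2 * k : ℕ) + 1) * c, by positivity, fun h hh s => ?_⟩
    rw [show 2 * (k + 1) = 2 * k + 2 by ring, T_iter_sq_succ hh, H _ (smooth_T hh),
      Function.iterate_succ_apply]
    ring

/-! ### Borel's lemma with parameters -/

/-- Expresses `∂_ρ ^ m` through `iteratedFDeriv`, for which series can be differentiated termwise. -/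
lemma T_iter_eq_iteratedFDeriv {G : ℝ × E → F} (hG : ContDiff ℝ ∞ G) (m : ℕ) (p : ℝ × E) :
    (T^[m] G) p = iteratedFDeriv ℝ m G p (fun _ => (1, 0)) := by
  induction m generalizing p with
  | zero => simp
  | succ m ih =>
    have h1 : T^[m] G = fun p => iteratedFDeriv ℝ m G p (fun _ => (1, 0)) := funext ih
    have hd : DifferentiableAt ℝ (iteratedFDeriv ℝ m G) p :=
      (hG.differentiable_iteratedFDeriv (by exact_mod_cast WithTop.coe_lt_top m)) p
    rw [Function.iterate_succ_apply', h1, iteratedFDeriv_succ_apply_left]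
    have h2 := hd.hasFDerivAt.continuousMultilinear_apply_const (fun _ => ((1 : ℝ), (0 : E)))
    simp only [T, h2.fderiv]
    rfl

/-- The `k`-th term of Borel's series. Rescaling `d s * t ^ k / k!`, cut off near `t = 0`, makes its
derivatives of order less than `k` smaller than `2 ^ (-k)`; the compact support of `d` keeps every
further derivative bounded. -/
lemma borel_term (k : ℕ) {d : E → ℝ} (hd : ContDiff ℝ ∞ d) (hc : HasCompactSupport d) :
    ∃ g : ℝ × E → ℝ, ContDiff ℝ ∞ g ∧
      (∀ m s, (T^[m] g) (0, s) = if m = k then d s else 0) ∧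
      (∀ i < k, ∀ x, ‖iteratedFDeriv ℝ i g x‖ ≤ (1 / 2) ^ k) ∧
      (∀ i, ∃ B, ∀ x, ‖iteratedFDeriv ℝ i g x‖ ≤ B) := by
  let χ : ContDiffBump (0 : ℝ) := ⟨1, 2, one_pos, one_lt_two⟩
  have hχ : ContDiff ℝ ∞ χ := χ.contDiff
  -- The unscaled term; the final one is `g (t, s) = ε ^ k * P (t / ε, s)`, whose derivatives of
  -- order `i < k` are `O(ε ^ (k - i))`, hence `O(ε)`.
  let P : ℝ × E → ℝ := fun p => (k.factorial : ℝ)⁻¹ * d p.2 * (p.1 ^ k * χ p.1)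
  have hP : ContDiff ℝ ∞ P := by fun_prop
  have hPc : HasCompactSupport P := by
    refine HasCompactSupport.intro (χ.hasCompactSupport.isCompact.prod hc.isCompact) ?_
    rintro ⟨t, s⟩ hx
    rw [Set.mem_prod, not_and_or] at hx
    rcases hx with hx | hx
    · simp [P, image_eq_zero_of_notMem_tsupport hx]
    · simp [P, image_eq_zero_of_notMem_tsupport hx]
  have hb (i : ℕ) : ∃ B, ∀ x, ‖iteratedFDeriv ℝ i P x‖ ≤ B :=
    (hPc.iteratedFDeriv i).exists_bound_of_continuous
      (hP.continuous_iteratedFDeriv (by exact_mod_cast le_top))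
  choose B hB using hb
  have hB0 (i : ℕ) : 0 ≤ B i := (norm_nonneg _).trans (hB i 0)
  let M : ℝ := 1 + ∑ i ∈ Finset.range k, B i
  have hM1 : 1 ≤ M := le_add_of_nonneg_right (Finset.sum_nonneg fun i _ => hB0 i)
  have hM0 : 0 < M := zero_lt_one.trans_le hM1
  have hBM (i : ℕ) (hi : i < k) : B i ≤ M :=
    (Finset.single_le_sum (fun j _ => hB0 j) (Finset.mem_range.2 hi)).trans (by simp [M])
  let ε : ℝ := (1 / 2) ^ k / M
  have hε : 0 < ε := by positivity
  have hε1 : ε ≤ 1 := div_le_one_of_le₀ ((pow_le_one₀ (by norm_num) (by norm_num)).trans hM1) hM0.le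
  let L : ℝ × E →L[ℝ] ℝ × E :=
    (ε⁻¹ • ContinuousLinearMap.fst ℝ ℝ E).prod (ContinuousLinearMap.snd ℝ ℝ E)
  have hL : ‖L‖ ≤ ε⁻¹ := by
    refine L.opNorm_le_bound (by positivity) fun x => ?_
    have h1 : 1 ≤ ε⁻¹ := (one_le_inv₀ hε).2 hε1
    have e : L x = (ε⁻¹ * x.1, x.2) := rfl
    rw [e, Prod.norm_def]
    refine max_le ?_ ?_
    · rw [norm_mul, Real.norm_of_nonneg (by positivity : 0 ≤ ε⁻¹)]
      exact mul_le_mul_of_nonneg_left (norm_fst_le x) (by positivity)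
    · exact (norm_snd_le x).trans (le_mul_of_one_le_left (norm_nonneg _) h1)
  let g : ℝ × E → ℝ := ε ^ k • (P ∘ L)
  have hPL : ContDiff ℝ ∞ (P ∘ L) := hP.comp L.contDiff
  have hg : ContDiff ℝ ∞ g := (contDiff_const (c := ε ^ k)).smul hPL
  have key (i : ℕ) (x : ℝ × E) : ‖iteratedFDeriv ℝ i g x‖ ≤ ε ^ k * (B i * ε⁻¹ ^ i) := by
    have e1 : iteratedFDeriv ℝ i g x = ε ^ k • iteratedFDeriv ℝ i (P ∘ L) x :=
      iteratedFDeriv_const_smul_apply (hPL.of_le (by exact_mod_cast le_top)).contDiffAt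
    rw [e1, norm_smul, Real.norm_of_nonneg (by positivity : 0 ≤ ε ^ k),
      L.iteratedFDeriv_comp_right hP x (by exact_mod_cast le_top)]
    gcongr
    refine (ContinuousMultilinearMap.norm_compContinuousLinearMap_le _ _).trans ?_
    rw [Finset.prod_const, Finset.card_univ, Fintype.card_fin]
    exact mul_le_mul (hB i _) (pow_le_pow_left₀ (norm_nonneg _) hL i) (by positivity) (hB0 i)
  refine ⟨g, hg, fun m s => ?_, fun i hi x => ?_, fun i => ⟨_, key i⟩⟩
  · have h1 := congrFun (iteratedDeriv_slice hg m s) 0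
    rw [← h1]
    have h2 : (fun r : ℝ => g (r, s)) =ᶠ[𝓝 0] fun r => (k.factorial : ℝ)⁻¹ * d s * r ^ k := by
      filter_upwards [Metric.ball_mem_nhds (0 : ℝ) hε] with r hr
      have hr' : |r| < ε := by simpa using hr
      have h3 : χ (ε⁻¹ * r) = 1 := by
        refine χ.one_of_mem_closedBall ?_
        rw [mem_closedBall_zero_iff, Real.norm_eq_abs, abs_mul, abs_of_pos (inv_pos.2 hε),
          inv_mul_le_iff₀ hε]
        simpa [χ] using hr'.le
      have e : L (r, s) = (ε⁻¹ * r, s) := rfl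
      simp only [g, Pi.smul_apply, Function.comp_apply, e, P, h3, smul_eq_mul, mul_pow, inv_pow]
      field_simp
    rw [h2.iteratedDeriv_eq, iteratedDeriv_const_mul_field, iteratedDeriv_fun_pow_zero]
    split_ifs with hmk
    · subst hmk; field_simp
    · simp
  · refine (key i x).trans ?_
    obtain ⟨j, rfl⟩ := Nat.exists_eq_add_of_lt hi
    calc ε ^ (i + j + 1) * (B i * ε⁻¹ ^ i) = ε ^ j * ε * B i := by
          rw [inv_pow, pow_succ, pow_add]; field_simp
      _ ≤ 1 * ε * M := by
          gcongr
          · exact hB0 i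
          · exact pow_le_one₀ hε.le hε1
          · exact hBM i hi
      _ = _ := by simp only [ε]; field_simp

/-- **Borel's lemma** with parameters: compactly supported smooth functions `d k` are the
`t`-derivatives at `t = 0` of a smooth function of `(t, s)`. -/
lemma borel {d : ℕ → E → ℝ} (hd : ∀ k, ContDiff ℝ ∞ (d k)) (hc : ∀ k, HasCompactSupport (d k)) :
    ∃ h : ℝ × E → ℝ, ContDiff ℝ ∞ h ∧ ∀ k s, (T^[k] h) (0, s) = d k s := by
  choose g hg hT hsmall hbdd using fun k => borel_term k (hd k) (hc k)
  choose B hB using hbdd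
  -- Bound for the `i`-th derivative of the `k`-th term: geometric in `k` as soon as `k > i`.
  let v : ℕ → ℕ → ℝ := fun i k => if i < k then (1 / 2) ^ k else B k i
  have hv (i : ℕ) : Summable (v i) := by
    refine (summable_congr_cofinite ?_).2
      (summable_geometric_of_lt_one (by norm_num : (0 : ℝ) ≤ 1 / 2) (by norm_num))
    rw [Nat.cofinite_eq_atTop]
    filter_upwards [Filter.eventually_gt_atTop i] with k hk
    simp [v, hk]
  have hle (i k : ℕ) (x : ℝ × E) : ‖iteratedFDeriv ℝ i (g k) x‖ ≤ v i k := by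
    by_cases hik : i < k
    · simpa [v, hik] using hsmall k i hik x
    · simpa [v, hik] using hB k i x
  have hs : ContDiff ℝ ∞ (fun x => ∑' k, g k x) :=
    contDiff_tsum (N := ⊤) hg (fun i _ => hv i) fun i k x _ => hle i k x
  refine ⟨fun x => ∑' k, g k x, hs, fun m s => ?_⟩
  have hsum : Summable fun k => iteratedFDeriv ℝ m (g k) ((0 : ℝ), s) :=
    Summable.of_norm_bounded (hv m) fun k => hle m k _
  rw [T_iter_eq_iteratedFDeriv hs, iteratedFDeriv_tsum_apply (N := ⊤) hg (fun i _ => hv i)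
    (fun i k x _ => hle i k x) le_top]
  have h1 := ((ContinuousMultilinearMap.apply ℝ (fun _ : Fin m => ℝ × E) ℝ
    (fun _ => ((1 : ℝ), (0 : E)))).map_tsum hsum)
  simp only [ContinuousMultilinearMap.apply_apply] at h1
  rw [h1]
  simp_rw [← T_iter_eq_iteratedFDeriv (hg _), hT]
  simp_rw [eq_comm (a := m)]
  exact tsum_ite_eq m (fun k => d k s)

end Calculus

/-! ### Local solutions and gluing -/

/-- The desired `u` exists for `s` near any given `s₀`: localize `f` in `s` by a cutoff, match its
Taylor coefficients by Borel's lemma, and treat the flat remainder by `Flat.contDiff_W`. -/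
lemma local_solution {E : Type} [NormedAddCommGroup E] [NormedSpace ℝ E] [FiniteDimensional ℝ E]
    {f : ℝ × E → ℝ} (hf : ContDiff ℝ ∞ f) (hodd : ∀ s m, Even m → (T^[m] f) (0, s) = 0) (s₀ : E) :
    ∃ u : ℝ × E → ℝ, ContDiff ℝ ∞ u ∧ ∀ s ∈ Metric.ball s₀ 1, ∀ t, 0 ≤ t →
      f (√t, s) = √t * u (t, s) := by
  let χ : ContDiffBump s₀ := ⟨1, 2, one_pos, one_lt_two⟩
  have hχ : ContDiff ℝ ∞ χ := χ.contDiff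
  let f' : ℝ × E → ℝ := fun p => χ p.2 * f p
  have hf' : ContDiff ℝ ∞ f' := by fun_prop
  have hTf (m : ℕ) (s : E) : (T^[m] f') (0, s) = χ s * (T^[m] f) (0, s) := by
    have h1 := congrFun (iteratedDeriv_slice hf' m s) 0
    have h2 := congrFun (iteratedDeriv_slice hf m s) 0
    rw [← h1, ← h2]
    exact iteratedDeriv_const_mul_field (χ s) (fun r : ℝ => f (r, s))
  choose c hc0 hc using fun k => T_iter_sq_even (E := E) k
  obtain ⟨h, hh, hhT⟩ := borel
    (d := fun k s => χ s * ((T^[2 * k + 1] f) (0, s) / ((2 * k + 1) * c k)))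
    (fun k => hχ.mul (((smooth_T_iter hf _).comp (contDiff_const.prodMk contDiff_id)).div_const _))
    (fun k => χ.hasCompactSupport.mul_right)
  have hsq : ContDiff ℝ ∞ (fun p : ℝ × E => h (p.1 ^ 2, p.2)) := by fun_prop
  -- `T` commutes with negation, stated through the continuous linear map `-id`.
  have hneg := T_iter_clm (-ContinuousLinearMap.id ℝ ℝ) (smooth_rho hsq)
  -- The odd derivatives of `h` were chosen to match those of `f'`; the even ones vanish on
  -- both sides.
  have hflat : Flat (fun p : ℝ × E => f' p + -(p.1 • h (p.1 ^ 2, p.2))) := by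
    refine ⟨hf'.add (smooth_rho hsq).neg, fun m s => ?_⟩
    rw [T_iter_add hf' (smooth_rho hsq).neg]
    have hneg' := congrFun (hneg m) (0, s)
    simp only [_root_.neg_apply, ContinuousLinearMap.id_apply] at hneg'
    simp only [hneg', hTf]
    rcases m with _ | m
    · simpa using Or.inr (hodd s 0 (by simp))
    · simp only [T_iter_rho hsq]
      rcases Nat.even_or_odd' m with ⟨k, rfl | rfl⟩
      · have := hc0 k
        have h2 : (2 * (k : ℝ) + 1) ≠ 0 := by positivity
        simp only [hc k h hh s, hhT, smul_eq_mul, zero_mul, add_zero]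
        push_cast
        field_simp
        ring
      · rw [T_iter_sq_odd hh, hodd s _ (by simp [parity_simps])]
        simp
  refine ⟨fun p => h p + W 1 (fun p : ℝ × E => f' p + -(p.1 • h (p.1 ^ 2, p.2))) p,
    hh.add (hflat.contDiff_W 1), fun s hs t ht => ?_⟩
  have hχs : χ s = 1 := χ.one_of_mem_closedBall (Metric.ball_subset_closedBall hs)
  rcases ht.eq_or_lt with rfl | ht
  · simpa using hodd s 0 (by simp)
  · have hr := Real.sqrt_pos.2 ht
    simp only [W, ht, if_true, f', hχs, smul_eq_mul, Real.sq_sqrt ht.le]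
    field_simp
    ring

end OddExt

/-- A smooth function `f : ℝ × ℝⁿ → ℝ` whose even-order partial
derivatives in the first variable all vanish at `(0, s)` (for every `s`) can be
written as `f(ρ, s) = ρ · u(ρ², s)` for `ρ ≥ 0`, with `u` smooth. -/
theorem stmt_1 (n : ℕ) (hn : 1 ≤ n) (f : ℝ × (Fin n → ℝ) → ℝ)
    (hf : ContDiff ℝ (⊤ : ℕ∞) f)
    (hodd : ∀ (s : Fin n → ℝ) (m : ℕ), Even m →
      iteratedDeriv m (fun ρ : ℝ => f (ρ, s)) 0 = 0) :
    ∃ u : ℝ × (Fin n → ℝ) → ℝ, ContDiff ℝ (⊤ : ℕ∞) u ∧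
      ∀ ρ : ℝ, 0 ≤ ρ → ∀ s : Fin n → ℝ, f (ρ, s) = ρ * u (ρ ^ 2, s) := by
  have hodd' : ∀ s m, Even m → (OddExt.T^[m] f) (0, s) = 0 := fun s m hm => by
    simpa [OddExt.iteratedDeriv_slice hf] using hodd s m hm
  -- At each point the condition on `u` is a linear equation, hence convex, so a partition of unity
  -- glues the local solutions.
  obtain ⟨g, hg⟩ := exists_contMDiffMap_forall_mem_convex_of_local (n := (⊤ : ℕ∞))
    (modelWithCornersSelf ℝ (ℝ × (Fin n → ℝ)))
    (t := fun p : ℝ × (Fin n → ℝ) => {y : ℝ | 0 ≤ p.1 → f (√p.1, p.2) = √p.1 * y})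
    (fun p y hy z hz a b _ _ hab hp => by
      simp only [smul_eq_mul]
      linear_combination a * hy hp + b * hz hp - f (√p.1, p.2) * hab)
    (fun p => by
      obtain ⟨u, hu, hus⟩ := OddExt.local_solution hf hodd' p.2
      exact ⟨Prod.snd ⁻¹' Metric.ball p.2 1,
        continuous_snd.continuousAt.preimage_mem_nhds (Metric.ball_mem_nhds _ one_pos), u,
        hu.contMDiff.contMDiffOn, fun y hy hy0 => hus y.2 hy y.1 hy0⟩)
  refine ⟨g, g.contMDiff.contDiff, fun ρ hρ s => ?_⟩
  simpa [Real.sqrt_sq hρ] using hg (ρ ^ 2, s) (sq_nonneg ρ)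
end

section
/- Let N be a positive odd integer and let f : ℝ → ℝ be smooth (C^∞) such that f^{(m)}(0) = 0 for every odd integer m with 1 ≤ m < N. Then there exist smooth functions u, w : ℝ → ℝ such that f(ρ) = u(ρ²) + ρ^N · w(ρ²) for all ρ ≥ 0. -/
/-!
Write `b k` for the Taylor coefficients of `f` at `0`. By Borel's lemma
(`exists_contDiff_taylor`) there are smooth `u₀`, `w` whose Taylor coefficients at `0` are
`b (2 * k)` and `b (2 * k + N)` respectively. Since the odd coefficients of `f` of order below `N`
vanish, `h x = f x - u₀ (x ^ 2) - x ^ N * w (x ^ 2)` is `O(x ^ q)` at `0` for every `q`, hence all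
its derivatives vanish at `0` (`iteratedDeriv_eq_zero_of_isBigO`). For such a flat `h` the function
`t ↦ h (√t)`, extended by `0` to `t ≤ 0`, is smooth (`contDiff_flat_comp_sqrt`), so that
`u t = u₀ t + h (√t)` and `w` give the decomposition on the half-line.
-/

open Set Filter Topology Asymptotics

/-- Taylor's theorem at `0`, with remainder in big-O form. -/
lemma taylor_isBigO_zero {f : ℝ → ℝ} (hf : ContDiff ℝ (⊤ : ℕ∞) f) (n : ℕ) :
    (fun x => f x - ∑ k ∈ Finset.range n, iteratedDeriv k f 0 / k.factorial * x ^ k)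
      =O[𝓝 0] fun x => x ^ n := by
  have h := (taylor_isLittleO_univ (x₀ := 0) (n := n) (hf.of_le (by exact_mod_cast le_top))).isBigO
  have h2 : (fun x : ℝ => iteratedDeriv n f 0 / n.factorial * x ^ n) =O[𝓝 0] fun x => x ^ n :=
    (isBigO_refl _ _).const_mul_left _
  refine ((h.congr_right fun x => by rw [sub_zero]).add h2).congr_left fun x => ?_
  simp only [taylor_within_apply, iteratedDerivWithin_univ, sub_zero, smul_eq_mul,
    Finset.sum_range_succ]
  have : ∀ k : ℕ, ((k.factorial : ℝ))⁻¹ * x ^ k * iteratedDeriv k f 0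
      = iteratedDeriv k f 0 / k.factorial * x ^ k := fun k => by ring
  simp only [this]
  ring

/-- A smooth function vanishing to infinite order at `0` has all derivatives zero there. -/
lemma iteratedDeriv_eq_zero_of_isBigO {h : ℝ → ℝ} (hh : ContDiff ℝ (⊤ : ℕ∞) h)
    (hO : ∀ n : ℕ, h =O[𝓝 0] fun x => x ^ n) (k : ℕ) : iteratedDeriv k h 0 = 0 := by
  induction k using Nat.strong_induction_on with
  | _ k ih =>
    -- the Taylor polynomial of degree `k` reduces to its top term, which is `O(x ^ (k + 1))`
    have h1 := (hO (k + 1)).sub (taylor_isBigO_zero hh (k + 1))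
    have h2 : (fun x : ℝ => iteratedDeriv k h 0 / k.factorial * x ^ k) =O[𝓝 0]
        fun x => x ^ (k + 1) := by
      refine h1.congr_left fun x => ?_
      rw [Finset.sum_range_succ, Finset.sum_eq_zero fun j hj => by
        rw [ih j (Finset.mem_range.1 hj)]; simp]
      ring
    have h3 : (fun x : ℝ => x ^ (k + 1)) =o[𝓝 0] fun x : ℝ => x ^ k :=
      isLittleO_pow_pow k.lt_succ_self
    by_contra hne
    have hc : iteratedDeriv k h 0 / k.factorial ≠ 0 := by positivity
    have h4 : (fun x : ℝ => x ^ k) =o[𝓝 0] fun x : ℝ => x ^ k :=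
      (isLittleO_const_mul_left_iff hc).1 (h2.trans_isLittleO h3)
    have h5 : ∃ᶠ x in 𝓝[≠] (0 : ℝ), ‖x ^ k‖ ≠ 0 := by
      refine Eventually.frequently ?_
      filter_upwards [self_mem_nhdsWithin] with x hx
      exact norm_ne_zero_iff.2 (pow_ne_zero _ hx)
    exact isLittleO_irrefl' h5 (h4.mono nhdsWithin_le_nhds)

/-- **Borel's lemma**: every real sequence is the sequence of Taylor coefficients at `0` of a
smooth function. -/
lemma exists_contDiff_taylor (c : ℕ → ℝ) :
    ∃ u : ℝ → ℝ, ContDiff ℝ (⊤ : ℕ∞) u ∧ ∀ k, iteratedDeriv k u 0 / k.factorial = c k := by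
  let χ : ContDiffBump (0 : ℝ) := ⟨1, 2, by norm_num, by norm_num⟩
  let p : ℕ → ℝ → ℝ := fun k t => t ^ k * χ t
  have hp : ∀ k, ContDiff ℝ (⊤ : ℕ∞) (p k) := fun k => (contDiff_id.pow k).mul χ.contDiff
  have hb : ∀ k j : ℕ, ∃ M : ℝ, ∀ t, ‖iteratedFDeriv ℝ j (p k) t‖ ≤ M := fun k j =>
    (((χ.hasCompactSupport.mul_left).iteratedFDeriv j).exists_bound_of_continuous
      ((hp k).continuous_iteratedFDeriv (by exact_mod_cast le_top)))
  choose M hM using hb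
  have hM0 : ∀ k j, 0 ≤ M k j := fun k j => (norm_nonneg _).trans (hM k j 0)
  -- The `k`-th term is `c k * t ^ k` cut off at scale `(lam k)⁻¹`, with `lam k` so large that the
  -- derivatives of order `< k` are bounded by `2⁻ᵏ`.
  let lam : ℕ → ℝ := fun k => 1 + ∑ j ∈ Finset.range k, |c k| * M k j * 2 ^ k
  have hs0 : ∀ k j : ℕ, 0 ≤ |c k| * M k j * 2 ^ k := fun k j => by
    have := hM0 k j; positivity
  have hlam1 : ∀ k, 1 ≤ lam k := fun k =>
    le_add_of_nonneg_right (Finset.sum_nonneg fun j _ => hs0 k j)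
  have hlam0 : ∀ k, 0 < lam k := fun k => one_pos.trans_le (hlam1 k)
  have hlamj : ∀ k j : ℕ, j < k → |c k| * M k j * 2 ^ k ≤ lam k := fun k j hj =>
    (Finset.single_le_sum (f := fun j => |c k| * M k j * 2 ^ k) (fun j _ => hs0 k j)
      (Finset.mem_range.2 hj)).trans (le_add_of_nonneg_left zero_le_one)
  let T : ℕ → ℝ → ℝ := fun k t => c k * (lam k)⁻¹ ^ k * p k (lam k * t)
  have hT : ∀ k, ContDiff ℝ (⊤ : ℕ∞) (T k) := fun k =>
    contDiff_const.mul ((hp k).comp (contDiff_const.mul contDiff_id))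
  let v : ℕ → ℕ → ℝ := fun j k => |c k| * (lam k)⁻¹ ^ k * (lam k ^ j * M k j)
  have hTv : ∀ (j k : ℕ) (x : ℝ), (j : ℕ∞) ≤ (⊤ : ℕ∞) → ‖iteratedFDeriv ℝ j (T k) x‖ ≤ v j k := by
    intro j k x _
    have e : iteratedDeriv j (T k) x
        = c k * (lam k)⁻¹ ^ k * (lam k ^ j * iteratedDeriv j (p k) (lam k * x)) := by
      simp only [T]
      rw [iteratedDeriv_const_mul_field, iteratedDeriv_comp_const_mul
        ((hp k).of_le (by exact_mod_cast le_top))]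
    rw [norm_iteratedFDeriv_eq_norm_iteratedDeriv, e]
    have h1 := hM k j (lam k * x)
    rw [norm_iteratedFDeriv_eq_norm_iteratedDeriv] at h1
    simp only [norm_mul, norm_pow, norm_inv, Real.norm_eq_abs, abs_of_pos (hlam0 k), v] at h1 ⊢
    have := hlam0 k
    gcongr
  have hv : ∀ j : ℕ, (j : ℕ∞) ≤ (⊤ : ℕ∞) → Summable (v j) := by
    intro j _
    refine Summable.of_norm_bounded_eventually_nat summable_geometric_two ?_
    filter_upwards [eventually_gt_atTop j] with k hk
    have h0 := hlam0 k
    have hm := hM0 k j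
    have h1 : 0 ≤ v j k := by simp only [v]; positivity
    rw [Real.norm_of_nonneg h1]
    obtain ⟨d, rfl⟩ : ∃ d, k = j + d + 1 := ⟨k - j - 1, by omega⟩
    set k := j + d + 1
    have h2 : (lam k)⁻¹ ^ k * lam k ^ j = (lam k)⁻¹ ^ d * (lam k)⁻¹ := by
      have h4 : (lam k)⁻¹ ^ j * lam k ^ j = 1 := by
        rw [← mul_pow, inv_mul_cancel₀ h0.ne', one_pow]
      calc (lam k)⁻¹ ^ k * lam k ^ j = ((lam k)⁻¹ ^ j * lam k ^ j) * ((lam k)⁻¹ ^ d * (lam k)⁻¹) := by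
            rw [show (lam k)⁻¹ ^ k = (lam k)⁻¹ ^ j * (lam k)⁻¹ ^ d * (lam k)⁻¹ by
              rw [← pow_add, ← pow_succ]]
            ring
        _ = _ := by rw [h4, one_mul]
    have h3 : (lam k)⁻¹ ^ d ≤ 1 := pow_le_one₀ (by positivity) (inv_le_one_of_one_le₀ (hlam1 k))
    calc v j k = |c k| * M k j * ((lam k)⁻¹ ^ k * lam k ^ j) := by simp only [v]; ring
      _ = |c k| * M k j * ((lam k)⁻¹ ^ d * (lam k)⁻¹) := by rw [h2]
      _ ≤ |c k| * M k j * (1 * (lam k)⁻¹) := by gcongr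
      _ = (|c k| * M k j * 2 ^ k) * (lam k)⁻¹ * (1 / 2) ^ k := by
          rw [one_div, inv_pow]; field_simp
      _ ≤ lam k * (lam k)⁻¹ * (1 / 2) ^ k := by gcongr; exact hlamj k j hk
      _ = (1 / 2) ^ k := by rw [mul_inv_cancel₀ h0.ne', one_mul]
  refine ⟨fun t => ∑' k, T k t, contDiff_tsum hT hv hTv, fun j => ?_⟩
  have hT0 : ∀ k, iteratedDeriv j (T k) 0 = if k = j then c k * k.factorial else 0 := by
    intro k
    have he : T k =ᶠ[𝓝 0] fun t => c k * t ^ k := by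
      have h1 : ∀ᶠ t in 𝓝 (0 : ℝ), χ (lam k * t) = 1 := by
        have : Tendsto (fun t => lam k * t) (𝓝 0) (𝓝 0) := by
          simpa using (continuous_const_mul (lam k)).tendsto 0
        exact this.eventually χ.eventuallyEq_one
      filter_upwards [h1] with t ht
      have := (hlam0 k).ne'
      simp only [T, p, ht, mul_pow, inv_pow]
      field_simp
    rw [he.iteratedDeriv_eq, iteratedDeriv_const_mul_field, iteratedDeriv_fun_pow_zero]
    by_cases hk : k = j
    · subst hk; simp
    · simp [hk, Ne.symm hk]
  have e : ∀ k, k ≠ j → iteratedFDeriv ℝ j (T k) 0 = 0 := fun k hk => by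
    rw [← norm_eq_zero, norm_iteratedFDeriv_eq_norm_iteratedDeriv, hT0, if_neg hk, norm_zero]
  have e2 : iteratedFDeriv ℝ j (fun t => ∑' k, T k t) 0 = iteratedFDeriv ℝ j (T j) 0 :=
    (iteratedFDeriv_tsum_apply hT hv hTv le_top 0).trans (tsum_eq_single j e)
  have e3 := hT0 j
  rw [iteratedDeriv_eq_iteratedFDeriv, if_pos rfl] at e3
  rw [iteratedDeriv_eq_iteratedFDeriv, e2, e3]
  exact mul_div_cancel_right₀ _ (by positivity)

/-- If `h` is smooth and flat at `0` (all its derivatives vanish there), then each function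
`t ↦ h (√t) / √t ^ m` is `C^n` on all of `ℝ` for every finite `n`; for `t ≤ 0` its value is `0`,
because `√t = 0` and `h 0 = 0`. Allowing the denominators `√t ^ m` makes this class of functions
closed, up to linear combinations, under differentiation, which drives the induction on `n`. -/
lemma contDiff_flat_comp_sqrt (n : ℕ) : ∀ (h : ℝ → ℝ) (m : ℕ), ContDiff ℝ (⊤ : ℕ∞) h →
    (∀ k, iteratedDeriv k h 0 = 0) → ContDiff ℝ n (fun t => h √t / √t ^ m) := by
  have hcont : ∀ (h : ℝ → ℝ) (m : ℕ), ContDiff ℝ (⊤ : ℕ∞) h →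
      (∀ k, iteratedDeriv k h 0 = 0) → Continuous (fun t => h √t / √t ^ m) := by
    intro h m hh h0
    suffices hG : Continuous fun x => h x / x ^ m from hG.comp Real.continuous_sqrt
    refine continuous_iff_continuousAt.2 fun x => ?_
    by_cases hx : x = 0
    · subst hx
      have h00 : h 0 = 0 := by simpa using h0 0
      have hO := taylor_isBigO_zero hh (m + 1)
      simp only [h0, zero_div, zero_mul, Finset.sum_const_zero, sub_zero] at hO
      have h1 : (fun x => h x / x ^ m) =O[𝓝 0] fun x : ℝ => x := by
        obtain ⟨C, hC⟩ := hO.bound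
        refine IsBigO.of_bound C ?_
        filter_upwards [hC] with x hx
        rcases eq_or_ne x 0 with rfl | hx0
        · simp [h00]
        · have : 0 < ‖x‖ := norm_pos_iff.2 hx0
          rw [norm_div, norm_pow, div_le_iff₀ (by positivity)]
          rw [norm_pow] at hx
          exact hx.trans_eq (by ring)
      have h2 := h1.trans_tendsto tendsto_id
      simpa [ContinuousAt, h00] using h2
    · exact hh.continuous.continuousAt.div (by fun_prop) (pow_ne_zero _ hx)
  induction n with
  | zero =>
    intro h m hh h0
    rw [Nat.cast_zero, contDiff_zero]
    exact hcont h m hh h0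
  | succ n ih =>
    intro h m hh h0
    have h00 : h 0 = 0 := by simpa using h0 0
    have hh' : ContDiff ℝ (⊤ : ℕ∞) (deriv h) := (contDiff_infty_iff_deriv.1 hh).2
    have h0' : ∀ k, iteratedDeriv k (deriv h) 0 = 0 := fun k => by
      rw [← iteratedDeriv_succ']; exact h0 _
    let g : ℝ → ℝ := fun t =>
      1 / 2 * (deriv h √t / √t ^ (m + 1)) - m / 2 * (h √t / √t ^ (m + 2))
    have hg : ContDiff ℝ n g :=
      (contDiff_const.mul (ih _ _ hh' h0')).sub (contDiff_const.mul (ih _ _ hh h0))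
    have hd : ∀ t ≠ 0, HasDerivAt (fun t => h √t / √t ^ m) (g t) t := by
      intro t ht
      rcases ht.lt_or_gt with ht | ht
      · have e : (fun t => h √t / √t ^ m) =ᶠ[𝓝 t] fun _ => 0 := by
          filter_upwards [eventually_lt_nhds ht] with s hs
          simp [Real.sqrt_eq_zero_of_nonpos hs.le, h00]
        have : g t = 0 := by simp [g, Real.sqrt_eq_zero_of_nonpos ht.le, h00]
        rw [this]
        exact (hasDerivAt_const t (0 : ℝ)).congr_of_eventuallyEq e
      · have hs := Real.sqrt_pos.2 ht
        have h1 := Real.hasDerivAt_sqrt ht.ne'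
        have h2 := ((contDiff_infty_iff_deriv.1 hh).1 √t).hasDerivAt.comp t h1
        refine (h2.div (h1.pow m) (pow_ne_zero _ hs.ne')).congr_deriv ?_
        simp only [g, Function.comp, Pi.pow_apply]
        rcases m with _ | m
        · simp; field_simp
        · simp only [Nat.add_sub_cancel, pow_succ]
          field_simp
    -- at `t = 0` differentiability follows from continuity of the function and of `g`
    have hd' : ∀ t, HasDerivAt (fun t => h √t / √t ^ m) (g t) t :=
      hasDerivAt_of_hasDerivAt_of_ne' hd (hcont h m hh h0).continuousAt hg.continuous.continuousAt
    push_cast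
    rw [contDiff_succ_iff_deriv]
    refine ⟨fun t => (hd' t).differentiableAt, by simp, ?_⟩
    rwa [funext fun t => (hd' t).deriv]

theorem stmt_2 (N : ℕ) (hN : Odd N) (hNpos : 0 < N)
    (f : ℝ → ℝ) (hf : ContDiff ℝ (⊤ : ℕ∞) f)
    (hodd : ∀ m : ℕ, Odd m → 1 ≤ m → m < N → iteratedDeriv m f 0 = 0) :
    ∃ u w : ℝ → ℝ, ContDiff ℝ (⊤ : ℕ∞) u ∧ ContDiff ℝ (⊤ : ℕ∞) w ∧
      ∀ ρ : ℝ, 0 ≤ ρ → f ρ = u (ρ ^ 2) + ρ ^ N * w (ρ ^ 2) := by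
  obtain ⟨p, rfl⟩ := hN
  let b : ℕ → ℝ := fun k => iteratedDeriv k f 0 / k.factorial
  obtain ⟨u, hu, hub⟩ := exists_contDiff_taylor fun k => b (2 * k)
  obtain ⟨w, hw, hwb⟩ := exists_contDiff_taylor fun k => b (2 * k + (2 * p + 1))
  let h : ℝ → ℝ := fun x => f x - u (x ^ 2) - x ^ (2 * p + 1) * w (x ^ 2)
  have hh : ContDiff ℝ (⊤ : ℕ∞) h := by
    have h2 : ContDiff ℝ (⊤ : ℕ∞) fun x : ℝ => x ^ 2 := contDiff_id.pow 2
    exact (hf.sub (hu.comp h2)).sub ((contDiff_id.pow _).mul (hw.comp h2))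
  have hsq : Tendsto (fun x : ℝ => x ^ 2) (𝓝 0) (𝓝 0) := by
    simpa using (continuous_pow 2).tendsto (0 : ℝ)
  have hpow : ∀ {a q : ℕ}, q ≤ a → (fun x : ℝ => x ^ a) =O[𝓝 0] fun x => x ^ q := by
    intro a q haq
    rcases haq.eq_or_lt with rfl | hlt
    · exact isBigO_refl _ _
    · exact (isLittleO_pow_pow hlt).isBigO
  have hO : ∀ q : ℕ, h =O[𝓝 0] fun x => x ^ q := by
    intro q
    have hfO := (taylor_isBigO_zero hf (2 * (p + q))).trans (hpow (q := q) (by omega))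
    have huO := (((taylor_isBigO_zero hu (p + q)).comp_tendsto hsq).congr_right
      fun x => (pow_mul x 2 (p + q)).symm).trans (hpow (q := q) (by omega))
    have hwO := ((isBigO_refl (fun x : ℝ => x ^ (2 * p + 1)) (𝓝 0)).mul
      ((taylor_isBigO_zero hw q).comp_tendsto hsq)).congr_right
      (g₂ := fun x => x ^ (2 * p + 1 + 2 * q))
      (fun x => by simp only [Function.comp]; ring) |>.trans (hpow (q := q) (by omega))
    refine ((hfO.sub huO).sub hwO).congr_left fun x => ?_
    -- the Taylor polynomials cancel: split that of `f` into even and odd powers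
    have key : ∑ k ∈ Finset.range (2 * (p + q)), b k * x ^ k
        = ∑ k ∈ Finset.range (p + q), b (2 * k) * (x ^ 2) ^ k
          + x ^ (2 * p + 1) * ∑ k ∈ Finset.range q, b (2 * k + (2 * p + 1)) * (x ^ 2) ^ k := by
      have e1 : ∀ n, ∑ k ∈ Finset.range (2 * n), b k * x ^ k
          = ∑ k ∈ Finset.range n, b (2 * k) * (x ^ 2) ^ k
            + ∑ k ∈ Finset.range n, b (2 * k + 1) * x ^ (2 * k + 1) := by
        intro n
        induction n with
        | zero => simp
        | succ n ih =>
          rw [show 2 * (n + 1) = 2 * n + 1 + 1 by ring]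
          simp only [Finset.sum_range_succ, ih]
          ring
      have e2 : ∀ k ∈ Finset.range p, b (2 * k + 1) * x ^ (2 * k + 1) = 0 := fun k hk => by
        have := Finset.mem_range.1 hk
        simp only [b]
        rw [hodd (2 * k + 1) ⟨k, rfl⟩ (by omega) (by omega)]
        simp
      rw [e1, Finset.sum_range_add (fun k => b (2 * k + 1) * x ^ (2 * k + 1)) p q,
        Finset.sum_eq_zero e2, zero_add, Finset.mul_sum]
      congr 1
      refine Finset.sum_congr rfl fun k _ => ?_
      rw [show 2 * (p + k) + 1 = 2 * k + (2 * p + 1) by ring]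
      ring
    simp only [Function.comp, hub, hwb, h]
    simp only [b] at key ⊢
    linear_combination -key
  have hflat := iteratedDeriv_eq_zero_of_isBigO hh hO
  have hv : ContDiff ℝ (⊤ : ℕ∞) fun t => h √t :=
    contDiff_infty.2 fun n => by simpa using contDiff_flat_comp_sqrt n h 0 hh hflat
  refine ⟨fun t => u t + h √t, w, hu.add hv, hw, fun ρ hρ => ?_⟩
  simp only [Real.sqrt_sq hρ, h]
  ring
end

section
/- Let n ≥ 1 and let f : ℝ × ℝⁿ → ℝ and g : ℝ × ℝⁿ → ℝⁿ be smooth, with f odd in ρ and every component of g even in ρ. Then there exists a smooth map Ψ : ℝ × ℝⁿ → ℝ × ℝⁿ such that Ψ(ρ², s) = (f(ρ,s)², g(ρ,s)) for all ρ ≥ 0 and all s ∈ ℝⁿ. -/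
/-!
The components of `g` are even in `ρ`, and by Leibniz' rule so is `f ^ 2`. It therefore suffices to
prove Whitney's even function theorem with parameters, in a form that also provides the values for
`r < 0`: a smooth `F (ρ, s)` whose odd `ρ`-derivatives vanish on `ρ = 0` is of the form
`G (ρ ^ 2, s)` for `ρ ≥ 0`, with `G` smooth on the whole space (`exists_smooth_of_even`).

The function `F (|ρ|, s)` is smooth, because `F (ρ, s) - F (-ρ, s)` is flat on `ρ = 0` and stays
smooth when cut off on a half-space (`contDiff_comp_abs`). Localizing, `F` may thus be taken
compactly supported and invariant under `ρ ↦ -ρ`. Fourier inversion then gives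
`F (ρ, s) = ∫ cos (ρ ξ) exp (i s·η) F̂ (ξ, η)`. Let `c` be a smooth function on the line with
`c (x) = cos √x` for `x ≥ 0` and derivatives of at most polynomial growth
(`exists_temperate_cos_sqrt`). Then `G (r, s) = ∫ c (r ξ²) exp (i s·η) F̂ (ξ, η)` solves the problem;
it is smooth by differentiation under the integral sign, because `F̂` is a Schwartz function
(`contDiff_integral_kernel`). This single formula replaces both the study of `F (√r, s)` up to the
boundary and an extension operator across it.
-/

/-- A smooth function `F : ℝ × ℝⁿ → ℝ` is *odd in ρ* if all even-order partial
derivatives in the first variable vanish at every point `(0, s)`. -/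
def OddInRho (n : ℕ) (F : ℝ × (Fin n → ℝ) → ℝ) : Prop :=
  ∀ (s : Fin n → ℝ) (m : ℕ), Even m → iteratedDeriv m (fun ρ : ℝ => F (ρ, s)) 0 = 0

/-- A smooth function `F : ℝ × ℝⁿ → ℝ` is *even in ρ* if all odd-order partial
derivatives in the first variable vanish at every point `(0, s)`. -/
def EvenInRho (n : ℕ) (F : ℝ × (Fin n → ℝ) → ℝ) : Prop :=
  ∀ (s : Fin n → ℝ) (m : ℕ), Odd m → iteratedDeriv m (fun ρ : ℝ => F (ρ, s)) 0 = 0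

section

open MeasureTheory Filter Topology Set
open scoped ContDiff

/-! ### Smoothness of integrals with a linear parameter -/

lemma htg_fderiv {Y V : Type} [NormedAddCommGroup Y] [NormedSpace ℝ Y]
    [NormedAddCommGroup V] [NormedSpace ℝ V] {κ : Y → V} (h : κ.HasTemperateGrowth) :
    (fderiv ℝ κ).HasTemperateGrowth := by
  refine ⟨h.1.fderiv_right (by simp), fun k => ?_⟩
  obtain ⟨N, C, hC⟩ := h.2 (k + 1)
  exact ⟨N, C, fun x => by rw [norm_iteratedFDeriv_fderiv]; exact hC x⟩

/-- Integrals `x ↦ ∫ T_w (κ (L_w x)) dμ(w)`, with `κ` of temperate growth and `L_w`, `T_w` linear,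
are smooth as soon as all `(1 + ‖L_w‖) ^ N * ‖T_w‖` are integrable. The class of such integrals
is stable under differentiation: the derivative has kernel `fderiv ℝ κ` and the operators
`A ↦ T_w ∘ A ∘ L_w` in place of `T_w`. This is why the spaces `V`, `V'` vary in the induction. -/
lemma contDiff_integral_kernel {W X Y : Type}
    [NormedAddCommGroup W] [SecondCountableTopology W] [MeasurableSpace W]
    [BorelSpace W] (μ : Measure W)
    [NormedAddCommGroup X] [NormedSpace ℝ X] [NormedAddCommGroup Y] [NormedSpace ℝ Y]
    {L : W → X →L[ℝ] Y} (hL : Continuous L) (m : ℕ) :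
    ∀ {V V' : Type} [NormedAddCommGroup V] [NormedSpace ℝ V]
      [NormedAddCommGroup V'] [NormedSpace ℝ V']
      {κ : Y → V} (_ : κ.HasTemperateGrowth) {T : W → V →L[ℝ] V'} (_ : Continuous T)
      (_ : ∀ N : ℕ, Integrable (fun w => (1 + ‖L w‖) ^ N * ‖T w‖) μ),
      ContDiff ℝ m fun x => ∫ w, T w (κ (L w x)) ∂μ := by
  have key : ∀ {V V' : Type} [NormedAddCommGroup V] [NormedSpace ℝ V]
      [NormedAddCommGroup V'] [NormedSpace ℝ V']
      {κ : Y → V} (_ : κ.HasTemperateGrowth) {T : W → V →L[ℝ] V'} (_ : Continuous T)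
      (_ : ∀ N : ℕ, Integrable (fun w => (1 + ‖L w‖) ^ N * ‖T w‖) μ) (x₀ : X),
      HasFDerivAt (fun x => ∫ w, T w (κ (L w x)) ∂μ)
        (∫ w, ((ContinuousLinearMap.compL ℝ X V V' (T w)).comp
          ((ContinuousLinearMap.compL ℝ X Y V).flip (L w))) (fderiv ℝ κ (L w x₀)) ∂μ) x₀ := by
    intro V V' _ _ _ _ κ hκ T hT hTint x₀
    -- polynomial bounds on `κ` and `κ'`, uniform for `x` in the unit ball around `x₀`
    have bd : ∀ k : ℕ, ∃ (N : ℕ) (C : ℝ), 0 ≤ C ∧ ∀ x ∈ Metric.ball x₀ 1, ∀ w,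
        ‖iteratedFDeriv ℝ k κ (L w x)‖ ≤ C * (1 + ‖L w‖) ^ N := by
      intro k
      obtain ⟨N, C, hC⟩ := hκ.2 k
      refine ⟨N, |C| * (‖x₀‖ + 2) ^ N, by positivity, fun x hx w => (hC _).trans ?_⟩
      have hx' : ‖x‖ ≤ ‖x₀‖ + 1 := by
        have := norm_sub_norm_le x x₀
        rw [Metric.mem_ball, dist_eq_norm] at hx
        linarith
      have h1 : 1 + ‖L w x‖ ≤ (‖x₀‖ + 2) * (1 + ‖L w‖) := by
        have := (L w).le_opNorm x
        have : ‖L w‖ * ‖x‖ ≤ ‖L w‖ * (‖x₀‖ + 1) := by gcongr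
        nlinarith [norm_nonneg (L w), norm_nonneg x₀]
      calc C * (1 + ‖L w x‖) ^ N ≤ |C| * ((‖x₀‖ + 2) * (1 + ‖L w‖)) ^ N := by
            gcongr; exact le_abs_self C
        _ = _ := by rw [mul_pow]; ring
    obtain ⟨N₀, C₀, hC₀, hb₀⟩ := bd 0
    obtain ⟨N₁, C₁, hC₁, hb₁⟩ := bd 1
    have hκc : Continuous κ := hκ.1.continuous
    have hκd : Continuous (fderiv ℝ κ) := (htg_fderiv hκ).1.continuous
    have hLx : ∀ x, Continuous fun w => L w x := fun x => hL.clm_apply continuous_const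
    refine hasFDerivAt_integral_of_dominated_of_fderiv_le (𝕜 := ℝ)
      (s := Metric.ball x₀ 1)
      (F' := fun x w => ((ContinuousLinearMap.compL ℝ X V V' (T w)).comp
          ((ContinuousLinearMap.compL ℝ X Y V).flip (L w))) (fderiv ℝ κ (L w x)))
      (bound := fun w => C₁ * ((1 + ‖L w‖) ^ (N₁ + 1) * ‖T w‖))
      (Metric.ball_mem_nhds x₀ one_pos) ?_ ?_ ?_ ?_ ((hTint _).const_mul _) ?_
    · exact .of_forall fun x => (hT.clm_apply (hκc.comp (hLx x))).aestronglyMeasurable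
    · refine ((hTint N₀).const_mul C₀).mono'
        (hT.clm_apply (hκc.comp (hLx x₀))).aestronglyMeasurable (.of_forall fun w => ?_)
      have := hb₀ x₀ (Metric.mem_ball_self one_pos) w
      rw [norm_iteratedFDeriv_zero] at this
      calc _ ≤ ‖T w‖ * ‖κ (L w x₀)‖ := (T w).le_opNorm _
        _ ≤ ‖T w‖ * (C₀ * (1 + ‖L w‖) ^ N₀) := by gcongr
        _ = _ := by ring
    · have := secondCountableTopologyEither_of_left W (X →L[ℝ] V')
      refine Continuous.aestronglyMeasurable ?_
      have := hκd.comp (hLx x₀)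
      simp only [ContinuousLinearMap.comp_apply, ContinuousLinearMap.compL_apply,
        ContinuousLinearMap.flip_apply]
      exact hT.clm_comp (this.clm_comp hL)
    · refine .of_forall fun w x hx => ?_
      have := hb₁ x hx w
      rw [← norm_iteratedFDeriv_fderiv, norm_iteratedFDeriv_zero] at this
      simp only [ContinuousLinearMap.comp_apply, ContinuousLinearMap.compL_apply,
        ContinuousLinearMap.flip_apply]
      calc _ ≤ ‖T w‖ * (‖fderiv ℝ κ (L w x)‖ * ‖L w‖) :=
            (ContinuousLinearMap.opNorm_comp_le _ _).trans (by
              gcongr; exact ContinuousLinearMap.opNorm_comp_le _ _)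
        _ ≤ ‖T w‖ * (C₁ * (1 + ‖L w‖) ^ N₁ * (1 + ‖L w‖)) := by
            gcongr; linarith
        _ = _ := by ring
    · refine .of_forall fun w x _ => ?_
      exact (T w).hasFDerivAt.comp x
        (((hκ.1.differentiable (by simp)) _).hasFDerivAt.comp x (L w).hasFDerivAt)
  induction m with
  | zero =>
    intro V V' _ _ _ _ κ hκ T hT hTint
    exact contDiff_zero.2 (continuous_iff_continuousAt.2 fun x => (key hκ hT hTint x).continuousAt)
  | succ m ih =>
    intro V V' _ _ _ _ κ hκ T hT hTint
    rw [Nat.cast_succ, contDiff_succ_iff_fderiv]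
    refine ⟨fun x => (key hκ hT hTint x).differentiableAt, by simp, ?_⟩
    rw [funext fun x => (key hκ hT hTint x).fderiv]
    refine ih (htg_fderiv hκ)
      (((ContinuousLinearMap.compL ℝ X V V').continuous.comp hT).clm_comp
        ((ContinuousLinearMap.compL ℝ X Y V).flip.continuous.comp hL)) fun N => ?_
    refine (hTint (N + 1)).mono' (Continuous.aestronglyMeasurable ?_) (.of_forall fun w => ?_)
    · exact ((continuous_const.add hL.norm).pow N).mul
       (((ContinuousLinearMap.compL ℝ X V V').continuous.comp hT).clm_comp
        ((ContinuousLinearMap.compL ℝ X Y V).flip.continuous.comp hL)).norm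
    · rw [norm_mul, norm_norm, Real.norm_of_nonneg (by positivity)]
      calc _ ≤ (1 + ‖L w‖) ^ N * (‖T w‖ * ‖L w‖) := by
            gcongr
            refine ContinuousLinearMap.opNorm_le_bound _ (by positivity) fun A => ?_
            calc _ ≤ ‖T w‖ * (‖A‖ * ‖L w‖) :=
                (ContinuousLinearMap.opNorm_comp_le _ _).trans (by
                  gcongr; exact ContinuousLinearMap.opNorm_comp_le _ _)
              _ = _ := by ring
        _ ≤ (1 + ‖L w‖) ^ N * (‖T w‖ * (1 + ‖L w‖)) := by gcongr; linarith
        _ = _ := by ring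

/-! ### The function `cos √x` -/

/-- `cos √x` extends to a smooth function on the line: it is the entire power series
`∑ (-x)ᵏ / (2k)!`. -/
lemma exists_cos_sqrt_smooth : ∃ c : ℝ → ℝ, ContDiff ℝ ∞ c ∧ ∀ ρ, c (ρ ^ 2) = Real.cos ρ := by
  let a : ℕ → ℝ := fun k => (-1) ^ k / (2 * k).factorial
  have ha : ∀ k, a k ≠ 0 := fun k => by positivity
  have hrad : (FormalMultilinearSeries.ofScalars ℝ a).radius = ⊤ := by
    refine FormalMultilinearSeries.ofScalars_radius_eq_top_of_tendsto ℝ a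
      (.of_forall ha) ?_
    refine squeeze_zero (g := fun n : ℕ => 1 / ((n : ℝ) + 1)) (fun _ => by positivity) (fun n => ?_)
      tendsto_one_div_add_atTop_nhds_zero_nat
    simp only [a, norm_div, norm_pow, norm_neg, norm_one, one_pow, Nat.succ_eq_add_one]
    rw [show 2 * (n + 1) = 2 * n + 1 + 1 by ring, Nat.factorial_succ, Nat.factorial_succ]
    have : ((2 * n).factorial : ℝ) ≠ 0 := by positivity
    simp only [Real.norm_natCast]
    push_cast
    calc _ = 1 / ((2 * (n : ℝ) + 1 + 1) * (2 * n + 1)) := by field_simp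
      _ ≤ _ := one_div_le_one_div_of_le (by positivity) (by nlinarith [n.cast_nonneg (α := ℝ)])
  refine ⟨(FormalMultilinearSeries.ofScalars ℝ a).sum, ?_, fun ρ => ?_⟩
  · have h := (FormalMultilinearSeries.ofScalars ℝ a).hasFPowerSeriesOnBall (by rw [hrad]; simp)
    rw [hrad] at h
    have h2 := h.analyticOnNhd
    rw [Metric.eball_top] at h2
    exact contDiffOn_univ.1 (h2.contDiffOn uniqueDiffOn_univ)
  · have h1 := Real.hasSum_cos ρ
    have : (FormalMultilinearSeries.ofScalars ℝ a).sum (ρ ^ 2) = ∑' n, a n • (ρ ^ 2) ^ n :=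
      FormalMultilinearSeries.ofScalars_sum_eq a (ρ ^ 2)
    rw [this, ← h1.tsum_eq]
    refine tsum_congr fun n => ?_
    simp only [a, smul_eq_mul]
    rw [← pow_mul]; ring

/-- The function `c x = cos √x` satisfies `4 x c'' + 2 c' + c = 0`; this is the `k`-th derivative of
that equation. -/
lemma cos_sqrt_ode {c : ℝ → ℝ} (hc : ContDiff ℝ ∞ c) (hcos : ∀ ρ, c (ρ ^ 2) = Real.cos ρ) (k : ℕ) :
    ∀ x : ℝ, 0 < x → 4 * x * iteratedDeriv (k + 2) c x + (4 * k + 2) * iteratedDeriv (k + 1) c x +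
      iteratedDeriv k c x = 0 := by
  have hd : ∀ (m : ℕ) (x : ℝ), HasDerivAt (iteratedDeriv m c) (iteratedDeriv (m + 1) c x) x := by
    intro m x
    rw [iteratedDeriv_succ]
    exact ((hc.differentiable_iteratedDeriv m (by exact_mod_cast ENat.natCast_lt_top m)) x).hasDerivAt
  induction k with
  | zero =>
    intro x hx
    have hsq : ∀ ρ : ℝ, HasDerivAt (fun ρ : ℝ => ρ ^ 2) (2 * ρ) ρ := fun ρ => by
      simpa using hasDerivAt_pow 2 ρ
    have e1 : ∀ ρ : ℝ, iteratedDeriv 1 c (ρ ^ 2) * (2 * ρ) = - Real.sin ρ := by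
      intro ρ
      have := (hd 0 (ρ ^ 2)).comp ρ (hsq ρ)
      rw [iteratedDeriv_zero, show c ∘ (fun ρ : ℝ => ρ ^ 2) = Real.cos from funext hcos] at this
      exact this.unique (Real.hasDerivAt_cos ρ)
    have e2 : ∀ ρ : ℝ, iteratedDeriv 2 c (ρ ^ 2) * (2 * ρ) * (2 * ρ) +
        iteratedDeriv 1 c (ρ ^ 2) * 2 = - Real.cos ρ := by
      intro ρ
      have h1 := ((hd 1 (ρ ^ 2)).comp ρ (hsq ρ)).mul ((hasDerivAt_id ρ).const_mul 2)
      have h2 := (Real.hasDerivAt_sin ρ).neg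
      have : (iteratedDeriv 1 c ∘ fun ρ : ℝ => ρ ^ 2) * (fun ρ => 2 * id ρ) = - Real.sin :=
        funext e1
      rw [this] at h1
      have := h1.unique h2
      simpa using this
    have := e2 (√x)
    rw [Real.sq_sqrt hx.le, ← hcos, Real.sq_sqrt hx.le] at this
    have hs := Real.mul_self_sqrt hx.le
    simp only [iteratedDeriv_zero, zero_add, Nat.cast_zero, mul_zero]
    linear_combination this - 4 * iteratedDeriv 2 c x * hs
  | succ k ih =>
    intro x hx
    have h1 := (((hasDerivAt_id x).const_mul 4).mul (hd (k + 2) x)).add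
      ((hd (k + 1) x).const_mul (4 * k + 2 : ℝ)) |>.add (hd k x)
    have h2 : (((fun y : ℝ => 4 * id y) * iteratedDeriv (k + 2) c +
        fun y => (4 * k + 2 : ℝ) * iteratedDeriv (k + 1) c y) + iteratedDeriv k c)
        =ᶠ[𝓝 x] fun _ => 0 := by
      filter_upwards [lt_mem_nhds hx] with y hy using ih y hy
    have h3 := (h1.congr_of_eventuallyEq h2.symm).unique (hasDerivAt_const x (0 : ℝ))
    push_cast
    simp only [id] at h3
    linear_combination h3

/-- Each derivative of `cos √x` is bounded on `[1, ∞)`, since from order two on the equation expresses it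
through the two preceding ones. -/
lemma cos_sqrt_bdd {c : ℝ → ℝ} (hc : ContDiff ℝ ∞ c) (hcos : ∀ ρ, c (ρ ^ 2) = Real.cos ρ) (k : ℕ) :
    ∃ C, ∀ x : ℝ, 1 ≤ x → |iteratedDeriv k c x| ≤ C := by
  induction k using Nat.twoStepInduction with
  | zero =>
    refine ⟨1, fun x hx => ?_⟩
    rw [iteratedDeriv_zero, ← Real.sq_sqrt (by linarith : 0 ≤ x), hcos]
    exact Real.abs_cos_le_one _
  | one =>
    refine ⟨1, fun x hx => ?_⟩
    have hsq : HasDerivAt (fun ρ : ℝ => ρ ^ 2) (2 * √x) (√x) := by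
      simpa using hasDerivAt_pow 2 (√x)
    have h0 : 0 ≤ x := by linarith
    have := ((hc.differentiable (by simp) (√x ^ 2)).hasDerivAt).comp (√x) hsq
    rw [show c ∘ (fun ρ : ℝ => ρ ^ 2) = Real.cos from funext hcos, Real.sq_sqrt h0] at this
    have e := this.unique (Real.hasDerivAt_cos _)
    have h1 : 1 ≤ √x := Real.one_le_sqrt.2 hx
    rw [iteratedDeriv_one]
    have h2 : |deriv c x| * (2 * √x) ≤ 1 := by
      rw [← abs_of_nonneg (by positivity : 0 ≤ 2 * √x), ← abs_mul, e, abs_neg]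
      exact Real.abs_sin_le_one _
    nlinarith [abs_nonneg (deriv c x)]
  | more k h0 h1 =>
    obtain ⟨C0, h0⟩ := h0
    obtain ⟨C1, h1⟩ := h1
    refine ⟨(4 * k + 2) * C1 + C0, fun x hx => ?_⟩
    have e := cos_sqrt_ode hc hcos k x (by linarith)
    have h2 : |iteratedDeriv (k + 2) c x| * (4 * x) ≤ (4 * k + 2) * C1 + C0 := by
      rw [← abs_of_nonneg (by positivity : 0 ≤ 4 * x), ← abs_mul]
      rw [show iteratedDeriv (k + 2) c x * (4 * x) =
        -((4 * k + 2) * iteratedDeriv (k + 1) c x + iteratedDeriv k c x) by linear_combination e,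
        abs_neg]
      refine (abs_add_le _ _).trans (add_le_add ?_ (h0 x hx))
      rw [abs_mul, abs_of_nonneg (by positivity : (0:ℝ) ≤ 4 * k + 2)]
      gcongr
      exact h1 x hx
    nlinarith [abs_nonneg (iteratedDeriv (k + 2) c x)]

/-- On `(-∞, 0)` the entire function `cos √x` grows like `cosh √|x|`, so it is cut off there; only its
values on `[0, ∞)` matter. -/
lemma exists_temperate_cos_sqrt :
    ∃ c : ℝ → ℝ, c.HasTemperateGrowth ∧ ∀ ρ, c (ρ ^ 2) = Real.cos ρ := by
  obtain ⟨c, hc, hcos⟩ := exists_cos_sqrt_smooth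
  let χ : ℝ → ℝ := fun x => Real.smoothTransition (x + 1)
  have hχ : ContDiff ℝ ∞ χ := Real.smoothTransition.contDiff.comp (contDiff_id.add contDiff_const)
  have hχ1 : ∀ x, 0 ≤ x → χ x = 1 := fun x hx =>
    Real.smoothTransition.one_of_one_le (by linarith)
  have hχ0 : ∀ x, x ≤ -1 → χ x = 0 := fun x hx =>
    Real.smoothTransition.zero_of_nonpos (by linarith)
  have hsm : ContDiff ℝ ∞ fun x => χ x * c x := hχ.mul hc
  refine ⟨fun x => χ x * c x, ⟨hsm, fun k => ?_⟩, fun ρ => ?_⟩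
  · obtain ⟨C1, hC1⟩ := cos_sqrt_bdd hc hcos k
    obtain ⟨C2, hC2⟩ := (isCompact_Icc (a := (-2 : ℝ)) (b := 1)).exists_bound_of_continuousOn
      (hsm.continuous_iteratedDeriv k (by exact_mod_cast le_top)).continuousOn
    refine ⟨0, max 0 (max C1 C2), fun x => ?_⟩
    rw [norm_iteratedFDeriv_eq_norm_iteratedDeriv, pow_zero, mul_one]
    rcases lt_or_ge x (-2) with h | h
    · have : (fun x => χ x * c x) =ᶠ[𝓝 x] fun _ => 0 := by
        filter_upwards [gt_mem_nhds h] with y hy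
        rw [hχ0 y (by linarith), zero_mul]
      rw [this.iteratedDeriv_eq]
      simp [iteratedDeriv_fun_const_zero]
    rcases le_or_gt x 1 with h' | h'
    · exact (hC2 x ⟨h, h'⟩).trans (by simp)
    · have : (fun x => χ x * c x) =ᶠ[𝓝 x] c := by
        filter_upwards [lt_mem_nhds h'] with y hy
        rw [hχ1 y (by linarith), one_mul]
      rw [this.iteratedDeriv_eq]
      exact (hC1 x h'.le).trans (by simp)
  · simp only
    rw [hχ1 _ (sq_nonneg ρ), one_mul, hcos]

lemma htg_expI : (fun t : ℝ => Complex.exp (t * Complex.I)).HasTemperateGrowth := by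
  refine ⟨Complex.contDiff_exp.comp
    (Complex.ofRealCLM.contDiff.mul contDiff_const), fun k => ⟨0, 1, fun x => ?_⟩⟩
  have : ∀ k, iteratedDeriv k (fun t : ℝ => Complex.exp (t * Complex.I)) =
      fun t : ℝ => Complex.I ^ k * Complex.exp (t * Complex.I) := by
    intro k
    induction k with
    | zero => simp
    | succ k ih =>
      rw [iteratedDeriv_succ, ih]
      ext t
      have : HasDerivAt (fun t : ℝ => (t : ℂ) * Complex.I) (1 * Complex.I) t :=
        (Complex.ofRealCLM.hasDerivAt (x := t)).mul_const _
      rw [(this.cexp.const_mul (Complex.I ^ k)).deriv]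
      ring
  rw [norm_iteratedFDeriv_eq_norm_iteratedDeriv, this]
  simp

/-! ### Cutting off flat functions, and reflection -/

/-- Cutting off, on the half-space `ρ < 0`, a function which vanishes on `ρ = 0` together
with its derivative. -/
lemma hasFDerivAt_ite_zero {E V : Type} [NormedAddCommGroup E] [NormedSpace ℝ E]
    [NormedAddCommGroup V] [NormedSpace ℝ V] {H : ℝ × E → V} (hH : Differentiable ℝ H)
    (h0 : ∀ s, H (0, s) = 0) (h1 : ∀ s, fderiv ℝ H (0, s) = 0) (p : ℝ × E) :
    HasFDerivAt (fun p : ℝ × E => if 0 ≤ p.1 then H p else 0)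
      (if 0 ≤ p.1 then fderiv ℝ H p else 0) p := by
  rcases lt_trichotomy p.1 0 with h | h | h
  · rw [if_neg h.not_ge]
    refine (hasFDerivAt_const (0 : V) p).congr_of_eventuallyEq ?_
    filter_upwards [continuous_fst.continuousAt.eventually (gt_mem_nhds h)] with q hq
    exact if_neg (not_le.2 hq)
  · obtain ⟨a, s⟩ := p
    obtain rfl : a = 0 := h
    have := (hH (0, s)).hasFDerivAt
    rw [h1] at this
    simp only [le_refl, if_true, h1]
    rw [hasFDerivAt_iff_isLittleO] at this ⊢
    refine (Asymptotics.isBigO_of_le _ fun q => ?_).trans_isLittleO this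
    simp only [h0, sub_zero, zero_apply, le_refl, if_true]
    split_ifs <;> simp
  · rw [if_pos h.le]
    refine (hH p).hasFDerivAt.congr_of_eventuallyEq ?_
    filter_upwards [continuous_fst.continuousAt.eventually (lt_mem_nhds h)] with q hq
    exact if_pos (le_of_lt hq)

/-- A smooth function all of whose derivatives vanish on `ρ = 0` stays smooth when replaced by `0` on
`ρ < 0`: the derivative of the cut-off function is the cut-off of a flat function. -/
lemma contDiff_ite_of_flat {E : Type} [NormedAddCommGroup E] [NormedSpace ℝ E] (m : ℕ) :
    ∀ {V : Type} [NormedAddCommGroup V] [NormedSpace ℝ V] {H : ℝ × E → V}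
      (_ : ContDiff ℝ ∞ H) (_ : ∀ (k : ℕ) (s : E), iteratedFDeriv ℝ k H (0, s) = 0),
      ContDiff ℝ m fun p : ℝ × E => if 0 ≤ p.1 then H p else 0 := by
  have key : ∀ {V : Type} [NormedAddCommGroup V] [NormedSpace ℝ V] {H : ℝ × E → V}
      (_ : ContDiff ℝ ∞ H) (_ : ∀ (k : ℕ) (s : E), iteratedFDeriv ℝ k H (0, s) = 0) (p : ℝ × E),
      HasFDerivAt (fun p : ℝ × E => if 0 ≤ p.1 then H p else 0)
      (if 0 ≤ p.1 then fderiv ℝ H p else 0) p := by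
    intro V _ _ H hH h0 p
    refine hasFDerivAt_ite_zero (hH.differentiable (by simp)) (fun s => ?_) (fun s => ?_) p
    · rw [← norm_eq_zero, ← norm_iteratedFDeriv_zero (𝕜 := ℝ), h0, norm_zero]
    · rw [← norm_eq_zero, ← norm_iteratedFDeriv_zero (𝕜 := ℝ), norm_iteratedFDeriv_fderiv, h0,
        norm_zero]
  induction m with
  | zero =>
    intro V _ _ H hH h0
    exact contDiff_zero.2 (continuous_iff_continuousAt.2 fun x => (key hH h0 x).continuousAt)
  | succ m ih =>
    intro V _ _ H hH h0
    rw [Nat.cast_succ, contDiff_succ_iff_fderiv]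
    refine ⟨fun x => (key hH h0 x).differentiableAt, by simp, ?_⟩
    rw [funext fun x => (key hH h0 x).fderiv]
    refine ih (hH.fderiv_right (by simp)) fun k s => ?_
    rw [← norm_eq_zero, norm_iteratedFDeriv_fderiv, h0, norm_zero]

/-- The derivative `∂H/∂ρ` in the first variable. -/
noncomputable def pd {E V : Type} [NormedAddCommGroup E] [NormedSpace ℝ E]
    [NormedAddCommGroup V] [NormedSpace ℝ V] (H : ℝ × E → V) : ℝ × E → V :=
  fun p => fderiv ℝ H p (1, 0)

section
variable {E V : Type} [NormedAddCommGroup E] [NormedSpace ℝ E]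
    [NormedAddCommGroup V] [NormedSpace ℝ V]

lemma ContDiff.pd_iterate {H : ℝ × E → V} (hH : ContDiff ℝ ∞ H) (m : ℕ) :
    ContDiff ℝ ∞ (pd^[m] H) := by
  induction m with
  | zero => exact hH
  | succ m ih =>
    rw [Function.iterate_succ_apply']
    exact (ih.fderiv_right (by simp)).clm_apply contDiff_const

lemma pd_iterate_fderiv {H : ℝ × E → V} (hH : ContDiff ℝ ∞ H) (m : ℕ) :
    pd^[m] (fderiv ℝ H) = fderiv ℝ (pd^[m] H) := by
  induction m with
  | zero => rfl
  | succ m ih =>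
    rw [Function.iterate_succ_apply', Function.iterate_succ_apply', ih]
    set K := pd^[m] H with hKdef
    have hK : ContDiff ℝ ∞ K := ContDiff.pd_iterate hH m
    ext1 p
    have hd : DifferentiableAt ℝ (fderiv ℝ K) p :=
      (hK.fderiv_right (m := ∞) (by simp)).differentiable (by simp) p
    -- `∂_ρ` commutes with the total derivative, by symmetry of the second derivative
    have hs : IsSymmSndFDerivAt ℝ K p :=
      hK.contDiffAt.isSymmSndFDerivAt (by
        rw [minSmoothness_of_isRCLikeNormedField]; exact ENat.LEInfty.out)
    refine ContinuousLinearMap.ext fun v => ?_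
    unfold pd
    rw [fderiv_clm_apply hd (differentiableAt_const _)]
    simpa using hs (1, 0) v

lemma pd_iterate_eq_iteratedDeriv {H : ℝ × E → V} (hH : ContDiff ℝ ∞ H) (m : ℕ) (s : E) :
    (fun ρ => (pd^[m] H) (ρ, s)) = iteratedDeriv m fun ρ => H (ρ, s) := by
  induction m with
  | zero => simp
  | succ m ih =>
    rw [iteratedDeriv_succ, ← ih]
    ext ρ
    rw [Function.iterate_succ_apply']
    have h1 := ((ContDiff.pd_iterate hH m).differentiable (by simp) (ρ, s)).hasFDerivAt
    have h2 : HasDerivAt (fun ρ : ℝ => (ρ, s)) (1, 0) ρ :=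
      (hasDerivAt_id ρ).prodMk (hasDerivAt_const ρ s)
    exact (h1.comp_hasDerivAt ρ h2).deriv.symm
end

/-- If all pure `ρ`-derivatives vanish on `ρ = 0`, then so do all mixed derivatives. -/
lemma flat_of_pd {E : Type} [NormedAddCommGroup E] [NormedSpace ℝ E] (k : ℕ) :
    ∀ {V : Type} [NormedAddCommGroup V] [NormedSpace ℝ V] {H : ℝ × E → V}
      (_ : ContDiff ℝ ∞ H) (_ : ∀ (m : ℕ) (s : E), (pd^[m] H) (0, s) = 0) (s : E),
      iteratedFDeriv ℝ k H (0, s) = 0 := by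
  induction k with
  | zero =>
    intro V _ _ H hH h0 s
    rw [← norm_eq_zero, norm_iteratedFDeriv_zero]
    simpa using h0 0 s
  | succ k ih =>
    intro V _ _ H hH h0 s
    rw [← norm_eq_zero, ← norm_iteratedFDeriv_fderiv, norm_eq_zero]
    refine ih (hH.fderiv_right (by simp)) (fun m s => ?_) s
    rw [pd_iterate_fderiv hH]
    have h1 := ((ContDiff.pd_iterate hH m).differentiable (by simp) (0, s)).hasFDerivAt
    have hx : fderiv ℝ (pd^[m] H) (0, s) (1, 0) = 0 := by
      have := h0 (m + 1) s
      rwa [Function.iterate_succ_apply'] at this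
    have hy : (fderiv ℝ (pd^[m] H) (0, s)).comp (ContinuousLinearMap.inr ℝ ℝ E) = 0 := by
      have h2 : HasFDerivAt (fun s : E => ((0 : ℝ), s)) (ContinuousLinearMap.inr ℝ ℝ E) s :=
        (ContinuousLinearMap.inr ℝ ℝ E).hasFDerivAt
      have h3 := HasFDerivAt.comp s h1 h2
      have h4 : (pd^[m] H) ∘ (fun s : E => ((0 : ℝ), s)) = fun _ => 0 := funext fun s => h0 m s
      rw [h4] at h3
      exact h3.unique (hasFDerivAt_const 0 s)
    refine ContinuousLinearMap.ext fun ⟨v, w⟩ => ?_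
    have : ((v, w) : ℝ × E) = v • (1, 0) + ContinuousLinearMap.inr ℝ ℝ E w := by simp
    rw [this, map_add, map_smul, hx, ← ContinuousLinearMap.comp_apply, hy]
    simp

/-- A function even in `ρ` to infinite order at `ρ = 0` has a smooth even reflection `F (|ρ|, s)`:
this is `F (-ρ, s)` plus the cut-off to `ρ ≥ 0` of the flat function `F (ρ, s) - F (-ρ, s)`. -/
lemma contDiff_comp_abs {E : Type} [NormedAddCommGroup E] [NormedSpace ℝ E] {F : ℝ × E → ℝ}
    (hF : ContDiff ℝ ∞ F)
    (hev : ∀ (s : E) (m : ℕ), Odd m → iteratedDeriv m (fun ρ : ℝ => F (ρ, s)) 0 = 0) :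
    ContDiff ℝ ∞ fun p : ℝ × E => F (|p.1|, p.2) := by
  have hneg : ContDiff ℝ ∞ fun p : ℝ × E => F (-p.1, p.2) := by fun_prop
  have hH : ContDiff ℝ ∞ fun p : ℝ × E => F p - F (-p.1, p.2) := hF.sub hneg
  have hflat : ∀ (m : ℕ) (s : E),
      (pd^[m] fun p : ℝ × E => F p - F (-p.1, p.2)) (0, s) = 0 := by
    intro m s
    have hs : ContDiff ℝ ∞ fun ρ : ℝ => F (ρ, s) := by fun_prop
    have hs' : ContDiff ℝ ∞ fun ρ : ℝ => F (-ρ, s) := by fun_prop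
    have hm : (m : WithTop ℕ∞) ≤ ∞ := by exact_mod_cast le_top
    have := congrFun (pd_iterate_eq_iteratedDeriv hH m s) 0
    simp only at this
    rw [this]
    rw [iteratedDeriv_fun_sub (hs.contDiffAt.of_le hm) (hs'.contDiffAt.of_le hm),
      iteratedDeriv_comp_neg m (fun ρ => F (ρ, s)), neg_zero]
    rcases Nat.even_or_odd m with h | h
    · simp [h.neg_one_pow]
    · simp [hev s m h]
  have hcut : ContDiff ℝ ∞ fun p : ℝ × E => if 0 ≤ p.1 then F p - F (-p.1, p.2) else 0 :=
    contDiff_infty.2 fun m => contDiff_ite_of_flat m hH fun k s => flat_of_pd k hH hflat s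
  convert hneg.add hcut using 2 with p
  split_ifs with h
  · simp [abs_of_nonneg h]
  · simp [abs_of_neg (not_le.1 h)]

/-! ### The even function theorem -/

open scoped FourierTransform SchwartzMap RealInnerProductSpace in
/-- The even function theorem for a compactly supported function: with `F̂` the Fourier transform,
`F (ρ, s) = ∫ cos (ρ ξ) exp (i s·η) F̂ (ξ, η)`, and `cos (ρ ξ) = c (ρ² ξ²)` for a function `c` on the
line of temperate growth, so that `ρ²` can be replaced by a free variable `r` of either sign. -/
lemma exists_smooth_of_even_compact {E : Type} [NormedAddCommGroup E] [NormedSpace ℝ E]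
    [FiniteDimensional ℝ E] {F : ℝ × E → ℝ} (hF : ContDiff ℝ ∞ F) (hc : HasCompactSupport F)
    (hev : ∀ ρ s, F (-ρ, s) = F (ρ, s)) :
    ∃ G : ℝ × E → ℝ, ContDiff ℝ ∞ G ∧ ∀ ρ s, G (ρ ^ 2, s) = F (ρ, s) := by
  obtain ⟨c, hcT, hcos⟩ := exists_temperate_cos_sqrt
  -- a Euclidean model of `ℝ × E`, as needed for the Fourier transform
  let W := EuclideanSpace ℝ (Fin (Module.finrank ℝ (ℝ × E)))
  let A : W ≃L[ℝ] ℝ × E := ContinuousLinearEquiv.ofFinrankEq (by simp [W])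
  have hsupp : HasCompactSupport fun w => (F (A w) : ℂ) :=
    (hc.comp_homeomorph A.toHomeomorph).comp_left (g := fun x : ℝ => (x : ℂ)) (by simp)
  let Φ : 𝓢(W, ℂ) := hsupp.toSchwartzMap
    (Complex.ofRealCLM.contDiff.comp (hF.comp A.contDiff))
  let Φh : 𝓢(W, ℂ) := 𝓕 Φ
  let e : W := A.symm (1, 0)
  let B : ℝ × E →L[ℝ] W := (A.symm : ℝ × E →L[ℝ] W).comp
    ((ContinuousLinearMap.inr ℝ ℝ E).comp (ContinuousLinearMap.snd ℝ ℝ E))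
  -- Fourier inversion; the phase splits because `A.symm (ρ, s) = ρ • e + B (0, s)`
  have hinv : ∀ ρ s, (F (ρ, s) : ℂ) =
      ∫ w, Complex.exp (((2 * Real.pi * ⟪w, e⟫ * ρ + 2 * Real.pi * ⟪w, B (0, s)⟫ : ℝ) : ℂ)
        * Complex.I) * Φh w := by
    intro ρ s
    have h1 : 𝓕⁻ Φh = Φ := FourierTransform.fourierInv_fourier_eq Φ
    have h2 : Φ (A.symm (ρ, s)) = F (ρ, s) := by
      change ((F (A (A.symm (ρ, s))) : ℝ) : ℂ) = _
      rw [A.apply_symm_apply]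
    rw [← h2, ← h1, SchwartzMap.fourierInv_coe, Real.fourierInv_eq']
    have h3 : A.symm (ρ, s) = ρ • e + B (0, s) := by
      simp only [e, B, ← map_smul]
      simp [← map_add]
    refine integral_congr_ae (.of_forall fun w => ?_)
    simp only [h3, smul_eq_mul, inner_add_right, inner_smul_right]
    congr 4
    ring
  -- `L w (r, s) = (r ξ², phase of s)` with `ξ = q w`, the frequency dual to `ρ`
  let q : W →L[ℝ] ℝ := (2 * Real.pi) • (innerSL ℝ e)
  let P : ℝ × E →L[ℝ] ℝ × ℝ :=
    (ContinuousLinearMap.inl ℝ ℝ ℝ).comp (ContinuousLinearMap.fst ℝ ℝ E)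
  let Q : W →L[ℝ] (ℝ × E →L[ℝ] ℝ × ℝ) := (2 * Real.pi) •
    ((ContinuousLinearMap.compL ℝ (ℝ × E) ℝ (ℝ × ℝ)) (ContinuousLinearMap.inr ℝ ℝ ℝ)).comp
      (((ContinuousLinearMap.compL ℝ (ℝ × E) W ℝ).flip B).comp (innerSL ℝ))
  let L : W → (ℝ × E →L[ℝ] ℝ × ℝ) := fun w => (q w) ^ 2 • P + Q w
  have hL : Continuous L := by fun_prop
  let κ : ℝ × ℝ → ℂ := fun y => (c y.1 : ℂ) * Complex.exp (y.2 * Complex.I)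
  have hκ : κ.HasTemperateGrowth :=
    ((Complex.ofRealCLM.hasTemperateGrowth).comp
      (hcT.comp (ContinuousLinearMap.fst ℝ ℝ ℝ).hasTemperateGrowth)).mul
      (htg_expI.comp (ContinuousLinearMap.snd ℝ ℝ ℝ).hasTemperateGrowth)
  let T : W → ℂ →L[ℝ] ℂ := fun w => ContinuousLinearMap.mul ℝ ℂ (Φh w)
  have hT : Continuous T := (ContinuousLinearMap.mul ℝ ℂ).continuous.comp Φh.continuous
  have hTint : ∀ N : ℕ, Integrable fun w => (1 + ‖L w‖) ^ N * ‖T w‖ := by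
    intro N
    let K : ℝ := 1 + ‖q‖ ^ 2 * ‖P‖ + ‖Q‖
    have hLw : ∀ w, 1 + ‖L w‖ ≤ K * (1 + ‖w‖) ^ 2 := by
      intro w
      have h1 : ‖L w‖ ≤ (‖q‖ * ‖w‖) ^ 2 * ‖P‖ + ‖Q‖ * ‖w‖ := by
        refine (norm_add_le _ _).trans (add_le_add ?_ (Q.le_opNorm w))
        rw [norm_smul, norm_pow]
        gcongr
        exact q.le_opNorm w
      have h2 : (‖q‖ * ‖w‖) ^ 2 * ‖P‖ ≤ ‖q‖ ^ 2 * ‖P‖ * (1 + ‖w‖) ^ 2 := by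
        have : ‖w‖ ^ 2 ≤ (1 + ‖w‖) ^ 2 := by gcongr; linarith
        calc _ = ‖q‖ ^ 2 * ‖P‖ * ‖w‖ ^ 2 := by ring
          _ ≤ _ := by gcongr
      have h3 : ‖Q‖ * ‖w‖ ≤ ‖Q‖ * (1 + ‖w‖) ^ 2 := by
        gcongr; nlinarith [norm_nonneg w]
      have h4 : 1 ≤ (1 + ‖w‖) ^ 2 := by nlinarith [norm_nonneg w]
      simp only [K]; linarith
    have hb : Integrable fun w : W => (K ^ N * 2 ^ (2 * N - 1)) *
        (‖w‖ ^ 0 * ‖Φh w‖ + ‖w‖ ^ (2 * N) * ‖Φh w‖) :=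
      ((Φh.integrable_pow_mul volume 0).add (Φh.integrable_pow_mul volume (2 * N))).const_mul _
    refine hb.mono' (Continuous.aestronglyMeasurable
      (((continuous_const.add hL.norm).pow N).mul hT.norm)) (.of_forall fun w => ?_)
    have hK : 0 ≤ K := by positivity
    rw [Real.norm_of_nonneg (by positivity)]
    have hTw : ‖T w‖ ≤ ‖Φh w‖ := ContinuousLinearMap.opNorm_mul_apply_le ℝ ℂ _
    calc _ ≤ (K * (1 + ‖w‖) ^ 2) ^ N * ‖Φh w‖ := by gcongr; exact hLw w
      _ = K ^ N * (1 + ‖w‖) ^ (2 * N) * ‖Φh w‖ := by rw [mul_pow, pow_mul]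
      _ ≤ K ^ N * (2 ^ (2 * N - 1) * (1 ^ (2 * N) + ‖w‖ ^ (2 * N))) * ‖Φh w‖ := by
          gcongr; exact add_pow_le zero_le_one (norm_nonneg w) _
      _ = _ := by rw [one_pow]; ring
  refine ⟨fun p => (∫ w, T w (κ (L w p))).re, ?_, fun ρ s => ?_⟩
  · exact Complex.reCLM.contDiff.comp
      (contDiff_infty.2 fun m => contDiff_integral_kernel volume hL m hκ hT hTint)
  · have hi : ∀ θ : W → ℝ, Continuous θ →
        Integrable fun w => Complex.exp ((θ w : ℂ) * Complex.I) * Φh w := by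
      intro θ hθ
      refine Φh.integrable.norm.mono' (Continuous.aestronglyMeasurable ?_) (.of_forall fun w => ?_)
      · exact (Complex.continuous_exp.comp
          ((Complex.continuous_ofReal.comp hθ).mul continuous_const)).mul Φh.continuous
      · rw [norm_mul, Complex.norm_exp_ofReal_mul_I, one_mul]
    have h2 : (2 : ℂ) * F (ρ, s) = 2 * ∫ w, T w (κ (L w (ρ ^ 2, s))) := by
      calc (2 : ℂ) * F (ρ, s) = F (ρ, s) + F (-ρ, s) := by rw [hev]; ring
        _ = _ := by
          rw [hinv, hinv, ← integral_add (hi _ (by fun_prop)) (hi _ (by fun_prop)),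
            ← integral_const_mul]
          refine integral_congr_ae (.of_forall fun w => ?_)
          have hLv : L w (ρ ^ 2, s) =
              ((2 * Real.pi * ⟪w, e⟫ * ρ) ^ 2, 2 * Real.pi * ⟪w, B (0, s)⟫) := by
            have hB : B (ρ ^ 2, s) = B (0, s) := by simp [B]
            simp [L, P, Q, q, hB, real_inner_comm w e]
            ring
          simp only [T, κ, hLv, ContinuousLinearMap.mul_apply', hcos]
          rw [Complex.ofReal_cos, Complex.cos]
          push_cast
          simp only [add_mul, Complex.exp_add, mul_neg, neg_mul]
          ring
    have h3 := mul_left_cancel₀ two_ne_zero h2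
    change (∫ w, T w (κ (L w (ρ ^ 2, s)))).re = _
    rw [← h3, Complex.ofReal_re]

/-- Whitney's even function theorem with parameters. The condition on the value `G (r, s)` is void
for `r < 0` and fixes the value for `r ≥ 0`, so it is convex, and local solutions can be glued by a
partition of unity. Near a point with `r = 0`, a cutoff reduces to compact support; near the other
points `0` or `F (√r, s)` is a solution. -/
lemma exists_smooth_of_even {E : Type} [NormedAddCommGroup E] [NormedSpace ℝ E]
    [FiniteDimensional ℝ E] {F : ℝ × E → ℝ} (hF : ContDiff ℝ ∞ F)
    (hev : ∀ (s : E) (m : ℕ), Odd m → iteratedDeriv m (fun ρ : ℝ => F (ρ, s)) 0 = 0) :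
    ∃ G : ℝ × E → ℝ, ContDiff ℝ ∞ G ∧ ∀ ρ, 0 ≤ ρ → ∀ s, G (ρ ^ 2, s) = F (ρ, s) := by
  let t : ℝ × E → Set ℝ := fun p => {y | 0 ≤ p.1 → y = F (√p.1, p.2)}
  have ht : ∀ p, Convex ℝ (t p) := by
    intro p x hx y hy a b _ _ hab h
    rw [hx h, hy h, ← add_smul, hab, one_smul]
  obtain ⟨G, hG⟩ := exists_contMDiffMap_forall_mem_convex_of_local (n := (⊤ : ℕ∞))
    (modelWithCornersSelf ℝ (ℝ × E)) ht (by
    rintro ⟨r, s₀⟩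
    rcases lt_trichotomy r 0 with h | rfl | h
    · refine ⟨{p | p.1 < 0}, continuous_fst.continuousAt.eventually (gt_mem_nhds h), fun _ => 0,
        contMDiffOn_const, fun p hp hp' => absurd hp' (not_le.2 hp)⟩
    · let b₁ : ContDiffBump (0 : ℝ) := ⟨1, 2, one_pos, one_lt_two⟩
      let b₂ : ContDiffBump s₀ := ⟨1, 2, one_pos, one_lt_two⟩
      let K : ℝ × E → ℝ := fun p => (b₁ p.1 * b₂ p.2) * F (|p.1|, p.2)
      have hK : ContDiff ℝ ∞ K :=
        ((b₁.contDiff.comp contDiff_fst).mul (b₂.contDiff.comp contDiff_snd)).mul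
          (contDiff_comp_abs hF hev)
      have hKc : HasCompactSupport K := by
        have h12 : HasCompactSupport fun p : ℝ × E => b₁ p.1 * b₂ p.2 := by
          refine HasCompactSupport.intro (b₁.hasCompactSupport.isCompact.prod
            b₂.hasCompactSupport.isCompact) fun p hp => ?_
          by_contra hne
          exact hp ⟨subset_tsupport _ (left_ne_zero_of_mul hne),
            subset_tsupport _ (right_ne_zero_of_mul hne)⟩
        exact h12.mul_right
      obtain ⟨G, hG, hGK⟩ := exists_smooth_of_even_compact hK hKc fun ρ s => by
        simp only [K, abs_neg, b₁.neg]
      refine ⟨{p | p.1 < 1} ∩ {p | p.2 ∈ Metric.ball s₀ 1}, Filter.inter_mem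
        (continuous_fst.continuousAt.eventually (gt_mem_nhds one_pos))
        (continuous_snd.continuousAt.eventually (Metric.ball_mem_nhds s₀ one_pos)), G,
        hG.contMDiff.contMDiffOn, fun p hp h0 => ?_⟩
      have hs : √p.1 ≤ 1 := Real.sqrt_le_one.2 (le_of_lt hp.1)
      have := hGK (√p.1) p.2
      rw [Real.sq_sqrt h0] at this
      rw [this]
      simp only [K, abs_of_nonneg (Real.sqrt_nonneg _)]
      rw [b₁.one_of_mem_closedBall (by
          rw [mem_closedBall_zero_iff, Real.norm_of_nonneg (Real.sqrt_nonneg _)]; exact hs),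
        b₂.one_of_mem_closedBall (Metric.ball_subset_closedBall hp.2), one_mul, one_mul]
    · refine ⟨{p | 0 < p.1}, continuous_fst.continuousAt.eventually (lt_mem_nhds h),
        fun p => F (√p.1, p.2), ContDiffOn.contMDiffOn fun p hp => ?_, fun p _ _ => rfl⟩
      exact (hF.contDiffAt.comp p
        ((contDiffAt_fst.sqrt (ne_of_gt hp)).prodMk contDiffAt_snd)).contDiffWithinAt)
  refine ⟨G, G.contMDiff.contDiff, fun ρ hρ s => ?_⟩
  have := hG (ρ ^ 2, s) (sq_nonneg ρ)
  rwa [Real.sqrt_sq hρ] at this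

end

/-- If `f` is odd in ρ and every component of `g` is even in ρ
(both smooth), then there is a smooth map `Ψ` with `Ψ(ρ², s) = (f(ρ,s)², g(ρ,s))`
for all `ρ ≥ 0`: the conjugate `S ∘ φ ∘ S⁻¹` of the even map `φ = (f, g)` by the
squaring map `S(ρ,s) = (ρ², s)` extends smoothly. -/
theorem stmt_5 (n : ℕ) (hn : 1 ≤ n)
    (f : ℝ × (Fin n → ℝ) → ℝ) (g : ℝ × (Fin n → ℝ) → Fin n → ℝ)
    (hf : ContDiff ℝ (⊤ : ℕ∞) f) (hg : ContDiff ℝ (⊤ : ℕ∞) g)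
    (hfodd : OddInRho n f) (hgeven : ∀ j : Fin n, EvenInRho n fun p => g p j) :
    ∃ Ψ : ℝ × (Fin n → ℝ) → ℝ × (Fin n → ℝ), ContDiff ℝ (⊤ : ℕ∞) Ψ ∧
      ∀ ρ : ℝ, 0 ≤ ρ → ∀ s : Fin n → ℝ, Ψ (ρ ^ 2, s) = ((f (ρ, s)) ^ 2, g (ρ, s)) := by
  have key : ∀ F : ℝ × (Fin n → ℝ) → ℝ, ContDiff ℝ (⊤ : ℕ∞) F → EvenInRho n F →
      ∃ G : ℝ × (Fin n → ℝ) → ℝ, ContDiff ℝ (⊤ : ℕ∞) G ∧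
        ∀ ρ, 0 ≤ ρ → ∀ s, G (ρ ^ 2, s) = F (ρ, s) :=
    fun F hF hev => exists_smooth_of_even hF hev
  have hf2 : EvenInRho n fun p => f p ^ 2 := by
    intro s m hm
    have hs : ContDiff ℝ (⊤ : ℕ∞) fun ρ : ℝ => f (ρ, s) := by fun_prop
    have hs' : ContDiffAt ℝ m (fun ρ : ℝ => f (ρ, s)) 0 :=
      hs.contDiffAt.of_le (by exact_mod_cast le_top)
    simp only [sq]
    rw [iteratedDeriv_fun_mul hs' hs']
    refine Finset.sum_eq_zero fun i hi => ?_
    have hle : i ≤ m := by simpa [Nat.lt_succ_iff] using hi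
    -- `i + (m - i) = m` is odd, so one of the two orders is even
    rcases Nat.even_or_odd i with h | h
    · rw [hfodd s i h]; ring
    · rw [hfodd s (m - i) (Nat.Odd.sub_odd hm h)]; ring
  obtain ⟨G₀, hG₀, hG₀'⟩ := key _ (hf.pow 2) hf2
  choose G hG hG' using fun j => key (fun p => g p j) (contDiff_pi.1 hg j) (hgeven j)
  refine ⟨fun p => (G₀ p, fun j => G j p), hG₀.prodMk (contDiff_pi.2 hG), fun ρ hρ s => ?_⟩
  exact Prod.ext (hG₀' ρ hρ s) (funext fun j => hG' j ρ hρ s)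
end

section
/- Let n ≥ 1 and let N ≥ 5 be an odd integer; write k₀ = (N−1)/2 ∈ ℕ. Suppose Γ̂ᵏᵢⱼ : ℝ^{1+n} → ℝ (0 ≤ i,j,k ≤ n), symmetric in (i,j), are of the following form: Γ̂ᵏᵢⱼ = Aᵏᵢⱼ whenever k = 0, or i,j are both nonzero, or i = j = 0; and Γ̂^γ_{0β} = Γ̂^γ_{β0} = A^γ_{0β} + (z⁰)^{N/2−1} H(z⁰) B^γ_β(z) for 1 ≤ β, γ ≤ n; here all Aᵏᵢⱼ are of class C^{k₀}, all B^γ_β are smooth, and H is the Heaviside function (H(r) = 1 for r > 0, H(r) = 0 for r ≤ 0). Then for every (z₀, v₀) ∈ ℝ^{1+n} × ℝ^{1+n} there exist ε > 0, an open neighborhood W of (z₀, v₀), and a map φ = (z̃, ṽ) : (−ε, ε) × W → ℝ^{1+n} × ℝ^{1+n} of class C^{k₀} such that φ(0, z, v) = (z, v) and, for each k, ∂_t z̃ᵏ(t,z,v) = ṽᵏ(t,z,v) and ∂_t ṽᵏ(t,z,v) = −Σ_{i,j} Γ̂ᵏᵢⱼ(z̃(t,z,v)) ṽⁱ(t,z,v)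 ṽʲ(t,z,v). -/
/-!
The geodesic equation reads `z' = v`, `v' = -Q(z, v) - 2 h(z⁰) v⁰ L(z, v)`, where `Q` collects the
regular coefficients `A`, `L(z, v)` is `B(z)` applied to the tangential part of `v`, and
`h(r) = r₊^{N/2-1}` is not `C^{k₀}`, `k₀ = (N-1)/2`. Its primitive `f(r) = (2/N) r₊^{N/2}` is
`C^{k₀}`, and since `(z⁰)' = v⁰`, the singular factor `h(z⁰) v⁰` is the time derivative of `f(z⁰)`.
In the coordinates `Ψ(z, v) = (z, v + 2 (f(z⁰) - f(z₀⁰)) L(z, v))` the equation therefore becomes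
one with `C^{k₀}` right-hand side: the only occurrence of `h` left is in the product
`(f(z⁰) - f(z₀⁰)) h(z⁰)`, and this is `C^{k₀}` near `z₀⁰`, because `f h = (2/N) r₊^{N-1}` and
`f(z₀⁰) h` either vanishes (`z₀⁰ ≤ 0`) or is smooth near `z₀⁰` (`z₀⁰ > 0`). Subtracting the constant
`f(z₀⁰)` makes `DΨ` at the base point a shear, so that `Ψ` is a `C^{k₀}` local diffeomorphism, and
the flow in the new coordinates can be pulled back (`exists_flow_of_conj`,
`exists_flow_of_singular_term`).

What remains is that a `C^k` vector field `Y`, `k ≥ 1`, has a local flow which is jointly `C^k`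
(`exists_flow_of_contDiffAt`). After cutting `Y` off to have compact support, this is the implicit
function theorem in `C([0,1], E)` for the rescaled integral equation
`α(s) = x + t ∫₀ˢ Y(α(σ)) dσ`, whose solution `α` depends on `(t, x)` in a `C^k` way because
`α ↦ Y ∘ α` is a `C^k` map of `C([0,1], E)` (`contDiff_compOp`). The flow is `φ(t, x) = α(1)`;
uniqueness for small `t` gives `α(s) = φ(ts, x)` (`path_rescale`), hence
`φ(t, x) = x + ∫₀ᵗ Y(φ(u, x)) du`.
-/

open Set Filter Topology MeasureTheory

universe u

/-! ### The superposition operator on continuous paths -/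

/-- The superposition (Nemytskii) operator `α ↦ Y ∘ α` on continuous paths over `[0,1]`. -/
noncomputable def compOp {E F : Type*} [NormedAddCommGroup E] [NormedAddCommGroup F]
    (Y : E → F) (hY : Continuous Y) (α : C(unitInterval, E)) : C(unitInterval, F) :=
  (⟨Y, hY⟩ : C(E, F)).comp α

/-- The bounded bilinear map taking a path `T` of operators and a path `α` of vectors to the path
`s ↦ T(s) α(s)`. -/
noncomputable def pointwiseApply (E F : Type*) [NormedAddCommGroup E] [NormedSpace ℝ E]
    [NormedAddCommGroup F] [NormedSpace ℝ F] :
    C(unitInterval, E →L[ℝ] F) →L[ℝ] C(unitInterval, E) →L[ℝ] C(unitInterval, F) :=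
  LinearMap.mkContinuous₂
    (LinearMap.mk₂ ℝ (fun (T : C(unitInterval, E →L[ℝ] F)) (α : C(unitInterval, E)) =>
       (⟨fun s => T s (α s), by fun_prop⟩ : C(unitInterval, F)))
      (fun _ _ _ => by ext; simp) (fun _ _ _ => by ext; simp)
      (fun _ _ _ => by ext; simp) (fun _ _ _ => by ext; simp)) 1
    (fun T α => by
      rw [one_mul, ContinuousMap.norm_le _ (by positivity)]
      intro s
      exact (T s).le_of_opNorm_le_of_le (T.norm_coe_le_norm s) (α.norm_coe_le_norm s))

@[simp] lemma pointwiseApply_apply {E F : Type*} [NormedAddCommGroup E] [NormedSpace ℝ E]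
    [NormedAddCommGroup F] [NormedSpace ℝ F] (T : C(unitInterval, E →L[ℝ] F))
    (α : C(unitInterval, E)) (s : unitInterval) :
    pointwiseApply E F T α s = T s (α s) := rfl

lemma continuous_compOp {E F : Type*} [NormedAddCommGroup E] [NormedAddCommGroup F]
    (Y : E → F) (hY : Continuous Y) : Continuous (compOp Y hY) :=
  ContinuousMap.continuous_postcomp _

/-- The derivative of `α ↦ Y ∘ α` is pointwise application of `DY ∘ α`. The remainder is controlled
by the mean value inequality, uniformly in the parameter since `DY` is uniformly continuous. -/
lemma hasFDerivAt_compOp {E F : Type*} [NormedAddCommGroup E] [NormedSpace ℝ E]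
    [NormedAddCommGroup F] [NormedSpace ℝ F] (Y : E → F) (hY : ContDiff ℝ 1 Y)
    (hc : HasCompactSupport Y) (α : C(unitInterval, E)) :
    HasFDerivAt (compOp Y hY.continuous)
      (pointwiseApply E F (compOp (fderiv ℝ Y) (hY.continuous_fderiv one_ne_zero) α)) α := by
  rw [hasFDerivAt_iff_isLittleO, Asymptotics.isLittleO_iff]
  intro c hcpos
  have hu := (hc.fderiv ℝ).uniformContinuous_of_continuous (hY.continuous_fderiv one_ne_zero)
  obtain ⟨δ, hδ, hδ'⟩ := Metric.uniformContinuous_iff.1 hu c hcpos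
  filter_upwards [Metric.ball_mem_nhds α hδ] with β hβ
  rw [ContinuousMap.norm_le _ (by positivity)]
  intro s
  have hs : β s ∈ Metric.ball (α s) δ :=
    lt_of_le_of_lt (ContinuousMap.dist_apply_le_dist s) hβ
  have key := (convex_ball (α s) δ).norm_image_sub_le_of_norm_hasFDerivWithin_le'
    (f := Y) (f' := fderiv ℝ Y) (φ := fderiv ℝ Y (α s)) (C := c)
    (fun x _ => ((hY.differentiable one_ne_zero) x).hasFDerivAt.hasFDerivWithinAt)
    (fun x hx => by
      have := (hδ' hx).le
      rwa [dist_eq_norm] at this)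
    (Metric.mem_ball_self hδ) hs
  have hn : ‖β s - α s‖ ≤ ‖β - α‖ := (β - α).norm_coe_le_norm s
  exact key.trans (by gcongr)

/-- Superposition with a `C^k` map is `C^k`: its derivative is again built from a superposition
operator, that of `DY`, so one can induct on `k`. -/
lemma contDiff_compOp {E : Type u} [NormedAddCommGroup E] [NormedSpace ℝ E] (k : ℕ) :
    ∀ {F : Type u} [NormedAddCommGroup F] [NormedSpace ℝ F] (Y : E → F) (hY : ContDiff ℝ k Y),
      HasCompactSupport Y → ContDiff ℝ k (compOp Y hY.continuous) := by
  induction k with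
  | zero =>
    intro F _ _ Y hY _
    exact contDiff_zero.2 (continuous_compOp Y hY.continuous)
  | succ k ih =>
    intro F _ _ Y hY hc
    have h1 : ContDiff ℝ 1 Y := hY.of_le (by norm_cast; omega)
    have h2 : ContDiff ℝ k (fderiv ℝ Y) := hY.fderiv_right (by norm_cast)
    have h3 : ContDiff ℝ k (pointwiseApply E F) := ContinuousLinearMap.contDiff _
    push_cast
    rw [contDiff_succ_iff_hasFDerivAt]
    exact ⟨fun α => pointwiseApply E F (compOp (fderiv ℝ Y) h2.continuous α),
      h3.comp (ih _ h2 (hc.fderiv ℝ)),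
      fun α => hasFDerivAt_compOp Y h1 hc α⟩

/-! ### Smooth dependence on initial data -/

/-- The operator `α ↦ (s ↦ ∫₀ˢ α)`, written as `s ∫₀¹ α(su) du` so that the integrand stays defined on
`[0,1]` and rescaling of paths amounts to associativity of multiplication. -/
noncomputable def volterra (E : Type*) [NormedAddCommGroup E] [NormedSpace ℝ E] :
    C(unitInterval, E) →L[ℝ] C(unitInterval, E) :=
  LinearMap.mkContinuous
    { toFun := fun α => ⟨fun s => (s : ℝ) • ∫ u : unitInterval, α (s * u), by
        refine continuous_subtype_val.smul ?_
        have := continuous_parametric_integral_of_continuous (μ := volume) (s := univ)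
          (f := fun s u : unitInterval => α (s * u)) (by fun_prop) isCompact_univ
        simpa using this⟩
      map_add' := fun α β => by
        ext s
        have h : ∀ γ : C(unitInterval, E), Integrable (fun u => γ (s * u)) := fun γ =>
          Continuous.integrable_of_hasCompactSupport (by fun_prop)
            (HasCompactSupport.of_compactSpace _)
        simp [integral_add (h α) (h β)]
      map_smul' := fun c α => by
        ext s
        simp only [ContinuousMap.smul_apply, ContinuousMap.coe_mk, RingHom.id_apply, integral_smul]
        rw [smul_comm] } 1
    (fun α => by
      rw [one_mul, ContinuousMap.norm_le _ (by positivity)]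
      intro s
      have h1 : ‖∫ u : unitInterval, α (s * u)‖ ≤ ‖α‖ := by
        simpa using norm_integral_le_of_norm_le_const (μ := (volume : Measure unitInterval))
          (f := fun u => α (s * u)) (C := ‖α‖) (ae_of_all _ fun u => α.norm_coe_le_norm _)
      have h2 : ‖(s : ℝ)‖ ≤ 1 := by
        rw [Real.norm_of_nonneg s.2.1]; exact s.2.2
      simp only [LinearMap.coe_mk, AddHom.coe_mk, ContinuousMap.coe_mk, norm_smul]
      calc _ ≤ 1 * ‖α‖ := by gcongr
        _ = _ := one_mul _)

lemma volterra_apply {E : Type*} [NormedAddCommGroup E] [NormedSpace ℝ E]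
    (α : C(unitInterval, E)) (s : unitInterval) :
    volterra E α s = (s : ℝ) • ∫ u : unitInterval, α (s * u) := rfl

lemma norm_volterra_le {E : Type*} [NormedAddCommGroup E] [NormedSpace ℝ E]
    (α : C(unitInterval, E)) : ‖volterra E α‖ ≤ ‖α‖ := by
  simpa using (volterra E).le_of_opNorm_le (LinearMap.mkContinuous_norm_le _ zero_le_one _) α

lemma norm_compOp_sub_le {E F : Type*} [NormedAddCommGroup E] [NormedAddCommGroup F]
    {Y : E → F} (hY : Continuous Y) {K : NNReal} (hK : LipschitzWith K Y)
    (α β : C(unitInterval, E)) :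
    ‖compOp Y hY α - compOp Y hY β‖ ≤ K * ‖α - β‖ := by
  rw [ContinuousMap.norm_le _ (by positivity)]
  intro s
  have hn : ‖α s - β s‖ ≤ ‖α - β‖ := (α - β).norm_coe_le_norm s
  exact (hK.norm_sub_le _ _).trans (by gcongr)

/-- Implicit function theorem for `α = x + t ∫ Y ∘ α` at `t = 0`, where the partial derivative in the
path `α` is the identity. -/
lemma exists_path_family {E : Type u} [NormedAddCommGroup E] [NormedSpace ℝ E] [CompleteSpace E]
    (k : ℕ) (hk : k ≠ 0) (Y : E → E) (hY : ContDiff ℝ k Y) (hc : HasCompactSupport Y) (x₀ : E) :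
    ∃ ψ : ℝ × E → C(unitInterval, E), ContDiffAt ℝ k ψ (0, x₀) ∧
      ∀ᶠ p in 𝓝 ((0 : ℝ), x₀), ψ p = ContinuousLinearMap.const ℝ unitInterval p.2 +
        p.1 • volterra E (compOp Y hY.continuous (ψ p)) := by
  set c := ContinuousLinearMap.const ℝ unitInterval (M := E) with hcdef
  let G : (ℝ × E) × C(unitInterval, E) → C(unitInterval, E) := fun q =>
    q.2 - c q.1.2 - q.1.1 • volterra E (compOp Y hY.continuous q.2)
  have hG : ContDiff ℝ k G := by
    have h := contDiff_compOp k Y hY hc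
    have h2 : ContDiff ℝ k fun q : (ℝ × E) × C(unitInterval, E) =>
      compOp Y hY.continuous q.2 := h.comp contDiff_snd
    have h3 := (volterra E).contDiff.comp h2 (n := k)
    exact (contDiff_snd.sub (c.contDiff.comp (contDiff_snd.comp contDiff_fst))).sub
      ((contDiff_fst.comp contDiff_fst).smul h3)
  have hn : (k : WithTop ℕ∞) ≠ 0 := by exact_mod_cast hk
  let u : (ℝ × E) × C(unitInterval, E) := ((0, x₀), c x₀)
  have hGu : G u = 0 := by simp [G, u]
  have hcd : ContDiffAt ℝ k G u := hG.contDiffAt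
  have hinr : fderiv ℝ G u ∘L .inr ℝ (ℝ × E) C(unitInterval, E) = .id ℝ _ := by
    have h1 : HasFDerivAt G (fderiv ℝ G u) u := (hcd.differentiableAt hn).hasFDerivAt
    have h2 : HasFDerivAt (fun α : C(unitInterval, E) => ((0, x₀), α))
        (.inr ℝ (ℝ × E) C(unitInterval, E)) (c x₀) := hasFDerivAt_prodMk_right _ _
    have h3 := HasFDerivAt.comp (c x₀) (g := G) h1 h2
    have h4 : HasFDerivAt (fun α : C(unitInterval, E) => α - c x₀) (.id ℝ _) (c x₀) :=
      (hasFDerivAt_id _).sub_const _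
    refine h3.unique (h4.congr_of_eventuallyEq (Eventually.of_forall fun α => ?_))
    simp [G]
  have hinv : (fderiv ℝ G u ∘L .inr ℝ (ℝ × E) C(unitInterval, E)).IsInvertible := by
    rw [hinr]
    exact ⟨ContinuousLinearEquiv.refl ℝ _, rfl⟩
  refine ⟨hcd.implicitFunction hn hinv, hcd.contDiffAt_implicitFunction hn hinv, ?_⟩
  filter_upwards [hcd.eventually_apply_implicitFunction hn hinv] with p hp
  rw [hGu] at hp
  simp only [G] at hp
  rw [sub_sub, sub_eq_zero] at hp
  exact hp

/-- The restriction of the solution with time scale `t` to `[0, s]`, run at unit speed, solves the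
equation with time scale `ts`; for small `ts` that equation is a contraction, so this is the solution
`β`. -/
lemma path_rescale {E : Type*} [NormedAddCommGroup E] [NormedSpace ℝ E]
    {Y : E → E} (hY : Continuous Y) {K : NNReal} (hK : LipschitzWith K Y)
    {t : ℝ} {x : E} {s : unitInterval} (ht : |t * s| * K < 1) {α β : C(unitInterval, E)}
    (hα : α = ContinuousLinearMap.const ℝ unitInterval x + t • volterra E (compOp Y hY α))
    (hβ : β = ContinuousLinearMap.const ℝ unitInterval x + (t * s) • volterra E (compOp Y hY β)) :
    β 1 = α s := by
  let γ : C(unitInterval, E) := ⟨fun u => α (s * u), by fun_prop⟩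
  have hγ : γ = ContinuousLinearMap.const ℝ unitInterval x +
      (t * s) • volterra E (compOp Y hY γ) := by
    ext u
    have := DFunLike.congr_fun hα (s * u)
    simp only [ContinuousMap.add_apply, ContinuousMap.smul_apply, volterra_apply, γ, compOp,
      ContinuousMap.comp_apply, ContinuousMap.coe_mk] at this ⊢
    rw [this]
    simp [smul_smul, mul_assoc]
  have h : ‖γ - β‖ ≤ |t * s| * K * ‖γ - β‖ := by
    have e : γ - β = (t * s) • volterra E (compOp Y hY γ - compOp Y hY β) := by
      rw [map_sub, smul_sub]
      nth_rw 1 [hγ, hβ]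
      abel
    calc ‖γ - β‖ = |t * s| * ‖volterra E (compOp Y hY γ - compOp Y hY β)‖ := by
          nth_rw 1 [e]; rw [norm_smul, Real.norm_eq_abs]
      _ ≤ |t * s| * (K * ‖γ - β‖) := by
          gcongr
          exact (norm_volterra_le _).trans (norm_compOp_sub_le hY hK _ _)
      _ = _ := by ring
  have h0 : γ = β := by
    rw [← sub_eq_zero, ← norm_eq_zero]
    nlinarith [norm_nonneg (γ - β)]
  rw [← h0]
  simp [γ]

lemma integral_unitInterval {E : Type*} [NormedAddCommGroup E] [NormedSpace ℝ E] (f : ℝ → E) :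
    ∫ u : unitInterval, f u = ∫ u in (0 : ℝ)..1, f u := by
  rw [intervalIntegral.integral_of_le zero_le_one, ← integral_Icc_eq_integral_Ioc]
  exact integral_subtype measurableSet_Icc f

/-- A compactly supported `C^k` field has a jointly `C^k` local flow, namely the endpoint at `s = 1` of
the family of paths from `exists_path_family`. -/
lemma exists_flow_of_compactSupport {E : Type u} [NormedAddCommGroup E] [NormedSpace ℝ E]
    [CompleteSpace E] (k : ℕ) (hk : k ≠ 0) (Y : E → E) (hY : ContDiff ℝ k Y)
    (hc : HasCompactSupport Y) (x₀ : E) :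
    ∃ φ : ℝ × E → E, ContDiffAt ℝ k φ (0, x₀) ∧ (∀ᶠ w in 𝓝 x₀, φ (0, w) = w) ∧
      ∀ᶠ p in 𝓝 ((0 : ℝ), x₀), HasDerivAt (fun t => φ (t, p.2)) (Y (φ p)) p.1 := by
  obtain ⟨ψ, hψ, heq⟩ := exists_path_family k hk Y hY hc x₀
  have hn : (k : WithTop ℕ∞) ≠ 0 := by exact_mod_cast hk
  obtain ⟨K, hK⟩ := hY.lipschitzWith_of_hasCompactSupport hc hn
  let φ : ℝ × E → E := fun p => ψ p 1
  have hφ : ContDiffAt ℝ k φ (0, x₀) := by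
    have h : ContDiff ℝ k (ContinuousMap.evalCLM ℝ (1 : unitInterval) : C(unitInterval, E) →L[ℝ] E) :=
      ContinuousLinearMap.contDiff _
    exact h.contDiffAt.comp _ hψ
  have h0 : ∀ᶠ w in 𝓝 x₀, φ (0, w) = w := by
    have hcont : Tendsto (fun w : E => ((0 : ℝ), w)) (𝓝 x₀) (𝓝 (0, x₀)) :=
      (by fun_prop : Continuous fun w : E => ((0 : ℝ), w)).tendsto x₀
    filter_upwards [hcont.eventually heq] with w hw
    have := DFunLike.congr_fun hw 1
    simpa [φ] using this
  refine ⟨φ, hφ, h0, ?_⟩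
  have hcont : ∀ᶠ p in 𝓝 ((0 : ℝ), x₀), ContinuousAt φ p :=
    (hφ.eventually (by simp)).mono fun p hp => hp.continuousAt
  have hsmall : ∀ᶠ p in 𝓝 ((0 : ℝ), x₀), |p.1| * (K : ℝ) < 1 := by
    have : Continuous fun p : ℝ × E => |p.1| * (K : ℝ) := by fun_prop
    exact (this.tendsto _).eventually_lt_const (by simp)
  have hall := heq.and (hcont.and hsmall)
  rw [nhds_prod_eq] at hall ⊢
  obtain ⟨pa, hpa, pb, hpb, hab⟩ := eventually_prod_iff.1 hall
  obtain ⟨δ, hδ, hδ'⟩ := Metric.eventually_nhds_iff_ball.1 hpa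
  have hball : ∀ᶠ t in 𝓝 (0 : ℝ), t ∈ Metric.ball (0 : ℝ) δ := Metric.ball_mem_nhds _ hδ
  refine (hball.prod_mk hpb).mono ?_
  rintro ⟨t, x⟩ ⟨ht, hx⟩
  have H : ∀ τ ∈ Metric.ball (0 : ℝ) δ, _ := fun τ hτ => hab (hδ' τ hτ) hx
  have hcurve : ContinuousOn (fun τ => φ (τ, x)) (Metric.ball 0 δ) := fun τ hτ =>
    ((H τ hτ).2.1.comp (f := fun τ => (τ, x)) (by fun_prop)).continuousWithinAt
  have hint : ∀ τ ∈ Metric.ball (0 : ℝ) δ, φ (τ, x) = x + ∫ u in (0 : ℝ)..τ, Y (φ (u, x)) := by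
    intro τ hτ
    have e := DFunLike.congr_fun (H τ hτ).1 1
    simp only [ContinuousMap.add_apply, ContinuousMap.smul_apply, volterra_apply] at e
    have hs : ∀ s : unitInterval, compOp Y hY.continuous (ψ (τ, x)) (1 * s) =
        Y (φ (τ * s, x)) := by
      intro s
      have hle : |τ * s| ≤ |τ| := by
        rw [abs_mul, abs_of_nonneg s.2.1]
        exact mul_le_of_le_one_right (abs_nonneg _) s.2.2
      have hmem : τ * s ∈ Metric.ball (0 : ℝ) δ := by
        rw [mem_ball_zero_iff, Real.norm_eq_abs] at hτ ⊢
        exact hle.trans_lt hτ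
      have hr := path_rescale hY.continuous hK (H _ hmem).2.2 (H τ hτ).1 (H _ hmem).1
      simp only [compOp, ContinuousMap.comp_apply, ContinuousMap.coe_mk, one_mul, φ]
      rw [hr]
    simp only [hs] at e
    rw [integral_unitInterval (fun u => Y (φ (τ * u, x)))] at e
    have e2 := intervalIntegral.smul_integral_comp_mul_left (a := 0) (b := 1)
      (fun u => Y (φ (u, x))) τ
    simp only [mul_zero, mul_one] at e2
    rw [← e2]
    simpa [φ] using e
  have hYc : ContinuousOn (fun τ => Y (φ (τ, x))) (Metric.ball 0 δ) :=
    hY.continuous.comp_continuousOn hcurve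
  have hnhd : Metric.ball (0 : ℝ) δ ∈ 𝓝 t := Metric.isOpen_ball.mem_nhds ht
  have hd : HasDerivAt (fun τ => ∫ u in (0 : ℝ)..τ, Y (φ (u, x))) (Y (φ (t, x))) t := by
    refine intervalIntegral.integral_hasDerivAt_right ?_ ?_ (hYc.continuousAt hnhd)
    · refine (hYc.mono ?_).intervalIntegrable
      exact (convex_ball (0 : ℝ) δ).ordConnected.uIcc_subset (Metric.mem_ball_self hδ) ht
    · exact hYc.stronglyMeasurableAtFilter Metric.isOpen_ball t ht
  refine (hd.const_add x).congr_of_eventuallyEq ?_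
  filter_upwards [hnhd] with τ hτ using hint τ hτ

/-- A field which is `C^k` near `x₀` has a jointly `C^k` local flow near `(0, x₀)`. -/
lemma exists_flow_of_contDiffAt {E : Type u} [NormedAddCommGroup E] [NormedSpace ℝ E]
    [FiniteDimensional ℝ E] (k : ℕ) (hk : k ≠ 0) (Y : E → E) (x₀ : E) (hY : ContDiffAt ℝ k Y x₀) :
    ∃ φ : ℝ × E → E, ContDiffAt ℝ k φ (0, x₀) ∧ (∀ᶠ w in 𝓝 x₀, φ (0, w) = w) ∧
      ∀ᶠ p in 𝓝 ((0 : ℝ), x₀), HasDerivAt (fun t => φ (t, p.2)) (Y (φ p)) p.1 := by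
  have : CompleteSpace E := FiniteDimensional.complete ℝ E
  obtain ⟨r, hr, hr'⟩ := Metric.eventually_nhds_iff_ball.1 (hY.eventually (by simp))
  let b : ContDiffBump x₀ := ⟨r / 4, r / 2, by positivity, by linarith⟩
  let Y' : E → E := fun x => b x • Y x
  have hc : HasCompactSupport Y' := b.hasCompactSupport.smul_right
  have hY' : ContDiff ℝ k Y' := by
    rw [contDiff_iff_contDiffAt]
    intro x
    by_cases hx : x ∈ Metric.ball x₀ r
    · exact b.contDiffAt.smul (hr' x hx)
    · have hx' : x ∉ tsupport b := by
        rw [b.tsupport_eq]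
        intro h
        apply hx
        simp only [Metric.mem_closedBall, Metric.mem_ball, b] at h ⊢
        linarith
      have h0 : b =ᶠ[𝓝 x] 0 := notMem_tsupport_iff_eventuallyEq.1 hx'
      refine contDiffAt_const (c := (0 : E)) |>.congr_of_eventuallyEq ?_
      filter_upwards [h0] with y hy
      simp [Y', hy]
  obtain ⟨φ, h1, h2, h3⟩ := exists_flow_of_compactSupport k hk Y' hY' hc x₀
  refine ⟨φ, h1, h2, ?_⟩
  have hφ0 : φ (0, x₀) = x₀ := h2.self_of_nhds
  have ht : Tendsto φ (𝓝 (0, x₀)) (𝓝 x₀) := by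
    simpa only [ContinuousAt, hφ0] using h1.continuousAt
  filter_upwards [h3, ht.eventually b.eventuallyEq_one] with p hp hb
  simpa [Y', hb] using hp

/-! ### Straightening the singular term -/

/-- If a `C^k` change of coordinates `Ψ` turns the possibly less regular field `X` into a field
`G = DΨ · X` that is `C^k` (as a function of the old coordinates), then `X` has a `C^k` local flow. -/
lemma exists_flow_of_conj {E : Type u} [NormedAddCommGroup E] [NormedSpace ℝ E]
    [FiniteDimensional ℝ E] (k : ℕ) (hk : k ≠ 0) (X Ψ G : E → E) (x₀ : E)
    (hΨ : ContDiffAt ℝ k Ψ x₀) (Ψ' : E ≃L[ℝ] E) (hΨ' : HasFDerivAt Ψ (Ψ' : E →L[ℝ] E) x₀)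
    (hG : ContDiffAt ℝ k G x₀) (hGX : ∀ᶠ x in 𝓝 x₀, fderiv ℝ Ψ x (X x) = G x) :
    ∃ φ : ℝ × E → E, ContDiffAt ℝ k φ (0, x₀) ∧ (∀ᶠ w in 𝓝 x₀, φ (0, w) = w) ∧
      ∀ᶠ p in 𝓝 ((0 : ℝ), x₀), HasDerivAt (fun t => φ (t, p.2)) (X (φ p)) p.1 := by
  have : CompleteSpace E := FiniteDimensional.complete ℝ E
  have hn : (k : WithTop ℕ∞) ≠ 0 := by exact_mod_cast hk
  let g := hΨ.localInverse hΨ' hn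
  have hg : ContDiffAt ℝ k g (Ψ x₀) := hΨ.to_localInverse hΨ' hn
  have hgx : g (Ψ x₀) = x₀ := hΨ.localInverse_apply_image hΨ' hn
  have hleft : ∀ᶠ x in 𝓝 x₀, g (Ψ x) = x :=
    (hΨ.hasStrictFDerivAt' hΨ' hn).eventually_left_inverse
  have hright : ∀ᶠ y in 𝓝 (Ψ x₀), Ψ (g y) = y :=
    (hΨ.hasStrictFDerivAt' hΨ' hn).eventually_right_inverse
  have hgt : Tendsto g (𝓝 (Ψ x₀)) (𝓝 x₀) := by
    simpa only [ContinuousAt, hgx] using hg.continuousAt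
  obtain ⟨φ, h1, h2, h3⟩ := exists_flow_of_contDiffAt k hk (fun y => G (g y)) (Ψ x₀)
    (ContDiffAt.comp _ (by rwa [hgx]) hg)
  have hφ0 : φ (0, Ψ x₀) = Ψ x₀ := h2.self_of_nhds
  have hφt : Tendsto φ (𝓝 (0, Ψ x₀)) (𝓝 (Ψ x₀)) := by
    simpa only [ContinuousAt, hφ0] using h1.continuousAt
  have hP : ContDiffAt ℝ k (fun p : ℝ × E => (p.1, Ψ p.2)) (0, x₀) :=
    contDiffAt_fst.prodMk (ContDiffAt.comp _ (show ContDiffAt ℝ k Ψ (0, x₀).2 from hΨ)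
      contDiffAt_snd)
  have hPt : Tendsto (fun p : ℝ × E => (p.1, Ψ p.2)) (𝓝 (0, x₀)) (𝓝 (0, Ψ x₀)) :=
    hP.continuousAt
  refine ⟨fun p => g (φ (p.1, Ψ p.2)), ?_, ?_, ?_⟩
  · have h := ContDiffAt.comp (0, x₀) (g := φ) h1 hP
    exact ContDiffAt.comp (0, x₀) (g := g) (by simpa [hφ0] using hg) h
  · filter_upwards [hleft, hΨ.continuousAt.eventually h2] with w hw hw2
    simp only [hw2, hw]
  -- differentiating `g ∘ Ψ = id` shows that `Dg` carries `G = DΨ X` back to `X`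
  · have hback : ∀ᶠ x in 𝓝 x₀, fderiv ℝ g (Ψ x) (G x) = X x := by
      have hgd : ∀ᶠ x in 𝓝 x₀, ContDiffAt ℝ k g (Ψ x) :=
        hΨ.continuousAt.eventually (hg.eventually (by simp))
      filter_upwards [hleft.eventually_nhds, hΨ.eventually (by simp), hgd, hGX]
        with x hx hΨx hgx hGx
      have c := (hgx.differentiableAt hn).hasFDerivAt.comp x
        (hΨx.differentiableAt hn).hasFDerivAt
      have c2 := c.unique ((hasFDerivAt_id x).congr_of_eventuallyEq hx)
      rw [← hGx]
      exact DFunLike.congr_fun c2 (X x)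
    have hflow := hPt.eventually h3
    have hy : ∀ᶠ y in 𝓝 (Ψ x₀), ContDiffAt ℝ k g y ∧ Ψ (g y) = y ∧
        fderiv ℝ g (Ψ (g y)) (G (g y)) = X (g y) :=
      (hg.eventually (by simp)).and (hright.and (hgt.eventually hback))
    filter_upwards [hflow, hPt.eventually (hφt.eventually hy)] with p hp ⟨q1, q2, q3⟩
    have := (q1.differentiableAt hn).hasFDerivAt.comp_hasDerivAt p.1 hp
    rw [q2] at q3
    simp only [q3] at this
    exact this

/-- The integration by parts: with `h = f'`, the field
`(z, v) ↦ (v, -Q(z, v) - 2 h(π z) (π v) L(z, v))` has a `C^k` flow although `h` need not be `C^k`; it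
suffices that `f` and `(f - f(π z₀)) h` are `C^k` at `π z₀`. -/
lemma exists_flow_of_singular_term {Z : Type u} [NormedAddCommGroup Z] [NormedSpace ℝ Z]
    [FiniteDimensional ℝ Z] (k : ℕ) (hk : k ≠ 0) (π : Z →L[ℝ] ℝ) (f h : ℝ → ℝ)
    (Q L : Z × Z → Z) (x₀ : Z × Z) (hfh : ∀ r, HasDerivAt f (h r) r)
    (hf : ContDiffAt ℝ k f (π x₀.1))
    (hffh : ContDiffAt ℝ k (fun r => (f r - f (π x₀.1)) * h r) (π x₀.1))
    (hQ : ContDiff ℝ k Q) (hL : ContDiff ℝ (k + 1) L) :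
    ∃ φ : ℝ × (Z × Z) → Z × Z, ContDiffAt ℝ k φ (0, x₀) ∧ (∀ᶠ w in 𝓝 x₀, φ (0, w) = w) ∧
      ∀ᶠ p in 𝓝 ((0 : ℝ), x₀), HasDerivAt (fun t => φ (t, p.2))
        ((φ p).2, -Q (φ p) - (2 * h (π (φ p).1) * π (φ p).2) • L (φ p)) p.1 := by
  let r₀ := π x₀.1
  let g : ℝ → ℝ := fun r => f r - f r₀
  let X : Z × Z → Z × Z := fun x => (x.2, -Q x - (2 * h (π x.1) * π x.2) • L x)
  let Ψ : Z × Z → Z × Z := fun x => (x.1, x.2 + (2 * g (π x.1)) • L x)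
  let G : Z × Z → Z × Z := fun x =>
    (x.2, -Q x + (2 * g (π x.1)) • fderiv ℝ L x (x.2, -Q x)
      - (4 * (g (π x.1) * h (π x.1)) * π x.2) • fderiv ℝ L x (0, L x))
  have hLk : ContDiff ℝ k L := hL.of_le (by norm_cast; omega)
  have hDL : ContDiff ℝ k (fderiv ℝ L) := hL.fderiv_right le_rfl
  have hπ1 : ContDiff ℝ k fun x : Z × Z => π x.1 := π.contDiff.comp contDiff_fst
  have hπ2 : ContDiff ℝ k fun x : Z × Z => π x.2 := π.contDiff.comp contDiff_snd
  have hg : ContDiffAt ℝ k (fun x : Z × Z => g (π x.1)) x₀ :=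
    (ContDiffAt.comp x₀ (g := f) hf hπ1.contDiffAt).sub contDiffAt_const
  have hgh : ContDiffAt ℝ k (fun x : Z × Z => g (π x.1) * h (π x.1)) x₀ :=
    ContDiffAt.comp x₀ (g := fun r => g r * h r) hffh hπ1.contDiffAt
  have hΨ : ContDiffAt ℝ k Ψ x₀ :=
    contDiffAt_fst.prodMk (contDiffAt_snd.add ((contDiffAt_const.mul hg).smul hLk.contDiffAt))
  have hG : ContDiffAt ℝ k G x₀ := by
    refine contDiffAt_snd.prodMk ((hQ.contDiffAt.neg.add ((contDiffAt_const.mul hg).smul ?_)).sub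
      (((contDiffAt_const.mul hgh).mul hπ2.contDiffAt).smul ?_))
    · exact (hDL.clm_apply (contDiff_snd.prodMk hQ.neg)).contDiffAt
    · exact (hDL.clm_apply (contDiff_const.prodMk hLk)).contDiffAt
  have hd : ∀ x, HasFDerivAt Ψ ((ContinuousLinearMap.fst ℝ Z Z).prod
      (ContinuousLinearMap.snd ℝ Z Z + ((2 * g (π x.1)) • fderiv ℝ L x +
        ((2 * h (π x.1)) • (π ∘L ContinuousLinearMap.fst ℝ Z Z)).smulRight (L x)))) x := by
    intro x
    have e1 : HasFDerivAt (fun x : Z × Z => π x.1) (π ∘L ContinuousLinearMap.fst ℝ Z Z) x :=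
      (π ∘L ContinuousLinearMap.fst ℝ Z Z).hasFDerivAt
    have e2 : HasDerivAt (fun r => 2 * g r) (2 * h (π x.1)) (π x.1) :=
      ((hfh _).sub_const _).const_mul 2
    have e3 := e2.comp_hasFDerivAt x e1
    have e4 : HasFDerivAt L (fderiv ℝ L x) x :=
      (hL.differentiable (by norm_cast) x).hasFDerivAt
    exact hasFDerivAt_fst.prodMk (hasFDerivAt_snd.add (e3.smul e4))
  have hG' : ∀ x, fderiv ℝ Ψ x (X x) = G x := by
    intro x
    rw [(hd x).fderiv]
    have e : fderiv ℝ L x (X x) = fderiv ℝ L x (x.2, -Q x)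
        - (2 * h (π x.1) * π x.2) • fderiv ℝ L x (0, L x) := by
      rw [← map_smul, ← map_sub]
      congr 1
      simp [X]
    refine Prod.ext rfl ?_
    simp only [ContinuousLinearMap.prod_apply, _root_.add_apply,
      _root_.smul_apply, ContinuousLinearMap.smulRight_apply, e,
      ContinuousLinearMap.coe_snd', ContinuousLinearMap.comp_apply, ContinuousLinearMap.coe_fst']
    simp only [X, G, smul_eq_mul]
    module
  let Ψ' : (Z × Z) ≃L[ℝ] (Z × Z) := ContinuousLinearEquiv.skewProd (.refl ℝ Z) (.refl ℝ Z)
    (((2 * h r₀) • π).smulRight (L x₀))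
  have hΨ' : HasFDerivAt Ψ (Ψ' : (Z × Z) →L[ℝ] (Z × Z)) x₀ := by
    convert hd x₀ using 1
    ext x <;> simp [Ψ', g, r₀]
  exact exists_flow_of_conj k hk X Ψ G x₀ hΨ Ψ' hΨ' hG (Eventually.of_forall hG')

/-! ### Powers of the positive part -/

/-- The function `r₊^p`, equal to `0` for `r ≤ 0` (also when `p ≤ 0`). -/
noncomputable def posPow (p r : ℝ) : ℝ := if 0 < r then r ^ p else 0

lemma posPow_eq {p : ℝ} (hp : 0 < p) : posPow p = fun r => (max r 0) ^ p := by
  ext r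
  unfold posPow
  split_ifs with h
  · rw [max_eq_left h.le]
  · rw [max_eq_right (not_lt.1 h), Real.zero_rpow hp.ne']

lemma continuous_posPow {p : ℝ} (hp : 0 < p) : Continuous (posPow p) := by
  rw [posPow_eq hp]
  exact (continuous_id.max continuous_const).rpow_const fun _ => Or.inr hp.le

lemma hasDerivAt_posPow {p : ℝ} (hp : 1 < p) (r : ℝ) :
    HasDerivAt (posPow p) (p * posPow (p - 1) r) r := by
  rcases lt_trichotomy r 0 with h | rfl | h
  · have : posPow p =ᶠ[𝓝 r] fun _ => 0 := by
      filter_upwards [gt_mem_nhds h] with s hs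
      simp [posPow, not_lt.2 hs.le]
    simpa [posPow, not_lt.2 h.le] using (hasDerivAt_const r (0 : ℝ)).congr_of_eventuallyEq this
  · have hr : HasDerivAt (fun x : ℝ => |x| ^ p) 0 0 := by
      simpa using hasDerivAt_abs_rpow 0 hp
    rw [hasDerivAt_iff_isLittleO] at hr ⊢
    simp only [posPow, lt_irrefl, if_false, mul_zero, smul_zero, sub_zero, abs_zero,
      Real.zero_rpow (by linarith : p ≠ 0)] at hr ⊢
    refine Asymptotics.IsBigO.trans_isLittleO (Asymptotics.IsBigO.of_bound 1 ?_) hr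
    refine Eventually.of_forall fun x => ?_
    split_ifs with hx
    · simp [abs_of_pos hx]
    · simp
  · have : posPow p =ᶠ[𝓝 r] fun x => x ^ p := by
      filter_upwards [lt_mem_nhds h] with s hs
      simp [posPow, hs]
    simpa [posPow, h] using
      (Real.hasDerivAt_rpow_const (p := p) (Or.inl h.ne')).congr_of_eventuallyEq this

/-- `r₊^p` is of class `C^m` for every integer `m < p`. -/
lemma contDiff_posPow (m : ℕ) : ∀ p : ℝ, m < p → ContDiff ℝ m (posPow p) := by
  induction m with
  | zero => exact fun p hp => contDiff_zero.2 (continuous_posPow (by simpa using hp))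
  | succ m ih =>
    intro p hp
    push_cast at hp ⊢
    have h1 : 1 < p := by have : (0 : ℝ) ≤ m := m.cast_nonneg; linarith
    have hd := hasDerivAt_posPow h1
    rw [contDiff_succ_iff_deriv]
    refine ⟨fun r => (hd r).differentiableAt, by simp, ?_⟩
    rw [funext fun r => (hd r).deriv]
    exact contDiff_const.mul (ih _ (by linarith))

lemma contDiffAt_posPow_of_pos {p r : ℝ} (hr : 0 < r) (m : WithTop ℕ∞) :
    ContDiffAt ℝ m (posPow p) r := by
  refine (Real.contDiffAt_rpow_const_of_ne (p := p) hr.ne').congr_of_eventuallyEq ?_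
  filter_upwards [lt_mem_nhds hr] with s hs
  simp [posPow, hs]

lemma posPow_mul_posPow (p q r : ℝ) : posPow p r * posPow q r = posPow (p + q) r := by
  unfold posPow
  split_ifs with h
  · rw [Real.rpow_add h]
  · simp

/-- The product `(c r₊^p - c (r₀)₊^p) r₊^q` gains regularity at `r₀`: the first term has exponent
`p + q`, and the second one vanishes or is smooth at `r₀`. -/
lemma contDiffAt_posPow_sub_mul {m : ℕ} {p q : ℝ} (h : m < p + q) (c r₀ : ℝ) :
    ContDiffAt ℝ m
      (fun r => (c * posPow p r - c * posPow p r₀) * posPow q r) r₀ := by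
  have h1 : ContDiffAt ℝ m (fun r => c * posPow (p + q) r) r₀ :=
    contDiffAt_const.mul (contDiff_posPow m _ h).contDiffAt
  have h2 : ContDiffAt ℝ m (fun r => c * posPow p r₀ * posPow q r) r₀ := by
    by_cases hr : 0 < r₀
    · exact contDiffAt_const.mul (contDiffAt_posPow_of_pos hr _)
    · have : posPow p r₀ = 0 := by simp [posPow, hr]
      simpa [this] using contDiffAt_const
  refine (h1.sub h2).congr_of_eventuallyEq (Eventually.of_forall fun r => ?_)
  simp only [← posPow_mul_posPow]
  ring

/-! ### The geodesic flow -/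

/-- The coefficients `B` extended by zero to all indices in `Fin (n + 1)`. -/
def extendB {n : ℕ} (B : (Fin (n + 1) → ℝ) → Fin n → Fin n → ℝ) (z : Fin (n + 1) → ℝ)
    (a j : Fin (n + 1)) : ℝ :=
  Fin.cases (motive := fun _ => ℝ) 0
    (fun c => Fin.cases (motive := fun _ => ℝ) 0 (fun β => B z c β) j) a

lemma contDiff_extendB {n : ℕ} {m : WithTop ℕ∞} {B : (Fin (n + 1) → ℝ) → Fin n → Fin n → ℝ}
    (hB : ∀ c β : Fin n, ContDiff ℝ m fun z => B z c β) (a j : Fin (n + 1)) :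
    ContDiff ℝ m fun z => extendB B z a j := by
  cases a using Fin.cases with
  | zero => exact contDiff_const
  | succ c =>
    cases j using Fin.cases with
    | zero => exact contDiff_const
    | succ β => exact hB c β

/-- Only the index pairs `(0, β)` and `(β, 0)` carry the singular term; by symmetry they contribute
equally, whence the factor `2`. -/
lemma sum_christoffel {n : ℕ} {h : ℝ}
    {A Γ : Fin (n + 1) → Fin (n + 1) → Fin (n + 1) → ℝ} {M : Fin (n + 1) → Fin (n + 1) → ℝ}
    (hΓ : ∀ a i j, Γ a i j =
      A a i j + h * ((if i = 0 then M a j else 0) + (if j = 0 then M a i else 0)))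
    (v : Fin (n + 1) → ℝ) (a : Fin (n + 1)) :
    ∑ i, ∑ j, Γ a i j * v i * v j =
      (∑ i, ∑ j, A a i j * v i * v j) + 2 * h * v 0 * ∑ j, M a j * v j := by
  have h1 : ∑ i, ∑ j, (if i = 0 then M a j else 0) * v i * v j = v 0 * ∑ j, M a j * v j := by
    rw [Finset.sum_eq_single 0 (fun b _ hb => by simp [hb]) (by simp), Finset.mul_sum]
    exact Finset.sum_congr rfl fun j _ => by simp; ring
  have h2 : ∑ i, ∑ j, (if j = 0 then M a i else 0) * v i * v j = v 0 * ∑ j, M a j * v j := by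
    rw [Finset.mul_sum]
    refine Finset.sum_congr rfl fun i _ => ?_
    rw [Finset.sum_eq_single 0 (fun b _ hb => by simp [hb]) (by simp)]
    simp; ring
  calc ∑ i, ∑ j, Γ a i j * v i * v j
      = (∑ i, ∑ j, A a i j * v i * v j)
        + h * (∑ i, ∑ j, (if i = 0 then M a j else 0) * v i * v j)
        + h * (∑ i, ∑ j, (if j = 0 then M a i else 0) * v i * v j) := by
        simp only [Finset.mul_sum, ← Finset.sum_add_distrib]
        refine Finset.sum_congr rfl fun i _ => Finset.sum_congr rfl fun j _ => ?_
        rw [hΓ]; ring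
    _ = _ := by rw [h1, h2]; ring


/-- (Lemma 4.1 of the paper, coordinate version.) For a connection
whose coefficients are `C^{(N−1)/2}` except for the `Γ̂^γ_{0β}` entries, which have an
extra term `(z⁰)_+^{N/2−1} B^γ_β(z)` with `B` smooth (`N ≥ 5` odd), the geodesic flow
exists locally and is of class `C^{(N−1)/2}` jointly in time and initial conditions. -/
theorem stmt_10 (n : ℕ) (hn : 1 ≤ n) (N : ℕ) (hN : Odd N) (hN5 : 5 ≤ N)
    (A : (Fin (n + 1) → ℝ) → Fin (n + 1) → Fin (n + 1) → Fin (n + 1) → ℝ)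
    (B : (Fin (n + 1) → ℝ) → Fin n → Fin n → ℝ)
    (hA : ∀ a i j : Fin (n + 1), ContDiff ℝ (((N - 1) / 2 : ℕ) : ℕ∞) fun z => A z a i j)
    (hAsym : ∀ z, ∀ a i j : Fin (n + 1), A z a i j = A z a j i)
    (hB : ∀ c β : Fin n, ContDiff ℝ (⊤ : ℕ∞) fun z => B z c β)
    (Γ : (Fin (n + 1) → ℝ) → Fin (n + 1) → Fin (n + 1) → Fin (n + 1) → ℝ)
    (hΓsym : ∀ z, ∀ a i j : Fin (n + 1), Γ z a i j = Γ z a j i)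
    (hΓA : ∀ z, ∀ a i j : Fin (n + 1),
      (a = 0 ∨ (i ≠ 0 ∧ j ≠ 0) ∨ (i = 0 ∧ j = 0)) → Γ z a i j = A z a i j)
    (hΓB : ∀ z, ∀ c β : Fin n, Γ z c.succ 0 β.succ =
      A z c.succ 0 β.succ +
        (if 0 < z 0 then (z 0) ^ ((N : ℝ) / 2 - 1) else 0) * B z c β) :
    ∀ z₀ v₀ : Fin (n + 1) → ℝ, ∃ ε > (0 : ℝ),
      ∃ W : Set ((Fin (n + 1) → ℝ) × (Fin (n + 1) → ℝ)),
        IsOpen W ∧ (z₀, v₀) ∈ W ∧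
        ∃ φ : ℝ × ((Fin (n + 1) → ℝ) × (Fin (n + 1) → ℝ)) →
            (Fin (n + 1) → ℝ) × (Fin (n + 1) → ℝ),
          ContDiffOn ℝ (((N - 1) / 2 : ℕ) : ℕ∞) φ (Set.Ioo (-ε) ε ×ˢ W) ∧
          (∀ w ∈ W, φ (0, w) = w) ∧
          ∀ w ∈ W, ∀ t ∈ Set.Ioo (-ε) ε, ∀ a : Fin (n + 1),
            HasDerivAt (fun t' => (φ (t', w)).1 a) ((φ (t, w)).2 a) t ∧
            HasDerivAt (fun t' => (φ (t', w)).2 a)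
              (-∑ i : Fin (n + 1), ∑ j : Fin (n + 1),
                Γ ((φ (t, w)).1) a i j * (φ (t, w)).2 i * (φ (t, w)).2 j) t := by
  intro z₀ v₀
  set k := (N - 1) / 2 with hk
  have hk2 : 2 * k + 1 = N := by obtain ⟨m, rfl⟩ := hN; omega
  have hk0 : k ≠ 0 := by omega
  have hNk : (N : ℝ) = 2 * k + 1 := by rw [← hk2]; push_cast; ring
  have hk2' : (2 : ℝ) ≤ k := by
    have : 2 ≤ k := by omega
    exact_mod_cast this
  let h : ℝ → ℝ := posPow ((N : ℝ) / 2 - 1)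
  let f : ℝ → ℝ := fun r => 2 / N * posPow ((N : ℝ) / 2) r
  let M := extendB B
  let Q : (Fin (n + 1) → ℝ) × (Fin (n + 1) → ℝ) → Fin (n + 1) → ℝ :=
    fun x a => ∑ i, ∑ j, A x.1 a i j * x.2 i * x.2 j
  let L : (Fin (n + 1) → ℝ) × (Fin (n + 1) → ℝ) → Fin (n + 1) → ℝ :=
    fun x a => ∑ j, M x.1 a j * x.2 j
  let π : (Fin (n + 1) → ℝ) →L[ℝ] ℝ := ContinuousLinearMap.proj 0
  have hfh : ∀ r, HasDerivAt f (h r) r := by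
    intro r
    have := (hasDerivAt_posPow (p := (N : ℝ) / 2) (by rw [hNk]; linarith) r).const_mul (2 / (N : ℝ))
    refine this.congr_deriv ?_
    have : (N : ℝ) ≠ 0 := by rw [hNk]; positivity
    simp only [h]
    field_simp
  have hf : ContDiff ℝ k f :=
    contDiff_const.mul (contDiff_posPow k _ (by rw [hNk]; linarith))
  have hffh : ContDiffAt ℝ k (fun r => (f r - f (π z₀)) * h r) (π z₀) :=
    contDiffAt_posPow_sub_mul (by rw [hNk]; linarith) _ _
  have hcoord : ∀ (m : WithTop ℕ∞) (i : Fin (n + 1)),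
      ContDiff ℝ m fun x : (Fin (n + 1) → ℝ) × (Fin (n + 1) → ℝ) => x.2 i :=
    fun m i => (contDiff_apply ℝ ℝ i).comp contDiff_snd
  have hQ : ContDiff ℝ k Q := by
    refine contDiff_pi.2 fun a => ContDiff.sum fun i _ => ContDiff.sum fun j _ => ?_
    exact (((hA a i j).comp contDiff_fst).mul (hcoord _ i)).mul (hcoord _ j)
  have hL : ContDiff ℝ (k + 1) L := by
    refine contDiff_pi.2 fun a => ContDiff.sum fun j _ => ?_
    have hM := contDiff_extendB (fun c β => (hB c β).of_le
      (show ((k + 1 : ℕ) : WithTop ℕ∞) ≤ _ by exact_mod_cast le_top)) a j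
    push_cast at hM
    exact (hM.comp contDiff_fst).mul (hcoord _ j)
  have hΓ : ∀ z a i j, Γ z a i j = A z a i j +
      h (z 0) * ((if i = 0 then M z a j else 0) + (if j = 0 then M z a i else 0)) := by
    intro z a i j
    cases a using Fin.cases with
    | zero => simp [hΓA z 0 i j (Or.inl rfl), M, extendB]
    | succ c =>
      cases i using Fin.cases with
      | zero =>
        cases j using Fin.cases with
        | zero => simp [hΓA z c.succ 0 0 (by simp), M, extendB]
        | succ β => simp [hΓB, M, extendB, h, posPow]
      | succ α =>
        cases j using Fin.cases with
        | zero => simp [hΓsym z c.succ α.succ 0, hAsym z c.succ α.succ 0, hΓB, M, extendB, h, posPow]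
        | succ β => simp [hΓA z c.succ α.succ β.succ (by simp)]
  obtain ⟨φ, h1, h2, h3⟩ :=
    exists_flow_of_singular_term k hk0 π f h Q L (z₀, v₀) hfh hf.contDiffAt hffh hQ hL
  obtain ⟨u, hu, hφu⟩ := h1.contDiffOn le_rfl (by simp)
  obtain ⟨W₀, hW₀, hW₀o, hmem₀⟩ := eventually_nhds_iff.1 h2
  have hall := (show ∀ᶠ p in 𝓝 ((0 : ℝ), (z₀, v₀)), p ∈ u from hu).and h3
  rw [nhds_prod_eq] at hall
  obtain ⟨pa, hpa, pb, hpb, hab⟩ := eventually_prod_iff.1 hall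
  obtain ⟨ε, hε, hε'⟩ := Metric.eventually_nhds_iff_ball.1 hpa
  obtain ⟨W₁, hW₁, hW₁o, hmem₁⟩ := eventually_nhds_iff.1 hpb
  have hI : ∀ t ∈ Ioo (-ε) ε, pa t := fun t ht => hε' t (by
    rw [mem_ball_zero_iff, Real.norm_eq_abs, abs_lt]; exact ht)
  refine ⟨ε, hε, W₀ ∩ W₁, hW₀o.inter hW₁o, ⟨hmem₀, hmem₁⟩, φ, ?_, fun w hw => hW₀ w hw.1, ?_⟩
  · refine hφu.mono ?_
    rintro ⟨t, w⟩ ⟨ht, hw⟩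
    exact (hab (hI t ht) (hW₁ w hw.2)).1
  · intro w hw t ht a
    have hd := (hab (hI t ht) (hW₁ w hw.2)).2
    have hd1 := (hasFDerivAt_fst (𝕜 := ℝ)).comp_hasDerivAt t hd
    have hd2 := (hasFDerivAt_snd (𝕜 := ℝ)).comp_hasDerivAt t hd
    refine ⟨hasDerivAt_pi.1 hd1 a, ?_⟩
    refine (hasDerivAt_pi.1 hd2 a).congr_deriv ?_
    rw [sum_christoffel (hΓ (φ (t, w)).1) (φ (t, w)).2 a]
    simp only [ContinuousLinearMap.coe_snd', Pi.sub_apply, Pi.neg_apply, Pi.smul_apply, smul_eq_mul,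
      Q, L, π, ContinuousLinearMap.proj_apply]
    ring
end
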